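/- arXiv:1907.03024 — 4 statements merged into one kernel-verified Lean document; each statement's English description precedes it below -/
import Mathlib

section
/- Fix an integer n ≥ 2. Let f, h ∈ Homeo₊(ℝ), and suppose f has compact support. If there exists a group isomorphism φ from the subgroup of Homeo₊(ℝ) generated by BS(1,n) ∪ {f} to the subgroup generated by BS(1,n) ∪ {h} such that φ(γ) = γ for every γ ∈ BS(1,n) and φ(f) = h, then h = f. -/
open Set Topology

/-- The group of self-homeomorphisms of `X`, with `(f * g) x = f (g x)`. -/
instance {X : Type*} [TopologicalSpace X] : Group (X ≃ₜ X) where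
  mul f g := g.trans f
  one := Homeomorph.refl X
  inv := Homeomorph.symm
  mul_assoc _ _ _ := Homeomorph.ext fun _ => rfl
  one_mul _ := Homeomorph.ext fun _ => rfl
  mul_one _ := Homeomorph.ext fun _ => rfl
  inv_mul_cancel f := Homeomorph.ext fun x => f.symm_apply_apply x

/-- The support of a homeomorphism: the closure of the set of non-fixed points. -/
def Supp (f : ℝ ≃ₜ ℝ) : Set ℝ := closure {x | f x ≠ x}

/-- The homeomorphism `x ↦ n·x` of `ℝ`. -/
noncomputable def dilation (n : ℕ) (hn : 2 ≤ n) : ℝ ≃ₜ ℝ :=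
  Homeomorph.mulLeft₀ (n : ℝ) (by positivity)

/-- The homeomorphism `x ↦ x + t` of `ℝ`. -/
noncomputable def translation (t : ℝ) : ℝ ≃ₜ ℝ := Homeomorph.addRight t

/-- The standard affine Baumslag–Solitar group `BS(1,n)`, generated by `x ↦ n·x`
and `x ↦ x + 1`, as a subgroup of the homeomorphism group of `ℝ`. -/
noncomputable def BSgroup (n : ℕ) (hn : 2 ≤ n) : Subgroup (ℝ ≃ₜ ℝ) :=
  Subgroup.closure {dilation n hn, translation 1}


namespace BSrec

theorem mul_app (f g : ℝ ≃ₜ ℝ) (x : ℝ) : (f * g) x = f (g x) := rfl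

theorem one_app (x : ℝ) : (1 : ℝ ≃ₜ ℝ) x = x := rfl

theorem inv_app_self (f : ℝ ≃ₜ ℝ) (x : ℝ) : f⁻¹ (f x) = x := f.symm_apply_apply x

theorem app_inv_self (f : ℝ ≃ₜ ℝ) (x : ℝ) : f (f⁻¹ x) = x := f.apply_symm_apply x

theorem comm_app {f g : ℝ ≃ₜ ℝ} (hc : Commute f g) (x : ℝ) : f (g x) = g (f x) := by
  have := congrArg (fun q : ℝ ≃ₜ ℝ => q x) hc.eq
  exact this

theorem comm_of {f g : ℝ ≃ₜ ℝ} (hc : ∀ x, f (g x) = g (f x)) : Commute f g :=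
  Homeomorph.ext hc

theorem comm_disjoint {f g : ℝ ≃ₜ ℝ} (hd : ∀ x, f x = x ∨ g x = x) : Commute f g := by
  apply comm_of
  intro x
  by_cases h1 : f x = x
  · by_cases h2 : g x = x
    · rw [h2, h1, h2]
    · have h3 : g (g x) ≠ g x := fun e => h2 (g.injective e)
      rcases hd (g x) with h | h
      · rw [h, h1]
      · exact absurd h h3
  · have h3 : f (f x) ≠ f x := fun e => h1 (f.injective e)
    have h2 : g x = x := (hd x).resolve_left h1
    rcases hd (f x) with h | h
    · exact absurd h h3
    · rw [h, h2]

theorem mono_inv {g : ℝ ≃ₜ ℝ} (hg : StrictMono g) : StrictMono (g⁻¹ : ℝ ≃ₜ ℝ) := by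
  intro x y hxy
  rw [← hg.lt_iff_lt, app_inv_self, app_inv_self]
  exact hxy

theorem mono_mul {f g : ℝ ≃ₜ ℝ} (hf : StrictMono f) (hg : StrictMono g) :
    StrictMono (f * g : ℝ ≃ₜ ℝ) := fun _ _ hxy => hf (hg hxy)

theorem mono_zpow {g : ℝ ≃ₜ ℝ} (hg : StrictMono g) (i : ℤ) : StrictMono (g ^ i : ℝ ≃ₜ ℝ) := by
  induction i using Int.induction_on with
  | zero => rw [zpow_zero]; exact fun _ _ h => h
  | succ i ih => rw [zpow_add_one]; exact mono_mul ih hg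
  | pred i ih => rw [zpow_sub_one]; exact mono_mul ih (mono_inv hg)

theorem dil_zpow (n : ℕ) (hn : 2 ≤ n) (k : ℤ) (x : ℝ) :
    ((dilation n hn) ^ k : ℝ ≃ₜ ℝ) x = (n : ℝ) ^ k * x := by
  have hn0 : (n : ℝ) ≠ 0 := by positivity
  have h1 : ∀ x, dilation n hn x = n * x := fun _ => rfl
  have h2 : ∀ x, (dilation n hn)⁻¹ x = (n : ℝ)⁻¹ * x := fun _ => rfl
  induction k using Int.induction_on generalizing x with
  | zero => simp [one_app]
  | succ i ih => rw [zpow_add_one, mul_app, ih, h1, zpow_add_one₀ hn0]; ring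
  | pred i ih => rw [zpow_sub_one, mul_app, ih, h2, zpow_sub_one₀ hn0]; ring

/-- The affine map `x ↦ n^k x + r`. -/
noncomputable def aff (n : ℕ) (hn : 2 ≤ n) (k : ℤ) (r : ℝ) : ℝ ≃ₜ ℝ :=
  translation r * (dilation n hn) ^ k

/-- The conjugate of `h` by an affine map. -/
noncomputable def cj (n : ℕ) (hn : 2 ≤ n) (k : ℤ) (r : ℝ) (h : ℝ ≃ₜ ℝ) : ℝ ≃ₜ ℝ :=
  aff n hn k r * h * (aff n hn k r)⁻¹

variable {n : ℕ} {hn : 2 ≤ n}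

theorem npos (hn : 2 ≤ n) (k : ℤ) : 0 < (n : ℝ) ^ k := by
  have : 0 < (n : ℝ) := by positivity
  positivity

theorem aff_app (k : ℤ) (r x : ℝ) : aff n hn k r x = (n : ℝ) ^ k * x + r := by
  rw [aff, mul_app, dil_zpow]; rfl

theorem aff_inv_app (k : ℤ) (r x : ℝ) : (aff n hn k r)⁻¹ x = (x - r) / (n : ℝ) ^ k := by
  apply (aff n hn k r).injective
  rw [app_inv_self, aff_app]
  have := (npos hn k).ne'
  field_simp
  ring

theorem cj_app (k : ℤ) (r : ℝ) (h : ℝ ≃ₜ ℝ) (x : ℝ) :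
    cj n hn k r h x = (n : ℝ) ^ k * h ((x - r) / (n : ℝ) ^ k) + r := by
  rw [cj, mul_app, mul_app, aff_app, aff_inv_app]

theorem cj_zero_app (r : ℝ) (h : ℝ ≃ₜ ℝ) (x : ℝ) :
    cj n hn 0 r h x = h (x - r) + r := by
  rw [cj_app]; simp

theorem cj_mono (k : ℤ) (r : ℝ) {h : ℝ ≃ₜ ℝ} (hh : StrictMono h) :
    StrictMono (cj n hn k r h) := by
  intro x y hxy
  rw [cj_app, cj_app]
  have := npos hn k
  have : h ((x - r) / (n : ℝ) ^ k) < h ((y - r) / (n : ℝ) ^ k) := hh (by gcongr)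
  gcongr

theorem cj_fix (k : ℤ) (r : ℝ) (h : ℝ ≃ₜ ℝ) (x : ℝ) :
    cj n hn k r h x = x ↔ h ((x - r) / (n : ℝ) ^ k) = (x - r) / (n : ℝ) ^ k := by
  rw [cj_app, eq_div_iff (npos hn k).ne']
  constructor <;> intro h <;> linarith

theorem cj_supp {h : ℝ ≃ₜ ℝ} {M : ℝ} (hM : ∀ x, M ≤ |x| → h x = x) (k : ℤ) (r x : ℝ)
    (hx : M * (n : ℝ) ^ k ≤ |x - r|) : cj n hn k r h x = x := by
  rw [cj_fix]
  apply hM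
  rw [abs_div, abs_of_pos (npos hn k), le_div_iff₀ (npos hn k)]
  exact hx

theorem cj_inv (k : ℤ) (r : ℝ) (h : ℝ ≃ₜ ℝ) : cj n hn k r h⁻¹ = (cj n hn k r h)⁻¹ := by
  simp only [cj]; group

theorem cj_one (k : ℤ) (r : ℝ) : cj n hn k r 1 = 1 := by
  simp [cj]

theorem cj_shift (k : ℤ) (s t : ℝ) (h : ℝ ≃ₜ ℝ) :
    aff n hn 0 t * cj n hn k (s - t) h * (aff n hn 0 t)⁻¹ = cj n hn k s h := by
  apply Homeomorph.ext
  intro x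
  rw [mul_app, mul_app, aff_app, aff_inv_app, cj_app, cj_app]
  simp only [zpow_zero, div_one, one_mul]
  rw [show x - t - (s - t) = x - s by ring]
  ring

theorem cj_commute (k : ℤ) (r : ℝ) {p q : ℝ ≃ₜ ℝ} (hc : Commute p q) :
    Commute (cj n hn k r p) (cj n hn k r q) := by
  have := hc.eq
  simp only [cj, Commute, SemiconjBy]
  calc _ = aff n hn k r * (p * q) * (aff n hn k r)⁻¹ := by group
    _ = _ := by rw [this]; group

theorem small (hn : 2 ≤ n) (ε : ℝ) (hε : 0 < ε) : ∃ k : ℤ, k ≤ 0 ∧ (n : ℝ) ^ k < ε := by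
  have h2 : (2 : ℝ) ≤ n := by exact_mod_cast hn
  obtain ⟨j, hj⟩ := exists_pow_lt_of_lt_one hε (y := (n : ℝ)⁻¹) (inv_lt_one_of_one_lt₀ (by linarith))
  refine ⟨-(j : ℤ), by simp, ?_⟩
  rw [zpow_neg, zpow_natCast, ← inv_pow]
  exact hj

/-- Translations lengths for which all affine maps lie in `BS(1,n)`. -/
def Zn (n : ℕ) (hn : 2 ≤ n) : Set ℝ := {r | ∀ k : ℤ, aff n hn k r ∈ BSgroup n hn}

theorem trans_int (m : ℤ) (x : ℝ) : ((translation 1) ^ m : ℝ ≃ₜ ℝ) x = x + m := by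
  have h1 : ∀ x, translation 1 x = x + 1 := fun _ => rfl
  have h2 : ∀ x, (translation 1)⁻¹ x = x + -1 := fun _ => rfl
  induction m using Int.induction_on generalizing x with
  | zero => simp [one_app]
  | succ i ih => rw [zpow_add_one, mul_app, ih, h1]; push_cast; ring
  | pred i ih => rw [zpow_sub_one, mul_app, ih, h2]; push_cast; ring

theorem Zn_mem (j m : ℤ) : (n : ℝ) ^ j * m ∈ Zn n hn := by
  intro k
  have hd : dilation n hn ∈ BSgroup n hn := Subgroup.subset_closure (by simp)
  have ht : translation 1 ∈ BSgroup n hn := Subgroup.subset_closure (by simp)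
  have : aff n hn k ((n : ℝ) ^ j * m)
      = (dilation n hn) ^ j * (translation 1) ^ m * (dilation n hn) ^ (-j) * (dilation n hn) ^ k := by
    apply Homeomorph.ext
    intro x
    rw [aff_app, mul_app, mul_app, mul_app, dil_zpow, dil_zpow, dil_zpow, trans_int]
    have := (npos hn j).ne'
    rw [zpow_neg]
    field_simp
  rw [this]
  exact mul_mem (mul_mem (mul_mem (zpow_mem hd _) (zpow_mem ht _)) (zpow_mem hd _)) (zpow_mem hd _)

theorem Zn_dense (n : ℕ) (hn : 2 ≤ n) : Dense (Zn n hn) := by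
  rw [Metric.dense_iff]
  intro x ε hε
  obtain ⟨k, -, hk⟩ := small hn ε hε
  have hp := npos hn k
  refine ⟨(n : ℝ) ^ k * ⌊x / (n : ℝ) ^ k⌋, ?_, Zn_mem _ _⟩
  have h1 := Int.floor_le (x / (n : ℝ) ^ k)
  have h2 := Int.lt_floor_add_one (x / (n : ℝ) ^ k)
  rw [le_div_iff₀ hp] at h1
  rw [div_lt_iff₀ hp] at h2
  rw [Metric.mem_ball, Real.dist_eq, abs_lt]
  constructor <;> nlinarith

theorem Zn_open {U : Set ℝ} (hU : IsOpen U) (hne : U.Nonempty) : ∃ r ∈ U, r ∈ Zn n hn :=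
  (Zn_dense n hn).exists_mem_open hU hne |>.imp fun _ h => ⟨h.2, h.1⟩

theorem comm_real {h p : ℝ ≃ₜ ℝ} {k : ℤ} {U : Set ℝ} (hU : IsOpen U)
    (hc : ∀ r ∈ U, r ∈ Zn n hn → Commute p (cj n hn k r h)) (r : ℝ) (hr : r ∈ U) :
    Commute p (cj n hn k r h) := by
  apply comm_of
  intro x
  by_contra hne
  have ho : IsOpen (U ∩ {r | p (cj n hn k r h x) ≠ cj n hn k r h (p x)}) := by
    apply hU.inter
    simp only [cj_app]
    have hp := p.continuous
    have hh := h.continuous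
    exact isOpen_ne_fun (by fun_prop) (by fun_prop)
  obtain ⟨s, ⟨hs, hs2⟩, hs3⟩ := Zn_open (hn := hn) ho ⟨r, hr, hne⟩
  exact hs2 (comm_app (hc s hs hs3) x)

theorem not_comm {h G : ℝ ≃ₜ ℝ} (hh : StrictMono h) {M : ℝ} (hM : ∀ x, M ≤ |x| → h x = x)
    (h1 : h ≠ 1) (G1 : G ≠ 1) (hb : BddAbove {x | G x ≠ x}) (k : ℤ) :
    ∃ r ∈ Zn n hn, |sSup {x | G x ≠ x} - r| < M * (n : ℝ) ^ k ∧ ¬ Commute G (cj n hn k r h) := by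
  set S := {x | G x ≠ x} with hS
  have hSne : S.Nonempty := by
    by_contra hne
    apply G1
    apply Homeomorph.ext
    intro x
    by_contra hx
    exact hne ⟨x, hx⟩
  obtain ⟨y, hy⟩ : ∃ y, h y ≠ y := by
    by_contra! hne
    exact h1 (Homeomorph.ext hne)
  set p := sSup S with hp
  have ho : IsOpen {r | h ((p - r) / (n : ℝ) ^ k) ≠ (p - r) / (n : ℝ) ^ k} := by
    have hh := h.continuous
    exact isOpen_ne_fun (by fun_prop) (by fun_prop)
  have hk := npos hn k
  obtain ⟨r, hr, hrZ⟩ := Zn_open (n := n) (hn := hn) ho ⟨p - (n : ℝ) ^ k * y, by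
    have : (p - (p - (n : ℝ) ^ k * y)) / (n : ℝ) ^ k = y := by field_simp; ring
    simp only [Set.mem_setOf_eq, this]; exact hy⟩
  have hr' : cj n hn k r h p ≠ p := fun e => hr ((cj_fix k r h p).1 e)
  refine ⟨r, hrZ, ?_, ?_⟩
  · by_contra! hle
    exact hr' (cj_supp hM k r p hle)
  · intro hc
    apply hr'
    have key : ∀ q : ℝ ≃ₜ ℝ, StrictMono q → Commute G q → p ≤ q p := by
      intro q hq hqc
      apply csSup_le hSne
      intro x hx
      have h2 : q⁻¹ x ∈ S := by
        intro e
        have := comm_app hqc (q⁻¹ x)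
        rw [e, app_inv_self] at this
        exact hx this
      have h3 := hq.monotone (le_csSup hb h2)
      rwa [app_inv_self] at h3
    have hm := cj_mono (hn := hn) k r hh
    have a1 := key _ hm hc
    have a2 := key _ (mono_inv hm) hc.inv_right
    have a3 := hm.monotone a2
    rw [app_inv_self] at a3
    exact le_antisymm a3 a1

/-! Fixed-point free case -/

theorem orbit_unbdd {g : ℝ ≃ₜ ℝ} (hg : ∀ x, x < g x) (x z : ℝ) : ∃ i : ℕ, z < (g ^ i : ℝ ≃ₜ ℝ) x := by
  by_contra! hb
  have happ : ∀ i : ℕ, (g ^ (i + 1) : ℝ ≃ₜ ℝ) x = g ((g ^ i : ℝ ≃ₜ ℝ) x) := by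
    intro i; rw [pow_succ', mul_app]
  have hm : Monotone (fun i : ℕ => (g ^ i : ℝ ≃ₜ ℝ) x) := by
    apply monotone_nat_of_le_succ
    intro i
    rw [happ]
    exact (hg _).le
  have hbd : BddAbove (Set.range (fun i : ℕ => (g ^ i : ℝ ≃ₜ ℝ) x)) :=
    ⟨z, by rintro _ ⟨i, rfl⟩; exact hb i⟩
  have ht := tendsto_atTop_ciSup hm hbd
  set L := ⨆ i : ℕ, (g ^ i : ℝ ≃ₜ ℝ) x
  have h1 := (g.continuous.tendsto L).comp ht
  have h2 := (Filter.tendsto_add_atTop_iff_nat 1).2 ht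
  have h3 : g L = L := by
    apply tendsto_nhds_unique h1
    refine h2.congr ?_
    intro i
    exact happ i
  exact (hg L).ne' h3

theorem floor_ex {g : ℝ ≃ₜ ℝ} (hm : StrictMono g) (hg : ∀ x, x < g x) (r z : ℝ) :
    ∃ i : ℤ, (g ^ i : ℝ ≃ₜ ℝ) r ≤ z ∧ z < (g ^ (i + 1) : ℝ ≃ₜ ℝ) r := by
  have hs : StrictMono (fun i : ℤ => (g ^ i : ℝ ≃ₜ ℝ) r) := by
    apply strictMono_int_of_lt_succ
    intro i
    rw [add_comm, zpow_add, zpow_one, mul_app]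
    exact hg _
  obtain ⟨i, hi⟩ := orbit_unbdd hg r z
  obtain ⟨j, hj⟩ := orbit_unbdd hg z r
  obtain ⟨m, hm1, hm2⟩ := Int.exists_greatest_of_bdd (P := fun i : ℤ => (g ^ i : ℝ ≃ₜ ℝ) r ≤ z)
    ⟨i, by
      intro l hl
      by_contra! hlt
      have := hs hlt
      simp only [zpow_natCast] at this
      linarith⟩
    ⟨-(j : ℤ), by
      rw [← (mono_zpow hm (j : ℤ)).le_iff_le, ← mul_app, ← zpow_add]
      simp only [add_neg_cancel, zpow_zero, one_app, zpow_natCast]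
      exact hj.le⟩
  refine ⟨m, hm1, ?_⟩
  by_contra! hle
  have := hm2 _ hle
  omega

theorem comm_bound {a b g : ℝ ≃ₜ ℝ} (ha : StrictMono a) (hb : StrictMono b) (hm : StrictMono g)
    (hg : ∀ x, x < g x) (hag : Commute a g) (hbg : Commute b g) (r : ℝ) :
    a (b r) < g (g (b (a r))) := by
  obtain ⟨i, hi1, hi2⟩ := floor_ex hm hg r (a r)
  obtain ⟨j, hj1, hj2⟩ := floor_ex hm hg r (b r)
  have h1 : a (b r) < (g ^ (j + 1 + (i + 1)) : ℝ ≃ₜ ℝ) r := by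
    calc a (b r) < a ((g ^ (j + 1) : ℝ ≃ₜ ℝ) r) := ha hj2
      _ = (g ^ (j + 1) : ℝ ≃ₜ ℝ) (a r) := comm_app (hag.zpow_right _) r
      _ < (g ^ (j + 1) : ℝ ≃ₜ ℝ) ((g ^ (i + 1) : ℝ ≃ₜ ℝ) r) := mono_zpow hm _ hi2
      _ = _ := by rw [zpow_add _ (j + 1) (i + 1)]; rfl
  have h2 : (g ^ (i + j) : ℝ ≃ₜ ℝ) r ≤ b (a r) := by
    calc (g ^ (i + j) : ℝ ≃ₜ ℝ) r = (g ^ i : ℝ ≃ₜ ℝ) ((g ^ j : ℝ ≃ₜ ℝ) r) := by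
          rw [zpow_add]; rfl
      _ ≤ (g ^ i : ℝ ≃ₜ ℝ) (b r) := (mono_zpow hm _).monotone hj1
      _ = b ((g ^ i : ℝ ≃ₜ ℝ) r) := (comm_app (hbg.zpow_right _) r).symm
      _ ≤ b (a r) := hb.monotone hi1
  have h3 := hm.monotone (hm.monotone h2)
  have h4 : g (g ((g ^ (i + j) : ℝ ≃ₜ ℝ) r)) = (g ^ (j + 1 + (i + 1)) : ℝ ≃ₜ ℝ) r := by
    rw [show j + 1 + (i + 1) = 1 + (1 + (i + j)) by ring, zpow_add _ 1, zpow_add _ 1]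
    rfl
  rw [h4] at h3
  exact h1.trans_le h3

theorem free_case {h : ℝ ≃ₜ ℝ} (hh : StrictMono h) (hfree : ∀ x, x < h x) (R : ℝ)
    (hc : ∀ k : ℤ, k ≤ 0 → ∀ r, R < r → Commute h (cj n hn k r h)) (t : ℝ) :
    Commute h (cj n hn 0 t h) := by
  have hcfree : ∀ k r x, x < cj n hn k r h x := by
    intro k r x
    have h1 := hfree ((x - r) / (n : ℝ) ^ k)
    rw [div_lt_iff₀ (npos hn k)] at h1
    rw [cj_app]
    linarith
  set b := cj n hn 0 t h with hbdef
  have hbm : StrictMono b := cj_mono 0 t hh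
  have ha : ∀ k : ℤ, k ≤ 0 → ∀ s, R + |t| < s → Commute h (cj n hn k s h) := by
    intro k hk s hs
    exact hc k hk s (by linarith [abs_nonneg t])
  have hb : ∀ k : ℤ, k ≤ 0 → ∀ s, R + |t| < s → Commute b (cj n hn k s h) := by
    intro k hk s hs
    have := cj_commute (hn := hn) 0 t (hc k hk (s - t) (by linarith [le_abs_self t]))
    rw [cj, cj, cj_shift] at this
    exact this
  have hsq : ∀ (k : ℤ) s, cj n hn k s h (cj n hn k s h s) = s + (n : ℝ) ^ k * h (h 0) := by
    intro k s
    have := (npos hn k).ne'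
    rw [cj_app, cj_app]
    simp only [sub_self, zero_div, add_sub_cancel_right]
    rw [mul_div_cancel_left₀ _ this]
    ring
  have hpos : 0 < h (h 0) := (hfree 0).trans (hfree _)
  have le_gen : ∀ u s : ℝ, R + |t| < s →
      (∀ g : ℝ ≃ₜ ℝ, StrictMono g → (∀ x, x < g x) → Commute h g → Commute b g → u < g (g s)) →
      u ≤ s := by
    intro u s hs hu
    by_contra! hlt
    obtain ⟨k, hk0, hk⟩ := small hn ((u - s) / h (h 0)) (by apply div_pos <;> linarith)
    have := hu (cj n hn k s h) (cj_mono _ _ hh) (hcfree _ _) (ha k hk0 s hs) (hb k hk0 s hs)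
    rw [hsq] at this
    rw [lt_div_iff₀ hpos] at hk
    linarith
  have hfar : ∀ r, R + |t| < r → h (b r) = b (h r) := by
    intro r hr
    apply le_antisymm
    · apply le_gen
      · exact hr.trans ((hfree r).trans (hcfree _ _ _))
      · intro g g1 g2 g3 g4
        exact comm_bound hh hbm g1 g2 g3 g4 r
    · apply le_gen
      · exact hr.trans ((hcfree 0 t r).trans (hfree _))
      · intro g g1 g2 g3 g4
        exact comm_bound hbm hh g1 g2 g4 g3 r
  apply comm_of
  intro x
  set s := R + |t| + 1
  have hs : R + |t| < s := by simp [s]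
  obtain ⟨m, hm⟩ := orbit_unbdd (hcfree 0 s) x (R + |t|)
  have e := hfar _ hm
  have c1 := (ha 0 le_rfl s hs).pow_right m
  have c2 := (hb 0 le_rfl s hs).pow_right m
  rw [comm_app c2, comm_app c1, comm_app c1, comm_app c2] at e
  exact Homeomorph.injective _ e

/-! Case with a fixed point -/

theorem const_of_frontier {F U : Set ℝ} (hF : IsClosed F) (hU : IsPreconnected U) (q : ℝ → ℝ)
    (hq : ContinuousOn q U) (hm : ∀ t ∈ U, q t ∈ frontier F) (s t : ℝ) (hs : s ∈ U) (ht : t ∈ U) :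
    q s = q t := by
  have hpre := (hU.image q hq).ordConnected
  have key : ∀ s ∈ U, ∀ t ∈ U, ¬ q s < q t := by
    intro s hs t ht hlt
    have hsub : Set.Ioo (q s) (q t) ⊆ frontier F := by
      intro y hy
      obtain ⟨z, hz, rfl⟩ := hpre.out ⟨s, hs, rfl⟩ ⟨t, ht, rfl⟩ (Set.Ioo_subset_Icc_self hy)
      exact hm z hz
    have h2 := interior_maximal hsub isOpen_Ioo
    rw [interior_frontier hF] at h2
    obtain ⟨y, hy⟩ := exists_between hlt
    exact h2 hy
  exact le_antisymm (not_lt.1 (key t ht s hs)) (not_lt.1 (key s hs t ht))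

theorem fix_side {h : ℝ ≃ₜ ℝ} {U : Set ℝ} (hU : IsPreconnected U)
    (hU1 : ∀ s : ℝ, ∃ t ∈ U, t + s ∈ U) (hU2 : ∀ c : ℝ, c ≠ 0 → ∃ m : ℤ, m * c ∈ U)
    (hc : ∀ t ∈ U, Commute h (cj n hn 0 t h)) (a : ℝ) (ha : a ∈ frontier {x | h x = x}) :
    ∀ t ∈ U, h (a - t) = a - t := by
  set F := {x | h x = x} with hFdef
  have hF : IsClosed F := isClosed_eq h.continuous continuous_id
  have hfr : ∀ t ∈ U, ∀ x, cj n hn 0 t h x ∈ frontier F ↔ x ∈ frontier F := by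
    intro t ht x
    have h1 : (cj n hn 0 t h) ⁻¹' F = F := by
      ext y
      simp only [hFdef, Set.mem_preimage, Set.mem_setOf_eq]
      rw [comm_app (hc t ht)]
      exact (Homeomorph.injective _).eq_iff
    have h2 := (cj n hn 0 t h).preimage_frontier F
    rw [h1] at h2
    exact (Set.ext_iff.1 h2 x)
  obtain ⟨t0, ht0, -⟩ := hU1 0
  obtain ⟨c, hcdef⟩ : ∃ c, c = h (a - t0) + t0 - a := ⟨_, rfl⟩
  have hconst : ∀ t ∈ U, h (a - t) = a - t + c := by
    intro t ht
    have := const_of_frontier hF hU (fun t => h (a - t) + t)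
      (by have := h.continuous; fun_prop)
      (fun t ht => by
        have := (hfr t ht a).2 ha
        rwa [cj_zero_app] at this) t t0 ht ht0
    linarith
  have hstep : ∀ x, x + c ∈ frontier F ↔ x ∈ frontier F := by
    intro x
    obtain ⟨t, ht, ht2⟩ := hU1 (a - x)
    have h1 := hconst _ ht2
    rw [show a - (t + (a - x)) = x - t by ring] at h1
    rw [← hfr t ht x, cj_zero_app, h1]
    rw [show x - t + c + t = x + c by ring]
  have hall : ∀ m : ℤ, a + m * c ∈ frontier F := by
    intro m
    induction m using Int.induction_on with
    | zero => simpa using ha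
    | succ i ih =>
      rw [← hstep] at ih
      convert ih using 1
      push_cast; ring
    | pred i ih =>
      rw [← hstep]
      convert ih using 1
      push_cast; ring
  have hc0 : c = 0 := by
    by_contra hne
    obtain ⟨m, hm⟩ := hU2 c hne
    have h1 := hconst _ hm
    have h2 := hF.frontier_subset (hall (-m))
    simp only [hFdef, Set.mem_setOf_eq] at h2
    rw [show a + ((-m : ℤ) : ℝ) * c = a - m * c by push_cast; ring] at h2
    apply hne
    linarith
  intro t ht
  rw [hconst t ht, hc0, add_zero]

theorem exists_mul_gt (c K : ℝ) (hc : c ≠ 0) : ∃ m : ℤ, K < m * c := by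
  rcases lt_or_gt_of_ne hc with h | h
  · obtain ⟨m, hm⟩ := exists_int_gt (K / (-c))
    rw [div_lt_iff₀ (by linarith)] at hm
    exact ⟨-m, by push_cast; linarith⟩
  · obtain ⟨m, hm⟩ := exists_int_gt (K / c)
    rw [div_lt_iff₀ h] at hm
    exact ⟨m, hm⟩

theorem fix_case {h : ℝ ≃ₜ ℝ} (h1 : h ≠ 1) (hfix : ∃ x, h x = x) (R : ℝ)
    (hc : ∀ r, R < |r| → Commute h (cj n hn 0 r h)) :
    ∃ M, ∀ x, M ≤ |x| → h x = x := by
  obtain ⟨a, ha⟩ : (frontier {x | h x = x}).Nonempty := by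
    rw [nonempty_frontier_iff]
    refine ⟨hfix, ?_⟩
    intro e
    apply h1
    apply Homeomorph.ext
    intro x
    have : x ∈ {x | h x = x} := by rw [e]; trivial
    exact this
  have p1 := fix_side (h := h) (n := n) (hn := hn) (U := Set.Ioi (|R|)) isPreconnected_Ioi
    (fun s => ⟨|R| + 1 + |s|, by
        simp only [Set.mem_Ioi]; linarith [abs_nonneg s], by
        simp only [Set.mem_Ioi]; linarith [neg_abs_le s]⟩)
    (fun c h0 => exists_mul_gt c _ h0)
    (fun t ht => hc t (by
      have : |R| < t := ht
      linarith [le_abs_self R, le_abs_self t])) a ha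
  have p2 := fix_side (h := h) (n := n) (hn := hn) (U := Set.Iio (-|R|)) isPreconnected_Iio
    (fun s => ⟨-(|R| + 1 + |s|), by
        simp only [Set.mem_Iio]; linarith [abs_nonneg s], by
        simp only [Set.mem_Iio]; linarith [le_abs_self s]⟩)
    (fun c h0 => by
      obtain ⟨m, hm⟩ := exists_mul_gt c |R| h0
      exact ⟨-m, by simp only [Set.mem_Iio]; push_cast; linarith⟩)
    (fun t ht => hc t (by
      have : t < -|R| := ht
      linarith [le_abs_self R, neg_le_abs t])) a ha
  refine ⟨|R| + |a| + 1, fun x hx => ?_⟩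
  rcases le_total 0 x with h0 | h0
  · rw [abs_of_nonneg h0] at hx
    have := p2 (a - x) (by simp only [Set.mem_Iio]; linarith [le_abs_self a])
    simpa using this
  · rw [abs_of_nonpos h0] at hx
    have := p1 (a - x) (by simp only [Set.mem_Ioi]; linarith [neg_abs_le a])
    simpa using this

theorem main {f h : ℝ ≃ₜ ℝ} (hf : StrictMono f) (hh : StrictMono h) (f1 : f ≠ 1) (h1 : h ≠ 1)
    {M : ℝ} (hM : ∀ x, M ≤ |x| → f x = x)
    (T1 : ∀ (k : ℤ) (r : ℝ), r ∈ Zn n hn →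
      (Commute f (cj n hn k r f) ↔ Commute h (cj n hn k r h)))
    (T2 : ∀ (k : ℤ) (r : ℝ), r ∈ Zn n hn → ∀ (k' : ℤ) (r' : ℝ), r' ∈ Zn n hn →
      Commute (f * cj n hn k r f * f⁻¹) (cj n hn k' r' f) →
      Commute (h * cj n hn k r h * h⁻¹) (cj n hn k' r' h)) :
    h = f := by
  have hM0 : 0 < M := by
    by_contra! hle
    exact f1 (Homeomorph.ext fun x => hM x (hle.trans (abs_nonneg x)))
  -- commutation for real translations
  have hcomm : ∀ k : ℤ, k ≤ 0 → ∀ r : ℝ, 2 * M < |r| → Commute h (cj n hn k r h) := by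
    intro k hk
    have hk1 : (n : ℝ) ^ k ≤ 1 := zpow_le_one_of_nonpos₀ (by
      have : 1 ≤ n := by omega
      exact_mod_cast this) hk
    have ho : IsOpen {r : ℝ | 2 * M < |r|} := isOpen_lt continuous_const continuous_abs
    refine comm_real ho ?_
    intro r hr hrZ
    rw [← T1 k r hrZ]
    apply comm_disjoint
    intro x
    by_contra! hx
    have a1 : |x| < M := by
      by_contra! hle; exact hx.1 (hM x hle)
    have a2 : |x - r| < M * (n : ℝ) ^ k := by
      by_contra! hle; exact hx.2 (cj_supp hM k r x hle)
    have a3 : |r| ≤ |x| + |x - r| := by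
      have := abs_sub x (x - r)
      simpa using this
    have : 2 * M < |r| := hr
    nlinarith
  -- translates do not all commute
  have hnc : ∃ t, ¬ Commute h (cj n hn 0 t h) := by
    obtain ⟨r, hr, -, hr2⟩ := not_comm (n := n) (hn := hn) hf hM f1 f1
      ⟨M, fun x hx => by
        by_contra! hlt
        exact hx (hM x (hlt.le.trans (le_abs_self x)))⟩ 0
    exact ⟨r, fun hc => hr2 ((T1 0 r hr).2 hc)⟩
  obtain ⟨t, ht⟩ := hnc
  have hfix : ∃ x, h x = x := by
    by_contra! hne
    rcases lt_or_gt_of_ne (hne 0) with h0 | h0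
    · have hall : ∀ x, h x < x := by
        intro x
        by_contra! hle
        obtain ⟨y, hy⟩ := mem_range_of_exists_le_of_exists_ge (f := fun x => h x - x) (c := 0)
          (by have := h.continuous; fun_prop) ⟨0, by linarith⟩ ⟨x, by linarith⟩
        exact hne y (by simp only at hy; linarith)
      apply ht
      have := free_case (n := n) (hn := hn) (mono_inv hh)
        (fun x => by
          have := hall (h⁻¹ x)
          rwa [app_inv_self] at this) (2 * M)
        (fun k hk r hr => by
          rw [cj_inv]
          exact (hcomm k hk r (hr.trans_le (le_abs_self r))).inv_inv) t
      rw [cj_inv] at this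
      simpa using this.inv_inv
    · have hall : ∀ x, x < h x := by
        intro x
        by_contra! hle
        obtain ⟨y, hy⟩ := mem_range_of_exists_le_of_exists_ge (f := fun x => h x - x) (c := 0)
          (by have := h.continuous; fun_prop) ⟨x, by linarith⟩ ⟨0, by linarith⟩
        exact hne y (by simp only at hy; linarith)
      exact ht (free_case hh hall (2 * M)
        (fun k hk r hr => hcomm k hk r (hr.trans_le (le_abs_self r))) t)
  obtain ⟨M', hM'⟩ := fix_case h1 hfix (2 * M) (hcomm 0 le_rfl)
  -- common bound
  obtain ⟨K, hK0, hKf, hKh⟩ : ∃ K, 0 < K ∧ (∀ x, K ≤ |x| → f x = x) ∧ (∀ x, K ≤ |x| → h x = x) :=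
    ⟨max M M', lt_max_of_lt_left hM0, fun x hx => hM x ((le_max_left _ _).trans hx),
      fun x hx => hM' x ((le_max_right _ _).trans hx)⟩
  by_contra hne
  obtain ⟨x0, hx0⟩ : ∃ x, h x ≠ f x := by
    by_contra! hall
    exact hne (Homeomorph.ext hall)
  obtain ⟨d, hd⟩ : ∃ d, d = |h x0 - f x0| / 2 := ⟨_, rfl⟩
  have hd0 : 0 < d := by
    rw [hd]
    have := abs_pos.2 (sub_ne_zero.2 hx0)
    linarith
  obtain ⟨δ1, hδ1, hf1⟩ := Metric.continuous_iff.1 f.continuous x0 d hd0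
  obtain ⟨δ2, hδ2, hh2⟩ := Metric.continuous_iff.1 h.continuous x0 (d / 2) (by linarith)
  obtain ⟨δ, hδ, hδa, hδb⟩ : ∃ δ, 0 < δ ∧ δ ≤ δ1 ∧ δ ≤ δ2 :=
    ⟨min δ1 δ2, lt_min hδ1 hδ2, min_le_left _ _, min_le_right _ _⟩
  obtain ⟨k, -, hk⟩ := small hn (δ / 2 / K) (by positivity)
  rw [lt_div_iff₀ hK0] at hk
  obtain ⟨r, hr, hrZ⟩ := Zn_open (n := n) (hn := hn) (Metric.isOpen_ball (x := x0) (ε := δ / 2))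
    ⟨x0, Metric.mem_ball_self (by linarith)⟩
  rw [Metric.mem_ball, Real.dist_eq] at hr
  have near : ∀ x, |x - r| < K * (n : ℝ) ^ k → |x - x0| < δ := by
    intro x hx
    have := abs_sub_le x r x0
    linarith
  -- supports of conjugates
  have sf : ∀ x, (f * cj n hn k r f * f⁻¹) x ≠ x → |x - f x0| < d := by
    intro x hx
    have h2 : cj n hn k r f (f⁻¹ x) ≠ f⁻¹ x := by
      intro e
      apply hx
      rw [mul_app, mul_app, e, app_inv_self]
    have h3 : |f⁻¹ x - r| < K * (n : ℝ) ^ k := by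
      by_contra! hle; exact h2 (cj_supp hKf k r _ hle)
    have h4 := hf1 (f⁻¹ x) (by rw [Real.dist_eq]; exact (near _ h3).trans_le hδa)
    rwa [app_inv_self, Real.dist_eq] at h4
  have sh : ∀ x, (h * cj n hn k r h * h⁻¹) x ≠ x → |x - h x0| < d / 2 := by
    intro x hx
    have h2 : cj n hn k r h (h⁻¹ x) ≠ h⁻¹ x := by
      intro e
      apply hx
      rw [mul_app, mul_app, e, app_inv_self]
    have h3 : |h⁻¹ x - r| < K * (n : ℝ) ^ k := by
      by_contra! hle; exact h2 (cj_supp hKh k r _ hle)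
    have h4 := hh2 (h⁻¹ x) (by rw [Real.dist_eq]; exact (near _ h3).trans_le hδb)
    rwa [app_inv_self, Real.dist_eq] at h4
  have G1 : h * cj n hn k r h * h⁻¹ ≠ 1 := by
    intro e
    rw [cj, conj_eq_one_iff, conj_eq_one_iff] at e
    exact h1 e
  set G := h * cj n hn k r h * h⁻¹ with hG
  have hbd : BddAbove {x | G x ≠ x} :=
    ⟨h x0 + d / 2, fun x hx => by
      have := (abs_lt.1 (sh x hx)).2
      linarith⟩
  have hSne : {x | G x ≠ x}.Nonempty := by
    by_contra hn'
    apply G1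
    apply Homeomorph.ext
    intro x
    by_contra hx
    exact hn' ⟨x, hx⟩
  have hp : |sSup {x | G x ≠ x} - h x0| ≤ d / 2 := by
    rw [abs_le]
    constructor
    · obtain ⟨y, hy⟩ := hSne
      have a1 := le_csSup hbd hy
      have a2 := (abs_lt.1 (sh y hy)).1
      linarith
    · have : sSup {x | G x ≠ x} ≤ h x0 + d / 2 := csSup_le hSne fun x hx => by
        have := (abs_lt.1 (sh x hx)).2
        linarith
      linarith
  obtain ⟨k', -, hk'⟩ := small hn (d / 4 / K) (by positivity)
  rw [lt_div_iff₀ hK0] at hk'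
  obtain ⟨r', hr'Z, hr'1, hr'2⟩ := not_comm (n := n) (hn := hn) hh hKh h1 G1 hbd k'
  apply hr'2
  apply T2 k r hrZ k' r' hr'Z
  apply comm_disjoint
  intro x
  by_contra! hx
  have a1 := sf x hx.1
  have a2 : |x - r'| < K * (n : ℝ) ^ k' := by
    by_contra! hle; exact hx.2 (cj_supp hKf k' r' x hle)
  have a3 := abs_lt.1 a1
  have a4 := abs_lt.1 a2
  have a5 := abs_lt.1 hr'1
  have a6 := abs_le.1 hp
  have a7 : |h x0 - f x0| < 2 * d := by
    rw [abs_lt]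
    constructor <;> linarith
  linarith

end BSrec

theorem BS_recognizes_compactly_supported
    (n : ℕ) (hn : 2 ≤ n) (f h : ℝ ≃ₜ ℝ)
    (hfmono : StrictMono f) (hhmono : StrictMono h)
    (hfc : IsCompact (Supp f))
    (φ : Subgroup.closure ((BSgroup n hn : Set (ℝ ≃ₜ ℝ)) ∪ {f}) ≃*
         Subgroup.closure ((BSgroup n hn : Set (ℝ ≃ₜ ℝ)) ∪ {h}))
    (hφΓ : ∀ (γ : ℝ ≃ₜ ℝ) (hγ : γ ∈ BSgroup n hn),
      ((φ ⟨γ, Subgroup.subset_closure (Set.mem_union_left _ hγ)⟩ : _) : ℝ ≃ₜ ℝ) = γ)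
    (hφf : ((φ ⟨f, Subgroup.subset_closure
        (Set.mem_union_right _ (Set.mem_singleton f))⟩ : _) : ℝ ≃ₜ ℝ) = h) :
    h = f := by
  let A := Subgroup.closure ((BSgroup n hn : Set (ℝ ≃ₜ ℝ)) ∪ {f})
  let F : A := ⟨f, Subgroup.subset_closure (Set.mem_union_right _ (Set.mem_singleton f))⟩
  have hF : ((φ F : _) : ℝ ≃ₜ ℝ) = h := hφf
  have hcj : ∀ (k : ℤ) (r : ℝ), r ∈ BSrec.Zn n hn → ∃ P : A, (P : ℝ ≃ₜ ℝ) = BSrec.cj n hn k r f ∧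
      ((φ P : _) : ℝ ≃ₜ ℝ) = BSrec.cj n hn k r h := by
    intro k r hr
    let g : A := ⟨BSrec.aff n hn k r, Subgroup.subset_closure (Set.mem_union_left _ (hr k))⟩
    have hg : ((φ g : _) : ℝ ≃ₜ ℝ) = BSrec.aff n hn k r := hφΓ _ (hr k)
    refine ⟨g * F * g⁻¹, rfl, ?_⟩
    rw [map_mul, map_mul, map_inv]
    push_cast
    rw [hg, hF]
    rfl
  have hcom : ∀ P Q : A, Commute (P : ℝ ≃ₜ ℝ) (Q : ℝ ≃ₜ ℝ) ↔
      Commute ((φ P : _) : ℝ ≃ₜ ℝ) ((φ Q : _) : ℝ ≃ₜ ℝ) := by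
    intro P Q
    simp only [Commute, SemiconjBy]
    constructor
    · intro e
      have e' : P * Q = Q * P := Subtype.ext e
      have := congrArg φ e'
      rw [map_mul, map_mul] at this
      exact congrArg Subtype.val this
    · intro e
      have e' : φ P * φ Q = φ Q * φ P := Subtype.ext e
      rw [← map_mul, ← map_mul] at e'
      exact congrArg Subtype.val (φ.injective e')
  have hone : f = 1 ↔ h = 1 := by
    rw [← hF]
    constructor
    · intro e
      have : F = 1 := Subtype.ext e
      rw [this, map_one]; rfl
    · intro e
      have e' : φ F = 1 := Subtype.ext e
      rw [map_eq_one_iff _ φ.injective] at e'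
      exact congrArg Subtype.val e'
  by_cases f1 : f = 1
  · rw [f1, hone.1 f1]
  have h1 : h ≠ 1 := fun e => f1 (hone.2 e)
  obtain ⟨M, hM⟩ : ∃ M : ℝ, ∀ x, M ≤ |x| → f x = x := by
    obtain ⟨M, hM⟩ := hfc.isBounded.exists_norm_le
    refine ⟨M + 1, fun x hx => ?_⟩
    by_contra hne
    have := hM x (subset_closure hne)
    rw [Real.norm_eq_abs] at this
    linarith
  refine BSrec.main (n := n) (hn := hn) hfmono hhmono f1 h1 hM ?_ ?_
  · intro k r hr
    obtain ⟨P, hP1, hP2⟩ := hcj k r hr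
    have := hcom F P
    rw [hF, hP1, hP2] at this
    exact this
  · intro k r hr k' r' hr' hc
    obtain ⟨P, hP1, hP2⟩ := hcj k r hr
    obtain ⟨Q, hQ1, hQ2⟩ := hcj k' r' hr'
    have := (hcom (F * P * F⁻¹) Q).1 (by
      push_cast
      rw [hP1, hQ1]
      exact hc)
    rw [map_mul, map_mul, map_inv] at this
    push_cast at this
    rw [hF, hP2, hQ2] at this
    exact this
end

section
/- Fix an integer n ≥ 2 and let h ∈ Homeo₊(ℝ) be a homeomorphism that is not a translation. Then the following are equivalent: (1) h has compact support; (2) there exists a compact set K ⊆ ℝ such that h commutes with u ∘ h ∘ u⁻¹ for every u ∈ BS(1,n) with u(K) ∩ K = ∅, and moreover for every γ ∈ BS(1,n), writing g = h ∘ γ ∘ h⁻¹ ∘ γ⁻¹, there exists a compact set K' ⊆ ℝ such that g commutes with u ∘ g ∘ u⁻¹ for every u ∈ BS(1,n) with u(K') ∩ K' = ∅. -/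
open Set Topology

def CommT (h : ℝ → ℝ) (T : ℝ) : Prop :=
  ∀ t, T ≤ |t| → ∀ x, h (h (x - t) + t) = h (h x - t) + t

def rflct (h : ℝ → ℝ) : ℝ → ℝ := fun x => -h (-x)

lemma refl_mono {h : ℝ → ℝ} (hm : StrictMono h) : StrictMono (rflct h) := by
  intro x y hxy
  have := hm (neg_lt_neg hxy)
  simp only [rflct]; linarith

lemma refl_cont {h : ℝ → ℝ} (hc : Continuous h) : Continuous (rflct h) := by
  unfold rflct; fun_prop

lemma refl_comm {h : ℝ → ℝ} {T : ℝ} (H : CommT h T) : CommT (rflct h) T := by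
  intro t ht x
  have := H (-t) (by rwa [abs_neg]) (-x)
  simp only [rflct]
  rw [show -(-h (-(x - t)) + t) = h (-x - -t) + -t by ring_nf, this,
    show -(-h (-x) - t) = h (-x) - -t by ring]
  ring

lemma fixed_fwd {h : ℝ → ℝ} {T : ℝ} (H : CommT h T) {x y : ℝ} (hx : h x = x)
    (hy : T ≤ |y - x|) : h (x + (h y - y)) = x + (h y - y) := by
  have := H (y - x) hy y
  rw [show y - (y - x) = x by ring, hx, show x + (y - x) = y by ring,
    show h y - (y - x) = x + (h y - y) by ring] at this
  linarith

lemma fixed_bwd {h : ℝ → ℝ} (hm : StrictMono h) {T : ℝ} (H : CommT h T) {x y : ℝ} (hx : h x = x)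
    (hy : T ≤ |h y - x|) : h (x - (h y - y)) = x - (h y - y) := by
  have := H (h y - x) hy y
  rw [show h y - (h y - x) = x by ring, hx, show x + (h y - x) = h y by ring] at this
  have := hm.injective this
  rw [show y - (h y - x) = x - (h y - y) by ring] at this
  linarith

lemma exists_max_fixed {h : ℝ → ℝ} (hc : Continuous h) {x0 a : ℝ} (h0 : h x0 = x0)
    (ha : x0 ≤ a) : ∃ c, h c = c ∧ x0 ≤ c ∧ c ≤ a ∧ ∀ y, h y = y → y ≤ a → y ≤ c := by
  have hcl : IsClosed ({x | h x = x} ∩ Iic a) := (isClosed_eq hc continuous_id).inter isClosed_Iic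
  have hne : ({x | h x = x} ∩ Iic a).Nonempty := ⟨x0, h0, ha⟩
  have hb : BddAbove ({x | h x = x} ∩ Iic a) := ⟨a, fun y hy => hy.2⟩
  have := hcl.csSup_mem hne hb
  exact ⟨_, this.1, le_csSup hb ⟨h0, ha⟩, this.2, fun y h1 h2 => le_csSup hb ⟨h1, h2⟩⟩

lemma fixed_unbdd {h : ℝ → ℝ} (hc : Continuous h) (hm : StrictMono h)
    (hs : Function.Surjective h) {T : ℝ} (hT : 0 < T)
    (H : CommT h T) {x0 : ℝ} (h0 : h x0 = x0) (M : ℝ) : ∃ x, M < x ∧ h x = x := by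
  by_contra! hno
  obtain ⟨c, hcf, -, -, hmax⟩ := exists_max_fixed hc h0 (le_max_right M x0)
  have hmax' : ∀ y, h y = y → y ≤ c := by
    intro y hy
    apply hmax y hy
    by_contra! h1
    exact hno y (lt_of_le_of_lt (le_max_left _ _) h1) hy
  obtain ⟨d, hd, hd2⟩ : ∃ d, c + T ≤ d ∧ c + T ≤ h d := by
    obtain ⟨e, he⟩ := hs (c + T)
    exact ⟨max e (c + T), le_max_right _ _, he.symm.le.trans (hm.monotone (le_max_left _ _))⟩
  have h1 := hmax' _ (fixed_fwd H hcf (y := d) (by rw [abs_of_nonneg] <;> linarith))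
  have h2 := hmax' _ (fixed_bwd hm H hcf (y := d) (by rw [abs_of_nonneg] <;> linarith))
  have h3 := hmax' d (by linarith)
  linarith

lemma fixed_evt_above {h : ℝ → ℝ} (hc : Continuous h) (hm : StrictMono h)
    (hs : Function.Surjective h) {T : ℝ} (hT : 0 < T)
    (H : CommT h T) {x0 : ℝ} (h0 : h x0 = x0) : ∃ R, ∀ x, R < x → h x = x := by
  by_contra! hno
  obtain ⟨y1, hy1, hn1⟩ := hno x0
  obtain ⟨x1, hx1, hf1⟩ := fixed_unbdd hc hm hs hT H h0 (y1 + T)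
  obtain ⟨y0, hy0, hn0⟩ := hno x1
  obtain ⟨c, hcf, hxc, hcy, hmax⟩ := exists_max_fixed hc hf1 hy0.le
  set δ := |h y0 - y0| with hδ
  have hδ0 : 0 < δ := abs_pos.mpr (sub_ne_zero.mpr hn0)
  have step : ∀ x, h x = x → x ≤ c - T → ∀ e, 0 ≤ e → e ≤ δ → h (x + e) = x + e := by
    intro x hx hxc' e he0 he
    have hcont : ContinuousOn (fun y => |h y - y|) (Icc c y0) := by fun_prop
    have hiv := intermediate_value_Icc hcy hcont
    obtain ⟨y, hy, hye⟩ := hiv (show e ∈ _ by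
      simp only [hcf, sub_self, abs_zero]; exact ⟨he0, he⟩)
    have hhy : c ≤ h y := by
      rw [← hcf]; exact hm.monotone hy.1
    simp only at hye
    have a1 := fixed_fwd H hx (y := y) (by rw [abs_of_nonneg] <;> linarith [hy.1])
    have a2 := fixed_bwd hm H hx (y := y) (by rw [abs_of_nonneg] <;> linarith [hy.1])
    rcases abs_cases (h y - y) with h3 | h3
    · rw [← hye, h3.1]; exact a1
    · rw [← hye, h3.1, ← sub_eq_add_neg]; exact a2
  obtain ⟨s, hsf, hxs, hsy, hsmax⟩ := exists_max_fixed hc h0 hy1.le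
  have hlt : s < y1 := lt_of_le_of_ne hsy (by rintro rfl; exact hn1 hsf)
  have h4 := step s hsf (by linarith) (min δ (y1 - s)) (le_min hδ0.le (by linarith)) (min_le_left _ _)
  have h5 := hsmax _ h4 (by linarith [min_le_right δ (y1 - s)])
  have h6 : 0 < min δ (y1 - s) := lt_min hδ0 (by linarith)
  linarith

lemma refl_surj {h : ℝ → ℝ} (hs : Function.Surjective h) : Function.Surjective (rflct h) := by
  intro y
  obtain ⟨x, hx⟩ := hs (-y)
  exact ⟨-x, by simp [rflct, hx]⟩

lemma fixed_evt {h : ℝ → ℝ} (hc : Continuous h) (hm : StrictMono h)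
    (hs : Function.Surjective h) {T : ℝ} (hT : 0 < T)
    (H : CommT h T) {x0 : ℝ} (h0 : h x0 = x0) : ∃ R, ∀ x, R < |x| → h x = x := by
  obtain ⟨R1, h1⟩ := fixed_evt_above hc hm hs hT H h0
  obtain ⟨R2, h2⟩ := fixed_evt_above (refl_cont hc) (refl_mono hm) (refl_surj hs) hT (refl_comm H)
    (x0 := -x0) (by simp [rflct, h0])
  refine ⟨max R1 R2, fun x hx => ?_⟩
  rcases abs_cases x with h3 | h3
  · exact h1 x (by rw [← h3.1]; exact (le_max_left _ _).trans_lt hx)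
  · have := h2 (-x) (by rw [← h3.1]; exact (le_max_right _ _).trans_lt hx)
    simpa [rflct] using this

lemma iter_unbdd {h : ℝ → ℝ} (hc : Continuous h) (hgt : ∀ x, x < h x) (x R : ℝ) :
    ∃ m : ℕ, R < h^[m] x := by
  by_contra! hb
  have hmon : Monotone (fun m : ℕ => h^[m] x) := monotone_nat_of_le_succ fun m => by
    rw [Function.iterate_succ_apply']; exact (hgt _).le
  have hlim := tendsto_atTop_ciSup hmon ⟨R, by rintro _ ⟨m, rfl⟩; exact hb m⟩
  have := isFixedPt_of_tendsto_iterate hlim hc.continuousAt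
  exact (hgt _).ne' this

lemma refl_iter (h : ℝ → ℝ) (m : ℕ) (x : ℝ) : (rflct h)^[m] x = - h^[m] (-x) := by
  induction m with
  | zero => simp
  | succ m ih => rw [Function.iterate_succ_apply', ih, Function.iterate_succ_apply']; simp [rflct]

lemma iter_unbdd' {h : ℝ → ℝ} (hc : Continuous h) (hgt : (∀ x, x < h x) ∨ ∀ x, h x < x)
    (x R : ℝ) : ∃ m : ℕ, R < |h^[m] x| := by
  rcases hgt with hgt | hgt
  · obtain ⟨m, hm⟩ := iter_unbdd hc hgt x R
    exact ⟨m, hm.trans_le (le_abs_self _)⟩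
  · obtain ⟨m, hm⟩ := iter_unbdd (refl_cont hc) (fun x => by
      simp only [rflct]; linarith [hgt (-x)]) (-x) R
    rw [refl_iter, neg_neg] at hm
    exact ⟨m, hm.trans_le (neg_le_abs _)⟩

/-- A map commuting with `h` and dominating `h²` on a fundamental domain dominates it everywhere. -/
lemma fund {h F : ℝ → ℝ} (hc : Continuous h) (hm : StrictMono h) (hs : Function.Surjective h)
    (hgt : ∀ x, x < h x) (hF : Function.Commute F h)
    (hd : ∀ x, 0 ≤ x → x ≤ h 0 → h (h x) ≤ F x) : ∀ x, h (h x) ≤ F x := by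
  intro x
  have hcomm : ∀ j : ℕ, Function.Commute F (h^[j]) := fun j => hF.iterate_right j
  have hself : ∀ (j : ℕ) y, h^[j] (h (h y)) = h (h (h^[j] y)) := fun j y => by
    rw [← Function.iterate_succ_apply, ← Function.iterate_succ_apply,
      Function.iterate_succ_apply', Function.iterate_succ_apply']
  classical
  rcases le_or_gt 0 x with hx | hx
  · have hex := iter_unbdd hc hgt 0 x
    have h1 := Nat.find_spec hex
    have h2 := fun k => Nat.find_min hex (m := k)
    rcases hk : Nat.find hex with _ | k
    · rw [hk] at h1; simp at h1; linarith
    · rw [hk] at h1 h2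
      have h3 := h2 k (Nat.lt_succ_self k)
      push Not at h3
      obtain ⟨y, rfl⟩ := hs.iterate k x
      rw [Function.iterate_succ_apply] at h1
      have h4 := (hm.iterate k).lt_iff_lt.mp h1
      have h5 := (hm.iterate k).le_iff_le.mp h3
      rw [(hcomm k) y, ← hself]
      exact (hm.iterate k).monotone (hd y h5 h4.le)
  · have hex : ∃ m : ℕ, 0 ≤ h^[m] x := (iter_unbdd hc hgt x 0).imp fun _ => le_of_lt
    have h1 := Nat.find_spec hex
    have h2 := fun k => Nat.find_min hex (m := k)
    rcases hk : Nat.find hex with _ | k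
    · rw [hk] at h1; simp at h1; linarith
    · rw [hk] at h1 h2
      have h3 := h2 k (Nat.lt_succ_self k)
      push Not at h3
      have h4 : h^[k+1] x ≤ h 0 := by
        rw [Function.iterate_succ_apply']; exact hm.monotone h3.le
      have h5 := hd _ h1 h4
      rw [(hcomm (k+1)) x, ← hself] at h5
      exact (hm.iterate (k+1)).le_iff_le.mp h5

lemma dom_contra {h : ℝ → ℝ} (hc : Continuous h) (hm : StrictMono h) (hs : Function.Surjective h)
    (hgt : ∀ x, x < h x) {t : ℝ} (ht : t ≠ 0) (hd : ∀ x, h (h x) ≤ h (x - t) + t) : False := by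
  set F : ℝ → ℝ := fun x => h (x - t) + t with hFdef
  have hle : ∀ m : ℕ, ∀ x, h^[m] (h^[m] x) ≤ F^[m] x := by
    intro m x
    have h1 : (h^[2])^[m] ≤ F^[m] := (hm.monotone.iterate 2).iterate_le_of_le hd m
    have h2 := h1 x
    rwa [← Function.iterate_mul, two_mul, Function.iterate_add_apply] at h2
  have hconj : ∀ m : ℕ, ∀ z, F^[m] (z + t) = h^[m] z + t := by
    intro m z
    have : Function.Semiconj (fun z => z + t) h F := fun z => by simp [hFdef]
    exact ((this.iterate_right m) z).symm
  rcases lt_or_gt_of_ne ht with ht | ht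
  · obtain ⟨m, hm0⟩ := iter_unbdd hc hgt t 0
    have h1 := hle m t
    have h2 := hconj m 0
    rw [zero_add] at h2
    have h3 := (hm.iterate m).monotone hm0.le
    linarith
  · obtain ⟨m, hm0⟩ := iter_unbdd hc hgt 0 t
    obtain ⟨z, hz⟩ := hs.iterate m 0
    have h1 := hle m (z + t)
    rw [hconj, hz] at h1
    have h3 := (hm.iterate m).monotone ((hm.iterate m).monotone (show z ≤ z + t by linarith))
    rw [hz] at h3
    linarith

/-- dichotomy: equal or everywhere different. -/
def Dich (h : ℝ → ℝ) (T : ℝ) (D : Set ℝ) : Prop :=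
  ∀ s ∈ D, T ≤ |s| → (∃ x, h (x - s) + s = h x) → ∀ x, h (x - s) + s = h x

lemma closed_dense {D A : Set ℝ} {T : ℝ} (hD : Dense D) (hA : IsClosed A)
    (hsub : ∀ s ∈ D, T < s → s ∈ A) {t : ℝ} (ht : T ≤ t) : t ∈ A := by
  have h1 : Ioi T ⊆ A := (hD.open_subset_closure_inter isOpen_Ioi).trans
    (closure_minimal (fun s hs => hsub s hs.2 hs.1) hA)
  have h2 : closure (Ioi T) ⊆ A := closure_minimal h1 hA
  rw [closure_Ioi] at h2
  exact h2 ht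

lemma periodic_const {h : ℝ → ℝ} (hc : Continuous h) {T : ℝ} (hT : 0 < T) {D : Set ℝ}
    (hD : Dense D) (Hd : Dich h T D) {L : ℝ} (hL : 0 < L) (hp : ∀ x, h (x + L) = h x + L) :
    ∃ t, ∀ x, h x = x + t := by
  set φ : ℝ → ℝ := fun x => h x - x with hφ
  have hφc : Continuous φ := by fun_prop
  have hper : Function.Periodic φ L := fun x => by simp only [hφ, hp]; ring
  have hmax : ∃ x1, ∀ x, φ x ≤ φ x1 := by
    obtain ⟨x1, -, h1⟩ := isCompact_Icc.exists_isMaxOn (nonempty_Icc.mpr hL.le) hφc.continuousOn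
    refine ⟨x1, fun x => ?_⟩
    obtain ⟨y, hy, hxy⟩ := hper.exists_mem_Ico₀ hL x
    rw [hxy]; exact h1 (Ico_subset_Icc_self hy)
  obtain ⟨x1, hx1⟩ := hmax
  have hinv : ∀ t, T ≤ t → ∀ x, h (x - t) + t = h x := by
    intro t ht
    refine closed_dense (A := {t | ∀ x, h (x - t) + t = h x}) hD ?_ ?_ ht
    · rw [setOf_forall]
      exact isClosed_iInter fun x => isClosed_eq (by fun_prop) (by fun_prop)
    · intro s hs hTs
      apply Hd s hs (hTs.le.trans (le_abs_self s))
      have hcont : Continuous (fun x => φ (x - s) - φ x) := by fun_prop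
      have := mem_range_of_exists_le_of_exists_ge hcont (c := 0) ⟨x1, by linarith [hx1 (x1 - s)]⟩
        ⟨x1 + s, by
          show 0 ≤ φ (x1 + s - s) - φ (x1 + s)
          rw [add_sub_cancel_right]; linarith [hx1 (x1 + s)]⟩
      obtain ⟨x, hx⟩ := this
      refine ⟨x, ?_⟩
      simp only [hφ] at hx
      linarith
  refine ⟨h 0, fun x => ?_⟩
  have h1 := hinv (T + |x|) (by linarith [abs_nonneg x]) 0
  have h2 := hinv (T + |x| + x) (by linarith [neg_abs_le x]) x
  rw [show x - (T + |x| + x) = 0 - (T + |x|) by ring] at h2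
  linarith

lemma limit_periodic {h : ℝ → ℝ} (hc : Continuous h) {T : ℝ} (H : CommT h T) {L : ℝ}
    (l : Filter ℝ) [l.NeBot] (hl : ∀ᶠ t in l, T ≤ |t|)
    (hlim : ∀ x, Filter.Tendsto (fun t => h (x - t) - (x - t)) l (𝓝 L)) (x : ℝ) :
    h (x + L) = h x + L := by
  have h1 : Filter.Tendsto (fun t => h (x + (h (x - t) - (x - t)))) l (𝓝 (h (x + L))) :=
    (hc.tendsto _).comp (tendsto_const_nhds.add (hlim x))
  have h2 : Filter.Tendsto (fun t => h x + (h (h x - t) - (h x - t))) l (𝓝 (h x + L)) :=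
    tendsto_const_nhds.add (hlim (h x))
  refine tendsto_nhds_unique h1 (h2.congr' ?_)
  filter_upwards [hl] with t ht
  have := H t ht x
  rw [show x + (h (x - t) - (x - t)) = h (x - t) + t by ring, this]
  ring

/-- Common endgame: displacement at `t → l` is eventually above each of its values. -/
lemma endgame {h : ℝ → ℝ} (hc : Continuous h) (hm : StrictMono h) (hs : Function.Surjective h)
    (hgt : ∀ x, x < h x) {T : ℝ} (hT : 0 < T) (H : CommT h T) {D : Set ℝ}
    (hD : Dense D) (Hd : Dich h T D)
    (l : Filter ℝ) [l.NeBot] (hl : ∀ᶠ t in l, T ≤ |t|)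
    (hmono : ∀ y M, ∀ᶠ t in l, ∀ x, |x| ≤ M → h y - y ≤ h (x - t) - (x - t)) :
    ∃ t, ∀ x, h x = x + t := by
  by_cases hb : BddAbove (range fun x => h x - x)
  · set L := ⨆ x, (h x - x) with hLdef
    have hle : ∀ x, h x - x ≤ L := fun x => le_ciSup hb x
    have hL : 0 < L := (sub_pos.mpr (hgt 0)).trans_le (hle 0)
    refine periodic_const hc hT hD Hd hL (limit_periodic hc H l hl fun x => ?_)
    refine tendsto_order.mpr ⟨fun a ha => ?_, fun a ha => Filter.Eventually.of_forall fun t => (hle _).trans_lt ha⟩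
    obtain ⟨y, hy⟩ := exists_lt_of_lt_ciSup ha
    filter_upwards [hmono y |x|] with t ht
    exact hy.trans_le (ht x le_rfl)
  · exfalso
    rw [not_bddAbove_iff] at hb
    obtain ⟨_, ⟨y, rfl⟩, hy⟩ := hb (h (h (h 0)))
    obtain ⟨t, ht, htT⟩ := ((hmono y (h 0)).and hl).exists
    refine dom_contra hc hm hs hgt (t := t) (by rintro rfl; simp at htT; linarith) ?_
    refine fund hc hm hs hgt (F := fun x => h (x - t) + t) (fun x => ?_) ?_
    · exact (H t htT x).symm
    · intro x hx0 hx1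
      have h1 := ht x (by rwa [abs_of_nonneg hx0])
      have h2 := hm.monotone (hm.monotone hx1)
      simp only at hy
      linarith

lemma main_pos {h : ℝ → ℝ} (hc : Continuous h) (hm : StrictMono h) (hs : Function.Surjective h)
    (hgt : ∀ x, x < h x) {T : ℝ} (hT : 0 < T) (H : CommT h T) {D : Set ℝ}
    (hD : Dense D) (Hd : Dich h T D) : ∃ t, ∀ x, h x = x + t := by
  set A : Set ℝ := {s | ∀ x, h x ≤ h (x - s) + s} with hA
  set B : Set ℝ := {s | ∀ x, h (x - s) + s ≤ h x} with hB
  have hAc : IsClosed A := by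
    rw [hA, setOf_forall]
    exact isClosed_iInter fun x => isClosed_le (by fun_prop) (by fun_prop)
  have hBc : IsClosed B := by
    rw [hB, setOf_forall]
    exact isClosed_iInter fun x => isClosed_le (by fun_prop) (by fun_prop)
  have hcov : Ici T ⊆ A ∪ B := by
    intro t ht
    refine closed_dense hD (hAc.union hBc) ?_ ht
    intro s hsD hTs
    by_contra! hno
    simp only [hA, hB, mem_union, mem_setOf_eq, not_or, not_forall, not_le] at hno
    obtain ⟨⟨x, hx⟩, ⟨y, hy⟩⟩ := hno
    have hcont : Continuous (fun x => h (x - s) + s - h x) := by fun_prop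
    obtain ⟨z, hz⟩ := mem_range_of_exists_le_of_exists_ge hcont (c := 0) ⟨x, by linarith⟩
      ⟨y, by linarith⟩
    have := Hd s hsD (hTs.le.trans (le_abs_self s)) ⟨z, by simp only at hz; linarith⟩ x
    linarith
  by_cases hAall : Ici T ⊆ A
  · refine endgame hc hm hs hgt hT H hD Hd Filter.atTop ?_ ?_
    · filter_upwards [Filter.eventually_ge_atTop T] with t ht using ht.trans (le_abs_self t)
    · intro y M
      filter_upwards [Filter.eventually_ge_atTop (T + M - y)] with t ht x hx
      have := hAall (show T ≤ y - (x - t) by linarith [le_abs_self x]) y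
      rw [sub_sub_cancel] at this
      linarith
  by_cases hBall : Ici T ⊆ B
  · refine endgame hc hm hs hgt hT H hD Hd Filter.atBot ?_ ?_
    · filter_upwards [Filter.eventually_le_atBot (-T)] with t ht
      linarith [neg_le_abs t]
    · intro y M
      filter_upwards [Filter.eventually_le_atBot (-T - M - y)] with t ht x hx
      have := hBall (show T ≤ (x - t) - y by linarith [neg_abs_le x]) (x - t)
      rw [sub_sub_cancel] at this
      linarith
  obtain ⟨s, hs1, hs2, hs3⟩ := isPreconnected_closed_iff.mp isPreconnected_Ici A B hAc hBc hcov
    (by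
      obtain ⟨s, h1, h2⟩ := not_subset.mp hBall
      exact ⟨s, h1, (hcov h1).resolve_right h2⟩)
    (by
      obtain ⟨s, h1, h2⟩ := not_subset.mp hAall
      exact ⟨s, h1, (hcov h1).resolve_left h2⟩)
  refine periodic_const hc hT hD Hd (hT.trans_le hs1) fun x => ?_
  have h1 := hs2 (x + s)
  have h2 := hs3 (x + s)
  rw [add_sub_cancel_right] at h1 h2
  linarith

lemma main_fun {h : ℝ → ℝ} (hc : Continuous h) (hm : StrictMono h) (hs : Function.Surjective h)
    (hgt : (∀ x, x < h x) ∨ ∀ x, h x < x) {T : ℝ} (hT : 0 < T) (H : CommT h T) {D : Set ℝ}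
    (hD : Dense D) (hneg : ∀ s ∈ D, -s ∈ D) (Hd : Dich h T D) : ∃ t, ∀ x, h x = x + t := by
  rcases hgt with hgt | hgt
  · exact main_pos hc hm hs hgt hT H hD Hd
  · obtain ⟨t, ht⟩ := main_pos (refl_cont hc) (refl_mono hm) (refl_surj hs)
      (fun x => by simp only [rflct]; linarith [hgt (-x)]) hT (refl_comm H) hD (by
        rintro s hsD hsT ⟨x, hx⟩ y
        simp only [rflct] at hx ⊢
        have h1 := Hd (-s) (hneg s hsD) (by rwa [abs_neg]) ⟨-x, by
          rw [show -x - -s = -(x - s) by ring]; linarith⟩ (-y)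
        rw [show -y - -s = -(y - s) by ring] at h1
        linarith)
    refine ⟨-t, fun x => ?_⟩
    have := ht (-x)
    simp only [rflct, neg_neg] at this
    linarith

/-! ### Group level -/

lemma hmul_apply (f g : ℝ ≃ₜ ℝ) (x : ℝ) : (f * g) x = f (g x) := rfl

lemma hinv_apply_self (f : ℝ ≃ₜ ℝ) (x : ℝ) : f⁻¹ (f x) = x := f.symm_apply_apply x

lemma happly_inv_self (f : ℝ ≃ₜ ℝ) (x : ℝ) : f (f⁻¹ x) = x := f.apply_symm_apply x

lemma trans_apply (t x : ℝ) : translation t x = x + t := rfl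

lemma trans_inv_apply (t x : ℝ) : (translation t)⁻¹ x = x - t := by
  apply (translation t).injective
  rw [happly_inv_self, trans_apply]; ring

lemma dil_apply (n : ℕ) (hn : 2 ≤ n) (x : ℝ) : dilation n hn x = n * x := rfl

/-- translations lying in `BS(1,n)` -/
noncomputable def transSub (n : ℕ) (hn : 2 ≤ n) : AddSubgroup ℝ where
  carrier := {t | translation t ∈ BSgroup n hn}
  zero_mem' := by
    have : translation 0 = 1 := Homeomorph.ext fun x => by rw [trans_apply, add_zero]; rfl
    simp only [mem_setOf_eq, this]; exact one_mem _
  add_mem' {s t} hs ht := by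
    have : translation (s + t) = translation s * translation t := Homeomorph.ext fun x => by
      simp only [hmul_apply, trans_apply]; ring
    simp only [mem_setOf_eq, this]; exact mul_mem hs ht
  neg_mem' {s} hs := by
    have : translation (-s) = (translation s)⁻¹ := Homeomorph.ext fun x => by
      rw [trans_inv_apply, trans_apply]; ring
    simp only [mem_setOf_eq, this]; exact inv_mem hs

lemma transSub_dense (n : ℕ) (hn : 2 ≤ n) : Dense (transSub n hn : Set ℝ) := by
  have hn0 : (1 : ℝ) < n := by exact_mod_cast (by omega : 1 < n)
  have hpow : ∀ k : ℕ, ((n : ℝ)⁻¹) ^ k ∈ transSub n hn := by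
    intro k
    induction k with
    | zero => exact Subgroup.subset_closure (by simp)
    | succ k ih =>
      have hd : dilation n hn ∈ BSgroup n hn := Subgroup.subset_closure (by simp)
      have : translation (((n : ℝ)⁻¹) ^ (k + 1)) =
          (dilation n hn)⁻¹ * translation (((n : ℝ)⁻¹) ^ k) * dilation n hn :=
        Homeomorph.ext fun x => by
          apply (dilation n hn).injective
          simp only [hmul_apply, happly_inv_self]
          simp only [dil_apply, trans_apply, pow_succ]
          field_simp
      show translation _ ∈ BSgroup n hn
      rw [this]
      exact mul_mem (mul_mem (inv_mem hd) ih) hd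
  refine AddSubgroup.dense_of_not_isolated_zero _ fun ε hε => ?_
  obtain ⟨k, hk⟩ := exists_pow_lt_of_lt_one hε (inv_lt_one_of_one_lt₀ hn0)
  exact ⟨_, hpow k, by positivity, hk⟩

lemma bs_mono (n : ℕ) (hn : 2 ≤ n) (t : ℝ) : StrictMono (translation t) := fun x y hxy => by
  simp only [trans_apply]; linarith

lemma commT_of_commute {f : ℝ ≃ₜ ℝ} {t : ℝ}
    (hc : Commute f (translation t * f * (translation t)⁻¹)) (x : ℝ) :
    f (f (x - t) + t) = f (f x - t) + t := by
  have := DFunLike.congr_fun hc.eq x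
  simpa only [hmul_apply, trans_inv_apply, trans_apply] using this

lemma commT_of_hyp (n : ℕ) (hn : 2 ≤ n) (f : ℝ ≃ₜ ℝ)
    (hK : ∃ K : Set ℝ, IsCompact K ∧
      ∀ u ∈ BSgroup n hn, (u '' K) ∩ K = ∅ → Commute f (u * f * u⁻¹)) :
    ∃ T, 0 < T ∧ CommT f T ∧ ∀ s ∈ transSub n hn, T ≤ |s| →
      Commute f (translation s * f * (translation s)⁻¹) := by
  obtain ⟨K, hKc, hK⟩ := hK
  obtain ⟨R, hR0, hR⟩ := hKc.isBounded.exists_pos_norm_le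
  have key : ∀ s ∈ transSub n hn, 2 * R < |s| →
      Commute f (translation s * f * (translation s)⁻¹) := by
    intro s hs hsR
    apply hK _ hs
    rw [eq_empty_iff_forall_notMem]
    rintro _ ⟨⟨x, hx, rfl⟩, hx2⟩
    have h1 := hR _ hx
    have h2 := hR _ hx2
    rw [trans_apply] at h2
    rw [Real.norm_eq_abs] at h1 h2
    have : |s| ≤ |x + s| + |x| := by
      have := abs_sub (x + s) x
      rwa [add_sub_cancel_left] at this
    linarith
  refine ⟨2 * R + 1, by linarith, ?_, fun s hs hsT => key s hs (by linarith)⟩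
  have hcl : IsClosed {t | ∀ x, f (f (x - t) + t) = f (f x - t) + t} := by
    rw [setOf_forall]
    exact isClosed_iInter fun x => isClosed_eq (by fun_prop) (by fun_prop)
  have hop : IsOpen {s : ℝ | 2 * R < |s|} := isOpen_lt (by fun_prop) (by fun_prop)
  have hsub := ((transSub_dense n hn).open_subset_closure_inter hop).trans
    (closure_minimal (fun s hs => commT_of_commute (key s hs.2 hs.1)) hcl)
  intro t ht
  exact hsub (show 2 * R < |t| by linarith)

lemma compact_of_evt {f : ℝ ≃ₜ ℝ} (h : ∃ R, ∀ x, R < |x| → f x = x) : IsCompact (Supp f) := by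
  obtain ⟨R, hR⟩ := h
  refine IsCompact.of_isClosed_subset (isCompact_Icc (a := -R) (b := R)) isClosed_closure ?_
  refine closure_minimal (fun x hx => ?_) isClosed_Icc
  rw [mem_Icc, ← abs_le]
  by_contra! h1
  exact hx (hR x h1)

lemma commute_of_disjoint (f u : ℝ ≃ₜ ℝ) (hd : (u '' Supp f) ∩ Supp f = ∅) :
    Commute f (u * f * u⁻¹) := by
  have hmem : ∀ x, f x ≠ x → x ∈ Supp f := fun x hx => subset_closure hx
  have hmem' : ∀ x, f x ≠ x → f x ∈ Supp f := fun x hx => subset_closure fun h =>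
    hx (f.injective h)
  have hdis : ∀ x, u⁻¹ x ∈ Supp f → x ∉ Supp f := fun x h1 h2 => by
    have : x ∈ (u '' Supp f) ∩ Supp f := ⟨⟨_, h1, happly_inv_self u x⟩, h2⟩
    rw [hd] at this; exact this
  refine Homeomorph.ext fun x => ?_
  simp only [hmul_apply]
  by_cases hx : f x = x
  · rw [hx]
    by_cases h1 : f (u⁻¹ x) = u⁻¹ x
    · rw [h1, happly_inv_self, hx]
    · by_contra h2
      exact hdis (u (f (u⁻¹ x))) (by rw [hinv_apply_self]; exact hmem' _ h1) (hmem _ h2)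
  · have h1 : f (u⁻¹ x) = u⁻¹ x := by
      by_contra h1
      exact hdis x (hmem _ h1) (hmem _ hx)
    have h2 : f (u⁻¹ (f x)) = u⁻¹ (f x) := by
      by_contra h1
      exact hdis (f x) (hmem _ h1) (hmem' _ hx)
    rw [h1, h2, happly_inv_self, happly_inv_self]

lemma supp_comm (f γ : ℝ ≃ₜ ℝ) (hf : IsCompact (Supp f)) : IsCompact (Supp (f * γ * f⁻¹ * γ⁻¹)) := by
  have hc : IsCompact (Supp f ∪ γ '' Supp f) := hf.union (hf.image γ.continuous)
  refine hc.of_isClosed_subset isClosed_closure (closure_minimal (fun x hx => ?_) hc.isClosed)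
  by_contra hno
  rw [mem_union, not_or] at hno
  apply hx
  have h1 : f x = x := by
    by_contra h; exact hno.1 (subset_closure h)
  have h2 : f (γ⁻¹ x) = γ⁻¹ x := by
    by_contra h; exact hno.2 ⟨_, subset_closure h, happly_inv_self γ x⟩
  have h3 : f⁻¹ (γ⁻¹ x) = γ⁻¹ x := by
    conv_lhs => rw [← h2]
    exact hinv_apply_self _ _
  simp only [hmul_apply]
  rw [h3, happly_inv_self, h1]

lemma inv_mono {f : ℝ ≃ₜ ℝ} (hf : StrictMono f) : StrictMono (f⁻¹ : ℝ ≃ₜ ℝ) := fun x y hxy => by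
  rw [← hf.lt_iff_lt, happly_inv_self, happly_inv_self]; exact hxy

lemma dich_of_hyp (n : ℕ) (hn : 2 ≤ n) (h : ℝ ≃ₜ ℝ) (hm : StrictMono h)
    (hgt : (∀ x, x < h x) ∨ ∀ x, h x < x) {T : ℝ}
    (hcomm : ∀ s ∈ transSub n hn, T ≤ |s| →
      Commute h (translation s * h * (translation s)⁻¹))
    (hγ : ∀ γ ∈ BSgroup n hn, ∃ K' : Set ℝ, IsCompact K' ∧
          ∀ u ∈ BSgroup n hn, (u '' K') ∩ K' = ∅ →
            Commute (h * γ * h⁻¹ * γ⁻¹) (u * (h * γ * h⁻¹ * γ⁻¹) * u⁻¹)) :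
    Dich h T (transSub n hn : Set ℝ) := by
  rintro s hs hsT ⟨x, hx⟩
  obtain ⟨T', hT', hC, -⟩ := commT_of_hyp n hn _ (hγ _ hs)
  set g := h * translation s * h⁻¹ * (translation s)⁻¹ with hg
  have hgm : StrictMono g := ((hm.comp (bs_mono n hn s)).comp (inv_mono hm)).comp
    (inv_mono (bs_mono n hn s))
  have hgapp : ∀ y, g y = h (h⁻¹ (y - s) + s) := fun y => by
    simp only [hg, hmul_apply, trans_inv_apply, trans_apply]
  have hfix : g (h x) = h x := by
    rw [hgapp, show h x - s = h (x - s) by linarith, hinv_apply_self, sub_add_cancel]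
  obtain ⟨R, hR⟩ := fixed_evt g.continuous hgm g.surjective hT' hC hfix
  have hgh : Commute g h := by
    have : g = h * (translation s * h * (translation s)⁻¹)⁻¹ := by rw [hg]; group
    rw [this]
    exact ((Commute.refl h).mul_right (hcomm s hs hsT).inv_right).symm
  have hgh' : Function.Commute g h := fun y => DFunLike.congr_fun hgh.eq y
  have hid : ∀ y, g y = y := by
    intro y
    obtain ⟨m, hmR⟩ := iter_unbdd' h.continuous hgt y R
    have h1 := hR _ hmR
    rw [(hgh'.iterate_right m) y] at h1
    exact (h.injective.iterate m) h1
  intro y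
  have h1 := hid (h (y - s) + s)
  rw [hgapp, add_sub_cancel_right, hinv_apply_self, sub_add_cancel] at h1
  exact h1.symm

theorem compact_support_iff_commutation
    (n : ℕ) (hn : 2 ≤ n) (h : ℝ ≃ₜ ℝ) (hhmono : StrictMono h)
    (hnt : ¬ ∃ t : ℝ, ∀ x : ℝ, h x = x + t) :
    IsCompact (Supp h) ↔
      ((∃ K : Set ℝ, IsCompact K ∧
          ∀ u ∈ BSgroup n hn, (u '' K) ∩ K = ∅ → Commute h (u * h * u⁻¹)) ∧
        ∀ γ ∈ BSgroup n hn, ∃ K' : Set ℝ, IsCompact K' ∧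
          ∀ u ∈ BSgroup n hn, (u '' K') ∩ K' = ∅ →
            Commute (h * γ * h⁻¹ * γ⁻¹) (u * (h * γ * h⁻¹ * γ⁻¹) * u⁻¹)) := by
  constructor
  · intro hf
    exact ⟨⟨Supp h, hf, fun u _ hu => commute_of_disjoint h u hu⟩, fun γ _ =>
      ⟨_, supp_comm h γ hf, fun u _ hu => commute_of_disjoint _ u hu⟩⟩
  · rintro ⟨hK, hγ⟩
    obtain ⟨T, hT, hC, hcomm⟩ := commT_of_hyp n hn h hK
    by_cases hfix : ∃ x0, h x0 = x0
    · obtain ⟨x0, h0⟩ := hfix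
      exact compact_of_evt (fixed_evt h.continuous hhmono h.surjective hT hC h0)
    · exfalso
      have hgt : (∀ x, x < h x) ∨ ∀ x, h x < x := by
        by_contra! hno
        obtain ⟨⟨x, hx⟩, ⟨y, hy⟩⟩ := hno
        have hcont : Continuous (fun x => h x - x) := by fun_prop
        obtain ⟨z, hz⟩ := mem_range_of_exists_le_of_exists_ge hcont (c := 0)
          ⟨x, by linarith⟩ ⟨y, by linarith⟩
        exact hfix ⟨z, by simp only at hz; linarith⟩
      exact hnt (main_fun h.continuous hhmono h.surjective hgt hT hC (transSub_dense n hn)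
        (fun s hs => neg_mem hs) (dich_of_hyp n hn h hhmono hgt hcomm hγ))
end

section
/- Fix an integer n ≥ 2 and a real number t₀ ∈ ℤ[1/n] (i.e. t₀ = p/n^k for some integer p and natural number k). Let h ∈ Homeo₊(ℝ) and set g = h ∘ τ_{t₀} ∘ h⁻¹ ∘ τ_{t₀}⁻¹. Suppose: (i) there exists a compact set K ⊆ ℝ such that h commutes with u ∘ h ∘ u⁻¹ for every u ∈ BS(1,n) with u(K) ∩ K = ∅; (ii) there exists a compact set K' ⊆ ℝ such that g commutes with u ∘ g ∘ u⁻¹ for every u ∈ BS(1,n) with u(K') ∩ K' = ∅; (iii) h commutes with τ_{t₀} ∘ h ∘ τ_{t₀}⁻¹; and (iv) h does not commute with τ_{t₀}. Then g has compact support. -/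
open Set Topology

namespace BSProof

theorem mul_app (f g : ℝ ≃ₜ ℝ) (x : ℝ) : (f * g) x = f (g x) := rfl

theorem one_app (x : ℝ) : (1 : ℝ ≃ₜ ℝ) x = x := rfl

theorem inv_app_self (f : ℝ ≃ₜ ℝ) (x : ℝ) : f⁻¹ (f x) = x := f.symm_apply_apply x

theorem app_inv_self (f : ℝ ≃ₜ ℝ) (x : ℝ) : f (f⁻¹ x) = x := f.apply_symm_apply x

theorem tr_app (t x : ℝ) : translation t x = x + t := rfl

theorem tr_inv_app (t x : ℝ) : (translation t)⁻¹ x = x - t := by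
  apply (translation t).injective
  rw [app_inv_self, tr_app]; ring

theorem commute_iff (f g : ℝ ≃ₜ ℝ) : Commute f g ↔ ∀ x, f (g x) = g (f x) := by
  constructor
  · intro hc x
    rw [← mul_app, ← mul_app, hc.eq]
  · intro hc
    exact Homeomorph.ext hc

theorem tr_add (s t : ℝ) : translation (s + t) = translation s * translation t := by
  apply Homeomorph.ext; intro x
  rw [mul_app, tr_app, tr_app, tr_app]; ring

theorem tr_neg (s : ℝ) : translation (-s) = (translation s)⁻¹ := by
  apply Homeomorph.ext; intro x
  rw [tr_inv_app, tr_app]; ring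

theorem dil_app (n : ℕ) (hn : 2 ≤ n) (x : ℝ) : dilation n hn x = n * x := rfl

theorem dil_pow_app (n : ℕ) (hn : 2 ≤ n) (k : ℕ) (x : ℝ) :
    ((dilation n hn) ^ k) x = (n : ℝ) ^ k * x := by
  induction k generalizing x with
  | zero => rw [pow_zero, pow_zero, one_app, one_mul]
  | succ k ih => rw [pow_succ, mul_app, dil_app, ih, pow_succ]; ring

theorem npos (n : ℕ) (hn : 2 ≤ n) (k : ℕ) : (0 : ℝ) < (n : ℝ) ^ k := by
  have : 0 < n := by omega
  positivity

/-- the affine map `x ↦ n^k x + s` -/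
noncomputable def aff (n : ℕ) (hn : 2 ≤ n) (k : ℕ) (s : ℝ) : ℝ ≃ₜ ℝ :=
  translation s * (dilation n hn) ^ k

theorem aff_app (n : ℕ) (hn : 2 ≤ n) (k : ℕ) (s x : ℝ) :
    aff n hn k s x = (n : ℝ) ^ k * x + s := by
  rw [aff, mul_app, dil_pow_app, tr_app]

theorem aff_inv_app (n : ℕ) (hn : 2 ≤ n) (k : ℕ) (s x : ℝ) :
    (aff n hn k s)⁻¹ x = (x - s) / (n : ℝ) ^ k := by
  apply (aff n hn k s).injective
  have := npos n hn k
  rw [app_inv_self, aff_app]; field_simp; ring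

/-- Commutation hypothesis, for all real translation parts. -/
def P (n : ℕ) (hn : 2 ≤ n) (R : ℝ) (f : ℝ ≃ₜ ℝ) : Prop :=
  ∀ (k : ℕ) (s : ℝ), R * (1 + (n : ℝ) ^ k) < |s| →
    Commute f (aff n hn k s * f * (aff n hn k s)⁻¹)

theorem aff_comm_iff (n : ℕ) (hn : 2 ≤ n) (k : ℕ) (s : ℝ) (f : ℝ ≃ₜ ℝ) :
    Commute f (aff n hn k s * f * (aff n hn k s)⁻¹) ↔
    ∀ x, f ((n : ℝ) ^ k * f ((x - s) / (n : ℝ) ^ k) + s) =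
      (n : ℝ) ^ k * f ((f x - s) / (n : ℝ) ^ k) + s := by
  rw [commute_iff]
  simp only [mul_app, aff_app, aff_inv_app]

theorem P_inv {n : ℕ} {hn : 2 ≤ n} {R : ℝ} {f : ℝ ≃ₜ ℝ} (h : P n hn R f) : P n hn R f⁻¹ := by
  intro k s hs
  have := (h k s hs).inv_inv
  rwa [mul_inv_rev, mul_inv_rev, inv_inv, ← mul_assoc] at this

/-- Conjugation by reflection. -/
noncomputable def refl' (f : ℝ ≃ₜ ℝ) : ℝ ≃ₜ ℝ :=
  Homeomorph.neg ℝ * f * Homeomorph.neg ℝ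

theorem refl_app (f : ℝ ≃ₜ ℝ) (x : ℝ) : refl' f x = - f (-x) := rfl

theorem P_refl {n : ℕ} {hn : 2 ≤ n} {R : ℝ} {f : ℝ ≃ₜ ℝ} (h : P n hn R f) :
    P n hn R (refl' f) := by
  intro k s hs
  rw [aff_comm_iff]
  intro x
  have := (aff_comm_iff n hn k (-s) f).1 (h k (-s) (by rwa [abs_neg])) (-x)
  simp only [refl_app]
  have e1 : -((n : ℝ) ^ k * -f (-((x - s) / (n : ℝ) ^ k)) + s)
      = (n : ℝ) ^ k * f ((-x - -s) / (n : ℝ) ^ k) + -s := by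
    rw [show -((x - s) / (n : ℝ) ^ k) = ((-x - -s) / (n : ℝ) ^ k) by ring]; ring
  rw [e1, this, show -((-f (-x) - s) / (n : ℝ) ^ k) = ((f (-x) - -s) / (n : ℝ) ^ k) by ring]
  ring

theorem P_of (n : ℕ) (hn : 2 ≤ n) (f : ℝ ≃ₜ ℝ) (hK : ∃ K : Set ℝ, IsCompact K ∧
      ∀ u ∈ BSgroup n hn, (u '' K) ∩ K = ∅ → Commute f (u * f * u⁻¹)) :
    ∃ R, 0 ≤ R ∧ P n hn R f := by
  obtain ⟨K, hKc, hK⟩ := hK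
  obtain ⟨R, hR0, hR⟩ : ∃ R, 0 ≤ R ∧ ∀ x ∈ K, |x| ≤ R := by
    obtain ⟨C, hC⟩ := hKc.isBounded.exists_norm_le
    exact ⟨max C 0, le_max_right _ _, fun x hx => (hC x hx).trans (le_max_left _ _)⟩
  refine ⟨R, hR0, ?_⟩
  let S : AddSubgroup ℝ :=
    { carrier := {s | translation s ∈ BSgroup n hn}
      zero_mem' := by
        have : translation 0 = 1 := by
          apply Homeomorph.ext; intro x; rw [tr_app, one_app, add_zero]
        change translation 0 ∈ BSgroup n hn
        rw [this]; exact one_mem _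
      add_mem' := by
        intro a b ha hb
        change translation (a + b) ∈ BSgroup n hn
        rw [tr_add]; exact mul_mem ha hb
      neg_mem' := by
        intro a ha
        change translation (-a) ∈ BSgroup n hn
        rw [tr_neg]; exact inv_mem ha }
  have hdil : dilation n hn ∈ BSgroup n hn := Subgroup.subset_closure (by simp)
  have htr : translation 1 ∈ BSgroup n hn := Subgroup.subset_closure (by simp)
  have hS : Dense (S : Set ℝ) := by
    apply AddSubgroup.dense_of_not_isolated_zero
    intro ε hε
    have hn1 : (1 : ℝ) < n := by exact_mod_cast (by omega : 1 < n)
    obtain ⟨j, hj⟩ := pow_unbounded_of_one_lt (1 / ε) hn1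
    have hp := npos n hn j
    refine ⟨1 / (n : ℝ) ^ j, ?_, ?_, ?_⟩
    · change translation _ ∈ BSgroup n hn
      have : translation (1 / (n : ℝ) ^ j)
          = ((dilation n hn) ^ j)⁻¹ * translation 1 * (dilation n hn) ^ j := by
        apply Homeomorph.ext; intro x
        apply ((dilation n hn) ^ j).injective
        rw [mul_app, mul_app, app_inv_self]
        simp only [tr_app, dil_pow_app]
        field_simp
      rw [this]
      exact mul_mem (mul_mem (inv_mem (pow_mem hdil j)) htr) (pow_mem hdil j)
    · positivity
    · rw [div_lt_iff₀ hp]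
      rw [div_lt_iff₀ hε] at hj
      linarith
  intro k s hs
  rw [aff_comm_iff]
  intro x
  have hp := npos n hn k
  have hc : Continuous f := f.continuous
  have hclosed : IsClosed {s : ℝ | f ((n : ℝ) ^ k * f ((x - s) / (n : ℝ) ^ k) + s) =
      (n : ℝ) ^ k * f ((f x - s) / (n : ℝ) ^ k) + s} := by
    apply isClosed_eq <;> fun_prop
  have hopen : IsOpen {s : ℝ | R * (1 + (n : ℝ) ^ k) < |s|} :=
    isOpen_lt continuous_const continuous_abs
  refine closure_minimal ?_ hclosed (hS.open_subset_closure_inter hopen hs)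
  rintro s ⟨hs, hsS⟩
  refine (aff_comm_iff n hn k s f).1 (hK _ (mul_mem hsS (pow_mem hdil k)) ?_) x
  ext z
  simp only [mem_inter_iff, mem_image, mem_empty_iff_false, iff_false, not_and]
  rintro ⟨y, hy, rfl⟩ hz
  have h1 := hR _ hy
  have h2 := hR _ hz
  change |aff n hn k s y| ≤ R at h2
  rw [aff_app] at h2
  have h3 : |s| ≤ |(n : ℝ) ^ k * y + s| + |(n : ℝ) ^ k * y| := by
    have := abs_sub ((n : ℝ) ^ k * y + s) ((n : ℝ) ^ k * y)
    simpa using this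
  rw [abs_mul, abs_of_pos hp] at h3
  have h4 : (n : ℝ) ^ k * |y| ≤ (n : ℝ) ^ k * R := by gcongr
  have hs' : R * (1 + (n : ℝ) ^ k) < |s| := hs
  nlinarith

/-- Claim D -/
theorem claimD {n : ℕ} {hn : 2 ≤ n} {R : ℝ} {f : ℝ ≃ₜ ℝ} (hR : 0 ≤ R) (h : P n hn R f)
    (hm : StrictMono (fun x => f x - x)) (hpos : ∀ x, x < f x) : False := by
  set ψ : ℝ → ℝ := fun x => f x - x with hψ
  have hf : ∀ x, f x = x + ψ x := by intro x; simp [hψ]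
  have hψc : Continuous ψ := by
    have := f.continuous
    fun_prop
  have hψpos : ∀ x, 0 < ψ x := fun x => sub_pos.2 (hpos x)
  have key : ∀ (k : ℕ) (y : ℝ), R * (1 + (n : ℝ) ^ k) < |(n : ℝ) ^ k * y| →
      (n : ℝ) ^ k * ψ y + ψ ((n : ℝ) ^ k * ψ y) =
        ψ 0 + (n : ℝ) ^ k * ψ (y + ψ 0 / (n : ℝ) ^ k) := by
    intro k y hy
    have hp := npos n hn k
    have := (aff_comm_iff n hn k (-((n : ℝ) ^ k * y)) f).1 (h k _ (by rwa [abs_neg])) 0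
    have e1 : (0 - -((n : ℝ) ^ k * y)) / (n : ℝ) ^ k = y := by field_simp; ring
    have e2 : (f 0 - -((n : ℝ) ^ k * y)) / (n : ℝ) ^ k = y + ψ 0 / (n : ℝ) ^ k := by
      rw [hf 0]; field_simp; ring
    rw [e1, e2, hf y] at this
    have e3 : (n : ℝ) ^ k * (y + ψ y) + -((n : ℝ) ^ k * y) = (n : ℝ) ^ k * ψ y := by ring
    rw [e3, hf, hf (y + _)] at this
    have e4 : (n : ℝ) ^ k * (ψ 0 / (n : ℝ) ^ k) = ψ 0 := by field_simp
    linear_combination this + e4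
  have key1 : ∀ y, 2 * R < y → ψ y + ψ (ψ y) = ψ 0 + ψ (y + ψ 0) := by
    intro y hy
    have := key 0 y (by
      rw [pow_zero, one_mul]
      exact lt_of_lt_of_le (by linarith) (le_abs_self y))
    simpa using this
  -- ψ unbounded
  have htop : Filter.Tendsto ψ Filter.atTop Filter.atTop := by
    rcases tendsto_atTop_of_monotone hm.monotone with h1 | ⟨L, hL⟩
    · exact h1
    · exfalso
      have hge : ∀ x, ψ x ≤ L := fun x => hm.monotone.ge_of_tendsto hL x
      have t1 : Filter.Tendsto (fun y => ψ y + ψ (ψ y)) Filter.atTop (𝓝 (L + ψ L)) :=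
        hL.add ((hψc.tendsto L).comp hL)
      have t2 : Filter.Tendsto (fun y => ψ 0 + ψ (y + ψ 0)) Filter.atTop (𝓝 (ψ 0 + L)) :=
        tendsto_const_nhds.add (hL.comp (Filter.tendsto_atTop_add_const_right _ _ Filter.tendsto_id))
      have t3 : Filter.Tendsto (fun y => ψ 0 + ψ (y + ψ 0)) Filter.atTop (𝓝 (L + ψ L)) := by
        refine t1.congr' ?_
        filter_upwards [Filter.eventually_gt_atTop (2 * R)] with y hy using key1 y hy
      have := tendsto_nhds_unique t2 t3
      have h0 : ψ 0 = ψ L := by linarith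
      have h1 : 0 < L := (hψpos 0).trans_le (hge 0)
      exact absurd (hm h1) (by rw [h0]; exact lt_irrefl _)
  -- linear bound
  set c := ψ (R + 1) with hc
  have hcpos : 0 < c := hψpos _
  set A := ψ 0 + ψ (R + 1 + ψ 0) with hA
  have hApos : 0 < A := add_pos (hψpos _) (hψpos _)
  have hlin : ∀ k : ℕ, R < (n : ℝ) ^ k → ψ ((n : ℝ) ^ k * c) ≤ A * (n : ℝ) ^ k := by
    intro k hk
    have hp := npos n hn k
    have h1 : (1 : ℝ) ≤ (n : ℝ) ^ k := one_le_pow₀ (by exact_mod_cast (by omega : 1 ≤ n))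
    have := key k (R + 1) (by
      rw [abs_of_nonneg (by positivity)]; nlinarith)
    have h2 : ψ (R + 1 + ψ 0 / (n : ℝ) ^ k) ≤ ψ (R + 1 + ψ 0) := by
      apply hm.monotone
      have : ψ 0 / (n : ℝ) ^ k ≤ ψ 0 := div_le_self (hψpos 0).le h1
      linarith
    have h3 : (n : ℝ) ^ k * ψ (R + 1 + ψ 0 / (n : ℝ) ^ k) ≤ (n : ℝ) ^ k * ψ (R + 1 + ψ 0) := by
      gcongr
    have h4 : ψ 0 ≤ ψ 0 * (n : ℝ) ^ k := le_mul_of_one_le_right (hψpos 0).le h1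
    have h5 : 0 < (n : ℝ) ^ k * c := by positivity
    rw [hA]
    nlinarith
  -- superlinear
  set d := ψ 0 with hd
  have hdpos : 0 < d := hψpos 0
  set M := (A + 1) * d / c with hM
  have hMpos : 0 < M := by positivity
  obtain ⟨Y, hY0, hY⟩ : ∃ Y, 0 ≤ Y ∧ ∀ y, Y ≤ y → ψ y + M ≤ ψ (y + d) := by
    have t := (htop.comp htop).eventually_ge_atTop (M + d)
    obtain ⟨Y, hY⟩ := Filter.eventually_atTop.1
      (t.and (Filter.eventually_gt_atTop (2 * R)))
    refine ⟨max Y 0, le_max_right _ _, fun y hy => ?_⟩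
    obtain ⟨h1, h2⟩ := hY y ((le_max_left _ _).trans hy)
    have := key1 y h2
    simp only [Function.comp] at h1
    linarith
  have hsup : ∀ m : ℕ, m * M ≤ ψ (Y + m * d) := by
    intro m
    induction m with
    | zero => simpa using (hψpos Y).le
    | succ m ih =>
      have := hY (Y + m * d) (by have : 0 ≤ m * d := by positivity
                                 linarith)
      push_cast
      rw [show Y + ((m : ℝ) + 1) * d = Y + m * d + d by ring]
      linarith
  have hn1 : (1 : ℝ) < n := by exact_mod_cast (by omega : 1 < n)
  obtain ⟨k, hk⟩ := pow_unbounded_of_one_lt (R + Y / c + (Y + d) * M / d) hn1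
  have hb1 : 0 ≤ Y / c := by positivity
  have hb2 : 0 ≤ (Y + d) * M / d := by positivity
  have hkR : R < (n : ℝ) ^ k := by linarith
  have h1 := hlin k hkR
  have hq : 0 ≤ ((n : ℝ) ^ k * c - Y) / d := by
    apply div_nonneg _ hdpos.le
    have : Y / c < (n : ℝ) ^ k := by linarith
    rw [div_lt_iff₀ hcpos] at this
    linarith
  have h2 := hsup ⌊((n : ℝ) ^ k * c - Y) / d⌋₊
  have h3 := Nat.floor_le hq
  have h4 := Nat.lt_floor_add_one (((n : ℝ) ^ k * c - Y) / d)
  set m : ℝ := (⌊((n : ℝ) ^ k * c - Y) / d⌋₊ : ℝ)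
  rw [le_div_iff₀ hdpos] at h3
  rw [div_lt_iff₀ hdpos] at h4
  have h5 : ψ (Y + m * d) ≤ ψ ((n : ℝ) ^ k * c) := hm.monotone (by linarith)
  have h6 : m * M ≤ A * (n : ℝ) ^ k := by linarith
  have h7 : ((n : ℝ) ^ k * c - Y - d) * M / d ≤ m * M := by
    rw [div_le_iff₀ hdpos]
    nlinarith
  have h8 : ((n : ℝ) ^ k * c - Y - d) * M / d
      = (A + 1) * (n : ℝ) ^ k - (Y + d) * M / d := by
    rw [hM]; field_simp; ring
  linarith

/-- Commutation with large translates. -/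
def Q (R : ℝ) (f : ℝ ≃ₜ ℝ) : Prop :=
  ∀ s : ℝ, R < |s| → Commute f (translation s * f * (translation s)⁻¹)

theorem tr_comm_iff (s : ℝ) (f g : ℝ ≃ₜ ℝ) :
    Commute f (translation s * g * (translation s)⁻¹) ↔
    ∀ x, f (g (x - s) + s) = g (f x - s) + s := by
  rw [commute_iff]
  simp only [mul_app, tr_app, tr_inv_app]

theorem Q_refl {R : ℝ} {f : ℝ ≃ₜ ℝ} (h : Q R f) : Q R (refl' f) := by
  intro s hs
  rw [tr_comm_iff]
  intro x
  have := (tr_comm_iff (-s) f f).1 (h (-s) (by rwa [abs_neg])) (-x)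
  simp only [refl_app]
  rw [show -(-f (-(x - s)) + s) = f (-x - -s) + -s by
    rw [show -(x - s) = -x - -s by ring]; ring, this,
    show -(-f (-x) - s) = f (-x) - -s by ring]
  ring

theorem frontier_iff (f c : ℝ ≃ₜ ℝ) (hc : Commute f c) (x : ℝ) :
    c x ∈ frontier {x | f x = x} ↔ x ∈ frontier {x | f x = x} := by
  have h1 : c ⁻¹' {x | f x = x} = {x | f x = x} := by
    ext y
    simp only [mem_preimage, mem_ofPred_eq]
    rw [(commute_iff f c).1 hc y]
    exact c.injective.eq_iff
  have h2 := c.preimage_frontier {x | f x = x}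
  rw [h1] at h2
  conv_rhs => rw [← h2]
  rfl

theorem fix_closed (f : ℝ ≃ₜ ℝ) : IsClosed {x | f x = x} :=
  isClosed_eq f.continuous continuous_id

theorem claimA_left {R : ℝ} {f : ℝ ≃ₜ ℝ} (hR : 0 ≤ R) (h : Q R f) (a : ℝ)
    (ha : a ∈ frontier {x | f x = x}) : ∀ y, y < a - R → f y = y := by
  set F := frontier {x | f x = x} with hF
  have hfr : ∀ s, R < |s| → ∀ b, f (b - s) + s ∈ F ↔ b ∈ F := by
    intro s hs b
    have := frontier_iff f _ (h s hs) b
    simpa only [mul_app, tr_app, tr_inv_app] using this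
  have habs : ∀ s, R < s → R < |s| := fun s hs => lt_of_lt_of_le hs (le_abs_self s)
  have hcont : Continuous (fun s => f (a - s) + s) := by
    have := f.continuous
    fun_prop
  have hconst : ∀ s ∈ Ioi R, ∀ s' ∈ Ioi R, ¬ (f (a - s) + s < f (a - s') + s') := by
    intro s hs s' hs' hlt
    have hpre : IsPreconnected ((fun s => f (a - s) + s) '' Ioi R) :=
      isPreconnected_Ioi.image _ hcont.continuousOn
    have hsub := hpre.Icc_subset (mem_image_of_mem _ hs) (mem_image_of_mem _ hs')
    have hsubF : (fun s => f (a - s) + s) '' Ioi R ⊆ F := by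
      rintro _ ⟨s, hs, rfl⟩
      exact (hfr s (habs s hs) a).2 ha
    have hint : interior F = ∅ := interior_frontier (fix_closed f)
    have hne : (interior (Icc (f (a - s) + s) (f (a - s') + s'))).Nonempty := by
      rw [interior_Icc]; exact nonempty_Ioo.2 hlt
    have := hne.mono (interior_mono (hsub.trans hsubF))
    rw [hint] at this
    exact Set.not_nonempty_empty this
  obtain ⟨d, hd⟩ : ∃ d, ∀ y, y < a - R → f y = y + d := by
    refine ⟨f (a - (R + 1)) + (R + 1) - a, fun y hy => ?_⟩
    have h1 : R + 1 ∈ Ioi R := by simp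
    have h2 : a - y ∈ Ioi R := by simp only [mem_Ioi]; linarith
    have := le_antisymm (not_lt.1 (hconst _ h1 _ h2)) (not_lt.1 (hconst _ h2 _ h1))
    rw [sub_sub_cancel] at this
    linarith
  have hplus : ∀ b ∈ F, b + d ∈ F ∧ b - d ∈ F := by
    intro b hb
    constructor
    · obtain ⟨s, hs1, hs2⟩ : ∃ s, R < s ∧ b - s < a - R :=
        ⟨max R (b - a + R) + 1, by linarith [le_max_left R (b - a + R)],
          by linarith [le_max_right R (b - a + R)]⟩
      have := (hfr s (habs s hs1) b).2 hb
      rw [hd _ hs2] at this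
      rwa [show b - s + d + s = b + d by ring] at this
    · obtain ⟨s, hs1, hs2⟩ : ∃ s, R < s ∧ (b - d) - s < a - R :=
        ⟨max R (b - d - a + R) + 1, by linarith [le_max_left R (b - d - a + R)],
          by linarith [le_max_right R (b - d - a + R)]⟩
      apply (hfr s (habs s hs1) (b - d)).1
      rw [hd _ hs2]
      rwa [show b - d - s + d + s = b by ring]
  have hk : ∀ k : ℕ, a - k * |d| ∈ F := by
    intro k
    induction k with
    | zero => simpa using ha
    | succ k ih =>
      push_cast
      rcases abs_choice d with e | e
      · have := (hplus _ ih).2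
        rw [e] at this ⊢
        rwa [show a - ((k : ℝ) + 1) * d = a - k * d - d by ring]
      · have := (hplus _ ih).1
        rw [e] at this ⊢
        rwa [show a - ((k : ℝ) + 1) * (-d) = a - k * (-d) + d by ring]
  have hd0 : d = 0 := by
    by_contra hne
    have hpos : 0 < |d| := abs_pos.2 hne
    obtain ⟨k, hk'⟩ := exists_nat_gt (R / |d|)
    rw [div_lt_iff₀ hpos] at hk'
    have h1 : f (a - k * |d|) = a - k * |d| := (fix_closed f).frontier_subset (hk k)
    rw [hd _ (by linarith)] at h1
    apply hne; linarith
  intro y hy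
  rw [hd y hy, hd0, add_zero]

theorem claimA {R : ℝ} {f : ℝ ≃ₜ ℝ} (hR : 0 ≤ R) (h : Q R f) (p : ℝ) (hp : f p = p) :
    ∃ B, ∀ x, B < |x| → f x = x := by
  by_cases hall : ∀ x, f x = x
  · exact ⟨0, fun x _ => hall x⟩
  have hne : (frontier {x | f x = x}).Nonempty := by
    rw [nonempty_frontier_iff]
    refine ⟨⟨p, hp⟩, ?_⟩
    intro he
    exact hall fun x => by
      have : x ∈ {x | f x = x} := by rw [he]; trivial
      exact this
  obtain ⟨a, ha⟩ := hne
  have hl := claimA_left hR h a ha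
  have ha' : -a ∈ frontier {x | refl' f x = x} := by
    have h1 : {x | refl' f x = x} = (Homeomorph.neg ℝ) ⁻¹' {x | f x = x} := by
      ext x
      simp only [mem_ofPred_eq, mem_preimage, refl_app, Homeomorph.coe_neg]
      exact neg_eq_iff_eq_neg
    rw [h1, ← Homeomorph.preimage_frontier]
    simpa using ha
  have hr := claimA_left hR (Q_refl h) (-a) ha'
  refine ⟨|a| + R, fun x hx => ?_⟩
  rcases lt_abs.1 hx with h1 | h1
  · have := hr (-x) (by linarith [neg_abs_le a, le_abs_self a])
    rw [refl_app, neg_neg] at this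
    linarith
  · exact hl x (by linarith [neg_abs_le a, le_abs_self a])

/-- translate of `f` -/
noncomputable def tl (s : ℝ) (f : ℝ ≃ₜ ℝ) : ℝ ≃ₜ ℝ := translation s * f * (translation s)⁻¹

theorem tl_app (s : ℝ) (f : ℝ ≃ₜ ℝ) (x : ℝ) : tl s f x = f (x - s) + s := by
  rw [tl, mul_app, mul_app, tr_app, tr_inv_app]

theorem tl_tl (s r : ℝ) (f : ℝ ≃ₜ ℝ) : tl s (tl r f) = tl (r + s) f := by
  apply Homeomorph.ext; intro x
  simp only [tl_app]
  rw [show x - s - r = x - (r + s) by ring]; ring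

theorem tl_mul (s : ℝ) (f g : ℝ ≃ₜ ℝ) : tl s (f * g) = tl s f * tl s g := by
  simp only [tl]; group

theorem tl_inv (s : ℝ) (f : ℝ ≃ₜ ℝ) : tl s f⁻¹ = (tl s f)⁻¹ := by
  simp only [tl]; group

theorem tl_commute (s : ℝ) {f g : ℝ ≃ₜ ℝ} (h : Commute f g) : Commute (tl s f) (tl s g) := by
  have := congrArg (tl s) h.eq
  rw [tl_mul, tl_mul] at this
  exact this

theorem Q_comm {R : ℝ} {f : ℝ ≃ₜ ℝ} (h : Q R f) (s r : ℝ) (hr : R < |r - s|) :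
    Commute (tl s f) (tl r f) := by
  have := tl_commute s (show Commute f (tl (r - s) f) from h _ hr)
  rwa [tl_tl, sub_add_cancel] at this

theorem tl_zero (f : ℝ ≃ₜ ℝ) : tl 0 f = f := by
  apply Homeomorph.ext; intro x; rw [tl_app]; simp

/-- Claim B: displacement differences vanish nowhere or everywhere. -/
theorem claimB {R : ℝ} {f : ℝ ≃ₜ ℝ} (hR : 0 ≤ R) (h : Q R f) (hmono : StrictMono f)
    (hfree : ∀ x, f x ≠ x) (δ p : ℝ) (hp : f p - p = f (p - δ) - (p - δ)) (x : ℝ) :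
    f x - x = f (x - δ) - (x - δ) := by
  set g := f * (tl δ f)⁻¹ with hg
  have hgfix : ∀ x, g (tl δ f x) = tl δ f x ↔ f x - x = f (x - δ) - (x - δ) := by
    intro x
    rw [hg, mul_app, inv_app_self, tl_app]
    constructor <;> intro h <;> linarith
  have hcomm : ∀ r, R + |δ| < |r| → Commute g (tl r f) := by
    intro r hr
    have h1 : Commute f (tl r f) := by
      have := Q_comm h 0 r (by rw [sub_zero]; linarith [abs_nonneg δ])
      rwa [tl_zero] at this
    have h2 : Commute (tl δ f) (tl r f) := Q_comm h δ r (by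
      linarith [abs_sub_abs_le_abs_sub r δ])
    exact h1.mul_left h2.inv_left
  have hQ : Q (R + 2 * |δ|) g := by
    intro r hr
    have h1 : translation r * g * (translation r)⁻¹ = tl r f * (tl (δ + r) f)⁻¹ := by
      change tl r g = _
      rw [hg, tl_mul, tl_inv, tl_tl]
    rw [h1]
    refine (hcomm r (by linarith [abs_nonneg δ])).mul_right (hcomm (δ + r) ?_).inv_right
    have : |r| ≤ |δ + r| + |δ| := by
      have := abs_sub (δ + r) δ
      simpa using this
    linarith
  obtain ⟨B, hB⟩ := claimA (by positivity) hQ (tl δ f p) ((hgfix p).2 hp)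
  by_contra hx
  have hx' : ¬ g (tl δ f x) = tl δ f x := fun e => hx ((hgfix x).1 e)
  set F := frontier {x | g x = x} with hF
  have hne : F.Nonempty := by
    rw [hF, nonempty_frontier_iff]
    refine ⟨⟨_, (hgfix p).2 hp⟩, ?_⟩
    intro he
    apply hx'
    have : tl δ f x ∈ {x | g x = x} := by rw [he]; trivial
    exact this
  have hbd : F ⊆ Icc (-B) B := by
    have h1 : F ⊆ closure {x | g x = x}ᶜ := by
      rw [hF, frontier_eq_closure_inter_closure]; exact inter_subset_right
    refine h1.trans (closure_minimal ?_ isClosed_Icc)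
    intro y hy
    have : |y| ≤ B := by
      by_contra hlt
      exact hy (hB y (not_le.1 hlt))
    exact abs_le.1 this
  have hbdd : BddAbove F := bddAbove_Icc.mono hbd
  have hmem : sSup F ∈ F := isClosed_frontier.csSup_mem hne hbdd
  obtain ⟨r, hr⟩ : ∃ r, R + |δ| < |r| := ⟨R + |δ| + 1, by
    have := le_abs_self (R + |δ| + 1)
    linarith⟩
  have hfr := frontier_iff g _ (hcomm r hr)
  have hle : tl r f (sSup F) ≤ sSup F := le_csSup hbdd ((hfr _).2 hmem)
  have hN : (tl r f)⁻¹ (sSup F) ∈ F := by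
    apply (hfr _).1
    rwa [app_inv_self]
  have hN' := le_csSup hbdd hN
  have hmono' : Monotone (tl r f) := by
    intro a b hab
    rw [tl_app, tl_app]
    have := hmono.monotone (sub_le_sub_right hab r)
    linarith
  have hge := hmono' hN'
  rw [app_inv_self] at hge
  have heq := le_antisymm hle hge
  rw [tl_app] at heq
  exact hfree (sSup F - r) (by linarith)

/-- Claim C -/
theorem claimC (ψ : ℝ → ℝ) (hc : Continuous ψ)
    (h : ∀ δ p, ψ p = ψ (p - δ) → ∀ x, ψ x = ψ (x - δ)) :
    (∀ x, ψ x = ψ 0) ∨ Function.Injective ψ := by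
  by_contra hcon
  push Not at hcon
  obtain ⟨⟨x₀, hx₀⟩, hinj⟩ := hcon
  have hinj' : ∃ q : ℝ, 0 < q ∧ ∀ x, ψ x = ψ (x - q) := by
    simp only [Function.Injective, not_forall] at hinj
    obtain ⟨a, b, hab, hne⟩ := hinj
    rcases lt_or_gt_of_ne hne with hlt | hlt
    · exact ⟨b - a, by linarith, h _ b (by rw [sub_sub_cancel, hab])⟩
    · exact ⟨a - b, by linarith, h _ a (by rw [sub_sub_cancel, hab])⟩
  obtain ⟨q, hq, hper⟩ := hinj'
  have half : ∀ q, (∀ x, ψ x = ψ (x - q)) → ∀ x, ψ x = ψ (x - q / 2) := by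
    intro q hper
    have hcont : Continuous (fun x => ψ x - ψ (x - q / 2)) := by fun_prop
    have e : ψ (q / 2 - q / 2 - q / 2 + q / 2 + q/2) = ψ (-(q/2)) := by
      rw [hper]; ring_nf
    have e1 : ψ (0 - q / 2) = ψ (q / 2) := by rw [hper (q / 2)]; ring_nf
    have e2 : ψ (q / 2 - q / 2) = ψ 0 := by ring_nf
    have hz : (0 : ℝ) ∈ uIcc (ψ 0 - ψ (0 - q / 2)) (ψ (q / 2) - ψ (q / 2 - q / 2)) := by
      rw [e1, e2, mem_uIcc]
      rcases le_total (ψ 0) (ψ (q / 2)) with h1 | h1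
      · left; constructor <;> linarith
      · right; constructor <;> linarith
    obtain ⟨p, -, hp⟩ := intermediate_value_uIcc (a := 0) (b := q / 2) hcont.continuousOn hz
    exact h _ p (sub_eq_zero.1 hp)
  have hpow : ∀ k : ℕ, ∀ x, ψ x = ψ (x - q / 2 ^ k) := by
    intro k
    induction k with
    | zero => simpa using hper
    | succ k ih =>
      have := half _ ih
      rwa [div_div, ← pow_succ] at this
  let S : AddSubgroup ℝ :=
    { carrier := {s | ∀ x, ψ x = ψ (x - s)}
      zero_mem' := by intro x; simp
      add_mem' := by
        intro a b ha hb x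
        rw [ha x, hb (x - a), sub_sub]
      neg_mem' := by
        intro a ha x
        rw [ha (x - -a)]; ring_nf }
  have hS : Dense (S : Set ℝ) := by
    apply AddSubgroup.dense_of_not_isolated_zero
    intro ε hε
    obtain ⟨k, hk⟩ := pow_unbounded_of_one_lt (q / ε) (one_lt_two : (1 : ℝ) < 2)
    refine ⟨q / 2 ^ k, hpow k, by positivity, ?_⟩
    rw [div_lt_iff₀ (by positivity)]
    rw [div_lt_iff₀ hε] at hk
    linarith
  have : ψ = fun _ => ψ 0 := by
    apply hc.ext_on hS continuous_const
    intro s hs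
    have := hs s
    rwa [sub_self] at this
  exact hx₀ (congrFun this x₀)

/-- Everywhere one sign. -/
theorem sign_of_free (f : ℝ ≃ₜ ℝ) (hfree : ∀ x, f x ≠ x) :
    (∀ x, x < f x) ∨ (∀ x, f x < x) := by
  by_contra hcon
  push Not at hcon
  obtain ⟨⟨a, ha⟩, ⟨b, hb⟩⟩ := hcon
  have hcont : Continuous (fun x => f x - x) := by
    have := f.continuous
    fun_prop
  have hz : (0 : ℝ) ∈ uIcc (f a - a) (f b - b) := by
    rw [mem_uIcc]; left; constructor <;> linarith
  obtain ⟨p, -, hp⟩ := intermediate_value_uIcc (a := a) (b := b) hcont.continuousOn hz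
  exact hfree p (sub_eq_zero.1 hp)

theorem claimD' {n : ℕ} {hn : 2 ≤ n} {R : ℝ} {f : ℝ ≃ₜ ℝ} (hR : 0 ≤ R) (h : P n hn R f)
    (hm : StrictMono (fun x => f x - x)) (hfree : ∀ x, f x ≠ x) : False := by
  rcases sign_of_free f hfree with hs | hs
  · exact claimD hR h hm hs
  · refine claimD hR (P_refl h) ?_ ?_
    · intro x y hxy
      have := hm (neg_lt_neg hxy)
      simp only [refl_app] at this ⊢
      linarith
    · intro x
      rw [refl_app]
      linarith [hs (-x)]

theorem claimE {n : ℕ} {hn : 2 ≤ n} {R : ℝ} {f : ℝ ≃ₜ ℝ} (hR : 0 ≤ R) (h : P n hn R f)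
    (hmono : StrictMono f)
    (hm : Function.Injective (fun x => f x - x)) (hfree : ∀ x, f x ≠ x) : False := by
  have hcont : Continuous (fun x => f x - x) := by
    have := f.continuous
    fun_prop
  rcases hcont.strictMono_of_inj hm with h1 | h1
  · exact claimD' hR h h1 hfree
  · refine claimD' hR (P_inv h) ?_ ?_
    · intro x y hxy
      have hlt : f⁻¹ x < f⁻¹ y := by
        rw [← hmono.lt_iff_lt, app_inv_self, app_inv_self]; exact hxy
      have := h1 hlt
      simp only [app_inv_self] at this
      change f⁻¹ x - x < f⁻¹ y - y
      linarith
    · intro x hx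
      apply hfree x
      conv_lhs => rw [← hx]
      rw [app_inv_self]

theorem P_Q {n : ℕ} {hn : 2 ≤ n} {R : ℝ} {f : ℝ ≃ₜ ℝ} (h : P n hn R f) : Q (2 * R) f := by
  intro s hs
  have := h 0 s (by rw [pow_zero]; linarith)
  simpa [aff] using this

end BSProof

open BSProof

theorem commutator_with_translation_compact_support
    (n : ℕ) (hn : 2 ≤ n) (t₀ : ℝ)
    (ht₀ : ∃ (p : ℤ) (k : ℕ), t₀ = (p : ℝ) / (n : ℝ) ^ k)
    (h : ℝ ≃ₜ ℝ) (hhmono : StrictMono h)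
    (hK : ∃ K : Set ℝ, IsCompact K ∧
      ∀ u ∈ BSgroup n hn, (u '' K) ∩ K = ∅ → Commute h (u * h * u⁻¹))
    (hK' : ∃ K' : Set ℝ, IsCompact K' ∧
      ∀ u ∈ BSgroup n hn, (u '' K') ∩ K' = ∅ →
        Commute (h * translation t₀ * h⁻¹ * (translation t₀)⁻¹)
          (u * (h * translation t₀ * h⁻¹ * (translation t₀)⁻¹) * u⁻¹))
    (hcomm : Commute h (translation t₀ * h * (translation t₀)⁻¹))
    (hnc : ¬ Commute h (translation t₀)) :
    IsCompact (Supp (h * translation t₀ * h⁻¹ * (translation t₀)⁻¹)) := by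
  obtain ⟨R, hR, hP⟩ := P_of n hn h hK
  have hQ := P_Q hP
  by_cases hfree : ∀ x, h x ≠ x
  · exfalso
    have hcont : Continuous (fun x => h x - x) := by
      have := h.continuous
      fun_prop
    rcases claimC (fun x => h x - x) hcont (fun δ p hp x =>
      claimB (by positivity) hQ hhmono hfree δ p hp x) with h1 | h1
    · apply hnc
      rw [commute_iff]
      intro x
      rw [tr_app, tr_app]
      have a1 := h1 (x + t₀)
      have a2 := h1 x
      beta_reduce at a1 a2
      linarith
    · exact claimE hR hP hhmono h1 hfree
  · push Not at hfree
    obtain ⟨p, hp⟩ := hfree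
    obtain ⟨B, hB⟩ := claimA (by positivity) hQ p hp
    have hsub : Supp (h * translation t₀ * h⁻¹ * (translation t₀)⁻¹) ⊆
        Icc (-(B + |t₀|)) (B + |t₀|) := by
      refine closure_minimal ?_ isClosed_Icc
      intro x hx
      refine abs_le.1 ?_
      by_contra hlt
      rw [not_le] at hlt
      apply hx
      simp only [mul_app, tr_app, tr_inv_app]
      have h1 : h (x - t₀) = x - t₀ := hB _ (by linarith [abs_sub_abs_le_abs_sub x t₀])
      have h2 : h⁻¹ (x - t₀) = x - t₀ := by
        conv_lhs => rw [← h1]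
        exact inv_app_self h _
      rw [h2, sub_add_cancel]
      exact hB x (by linarith [abs_nonneg t₀])
    exact isCompact_Icc.of_isClosed_subset isClosed_closure hsub
end

section
/- Fix an integer n ≥ 2, a real number α ∈ (0,1], and a real number μ > 0 such that log μ / log n is irrational. Let Γ_A be the subgroup of Homeo₊(ℝ) generated by a(x) = n·x, b(x) = x + 1, and m(x) = μ·x. Let φ be a group homomorphism from Γ_A into the group of self-homeomorphisms of [0,1] such that for every γ ∈ Γ_A, φ(γ) is an orientation-preserving C^{1+α} diffeomorphism of [0,1]. Suppose there exists a homeomorphism f from the open interval (0,1) onto ℝ such that f(φ(γ)(x)) = γ(f(x)) for every γ ∈ Γ_A and every x ∈ (0,1). Then f is of class C^{1+α} on (0,1): f is continuously differentiable on (0,1) with nowhere-vanishing derivative, and the derivative of f is α-Hölder continuous on a neighborhood of every point of (0,1). -/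
open Set Topology

/-- The homeomorphism `x ↦ μ·x` of `ℝ`. -/
noncomputable def homothety (μ : ℝ) (hμ : μ ≠ 0) : ℝ ≃ₜ ℝ := Homeomorph.mulLeft₀ μ hμ

/-- The affine group `Γ_A` generated by `x ↦ n·x`, `x ↦ x + 1` and `x ↦ μ·x`. -/
noncomputable def GammaA (n : ℕ) (hn : 2 ≤ n) (μ : ℝ) (hμ : μ ≠ 0) :
    Subgroup (ℝ ≃ₜ ℝ) :=
  Subgroup.closure {dilation n hn, translation 1, homothety μ hμ}

/-- The closed unit interval `[0,1]` as a subset of `ℝ`. -/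
abbrev unitI : Set ℝ := Set.Icc 0 1

/-- A self-homeomorphism of `[0,1]`, as a self-map of `ℝ` (extended by the identity). -/
noncomputable def asMap (g : ↥unitI ≃ₜ ↥unitI) : ℝ → ℝ :=
  fun x => if hx : x ∈ unitI then (g ⟨x, hx⟩ : ℝ) else x

/-- `g` is an orientation-preserving `C^{1+α}` diffeomorphism of `[0,1]`: it is strictly
increasing, continuously differentiable on `[0,1]` with nowhere-vanishing derivative,
and its derivative is `α`-Hölder continuous on `[0,1]`. -/
def IsOPC1HolderDiffeo (α : ℝ) (g : ↥unitI ≃ₜ ↥unitI) : Prop :=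
  StrictMonoOn (asMap g) unitI ∧
  ∃ g' : ℝ → ℝ,
    (∀ x ∈ unitI, HasDerivWithinAt (asMap g) (g' x) unitI x) ∧
    ContinuousOn g' unitI ∧
    (∀ x ∈ unitI, g' x ≠ 0) ∧
    ∃ C : ℝ, 0 ≤ C ∧ ∀ x ∈ unitI, ∀ y ∈ unitI, |g' x - g' y| ≤ C * |x - y| ^ α

open Filter

lemma deriv_lower {g : ℝ → ℝ} {v x c : ℝ} (h : HasDerivAt g v x) (hc : c < |v|) :
    ∀ᶠ y in 𝓝 x, c * |y - x| ≤ |g y - g x| := by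
  have h1 := (hasDerivAt_iff_isLittleO.1 h)
  have h2 := h1.def (sub_pos.2 hc)
  filter_upwards [h2] with y hy
  simp only [Real.norm_eq_abs, smul_eq_mul] at hy
  have h3 : |(y - x) * v| = |y - x| * |v| := abs_mul _ _
  have h4 : |(y - x) * v| - |g y - g x| ≤ |(y - x) * v - (g y - g x)| := abs_sub_abs_le_abs_sub _ _
  rw [abs_sub_comm ((y - x) * v)] at h4
  nlinarith

/-- The end inequality after the logarithmic change of coordinate. -/
lemma end_ineq {G G' : ℝ → ℝ} {d : ℝ} (hd : 0 < d) (hG0 : G 0 = 0)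
    (hder0 : HasDerivWithinAt G d (Icc 0 1) 0)
    (hder : ∀ x ∈ Ioo (0:ℝ) 1, HasDerivAt G (G' x) x)
    (hG' : Tendsto G' (𝓝[>] 0) (𝓝 d))
    (hmap : MapsTo G (Ioo 0 1) (Ioo 0 1)) {η : ℝ} (hη : η < 1) :
    ∃ δ > 0, δ < 1 ∧ ∀ x y, 0 < x → x ≤ y → y < δ →
      η * ((Real.log x)⁻¹ - (Real.log y)⁻¹) ≤ (Real.log (G x))⁻¹ - (Real.log (G y))⁻¹ := by
  have hI : Ioo (0:ℝ) 1 ∈ 𝓝[>] (0:ℝ) := Ioo_mem_nhdsGT one_pos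
  have hratio : Tendsto (fun x => G x / x) (𝓝[>] 0) (𝓝 d) := by
    have h1 := (hasDerivWithinAt_iff_tendsto_slope.1 hder0)
    have h2 : Tendsto (slope G 0) (𝓝[>] 0) (𝓝 d) := by
      refine h1.mono_left ?_
      refine nhdsWithin_le_of_mem ?_
      filter_upwards [hI] with x hx
      exact ⟨⟨hx.1.le, hx.2.le⟩, hx.1.ne'⟩
    refine h2.congr ?_
    intro x
    simp [slope_def_field, hG0]
  have hlog : Tendsto Real.log (𝓝[>] 0) atBot := Real.tendsto_log_nhdsGT_zero
  have hlr : Tendsto (fun x => Real.log (G x) / Real.log x) (𝓝[>] 0) (𝓝 1) := by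
    have h1 : Tendsto (fun x => Real.log (G x / x) * (Real.log x)⁻¹ + 1) (𝓝[>] 0) (𝓝 (Real.log d * 0 + 1)) :=
      ((hratio.log hd.ne').mul (hlog.inv_tendsto_atBot)).add_const 1
    simp only [mul_zero, zero_add] at h1
    refine h1.congr' ?_
    filter_upwards [hI] with x hx
    have h2 : Real.log x < 0 := Real.log_neg hx.1 hx.2
    rw [Real.log_div (hmap hx).1.ne' hx.1.ne']
    field_simp [h2.ne]
    ring
  have hR : Tendsto (fun x => (G x / x)⁻¹ * G' x * ((Real.log (G x) / Real.log x)⁻¹)^2) (𝓝[>] 0)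
      (𝓝 1) := by
    have := ((hratio.inv₀ hd.ne').mul hG').mul ((hlr.inv₀ one_ne_zero).pow 2)
    convert this using 2
    field_simp
  have hev := (hR.eventually_const_lt hη)
  obtain ⟨δ', hδ', hsub⟩ := mem_nhdsGT_iff_exists_Ioo_subset.1 hev
  have hδ'0 : (0:ℝ) < δ' := hδ'
  refine ⟨min δ' (1/2), lt_min hδ'0 (by norm_num), lt_of_le_of_lt (min_le_right _ _) (by norm_num), ?_⟩
  set δ := min δ' (1/2) with hδdef
  have hsubI : ∀ x ∈ Ioo 0 δ, x ∈ Ioo (0:ℝ) 1 := fun x hx =>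
    ⟨hx.1, hx.2.trans_le ((min_le_right _ _).trans (by norm_num))⟩
  have hd1 : ∀ x ∈ Ioo 0 δ, HasDerivAt (fun x => η * (Real.log x)⁻¹ - (Real.log (G x))⁻¹)
      (η * (-(x⁻¹) / (Real.log x)^2) - (-(G' x / G x) / (Real.log (G x))^2)) x := by
    intro x hx
    have hx1 := hsubI x hx
    have hGx := hmap hx1
    have a1 := (Real.hasDerivAt_log hx.1.ne').inv (Real.log_neg hx1.1 hx1.2).ne
    have a2 := ((hder x hx1).log hGx.1.ne').inv (Real.log_neg hGx.1 hGx.2).ne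
    exact (a1.const_mul η).sub a2
  have hmono : MonotoneOn (fun x => η * (Real.log x)⁻¹ - (Real.log (G x))⁻¹) (Ioo 0 δ) := by
    refine monotoneOn_of_hasDerivWithinAt_nonneg (convex_Ioo _ _)
      (fun x hx => (hd1 x hx).continuousAt.continuousWithinAt)
      (fun x hx => (hd1 x (interior_subset hx)).hasDerivWithinAt) ?_
    intro x hx
    replace hx := interior_subset hx
    have hx1 := hsubI x hx
    have hGx := hmap hx1
    have l1 := (Real.log_neg hx1.1 hx1.2)
    have l2 := (Real.log_neg hGx.1 hGx.2)
    have h3 : η < (G x / x)⁻¹ * G' x * ((Real.log (G x) / Real.log x)⁻¹)^2 :=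
      hsub ⟨hx.1, hx.2.trans_le (min_le_left _ _)⟩
    have h4 : 0 < x⁻¹ / (Real.log x)^2 := div_pos (inv_pos.2 hx.1) (sq_pos_of_neg l1)
    have h5 : η * (-(x⁻¹) / (Real.log x)^2) - (-(G' x / G x) / (Real.log (G x))^2)
      = (x⁻¹ / (Real.log x)^2) * ((G x / x)⁻¹ * G' x * ((Real.log (G x) / Real.log x)⁻¹)^2 - η) := by
      have := l1.ne
      have := l2.ne
      have := hx.1.ne'
      have := hGx.1.ne'
      field_simp
      ring
    rw [h5]
    exact mul_nonneg h4.le (by linarith)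
  intro x y hx hxy hy
  have := hmono ⟨hx, hxy.trans_lt hy⟩ ⟨hx.trans_le hxy, hy⟩ hxy
  simp only at this
  linarith

/-- The counting argument. -/
lemma counting {W : ℝ → ℝ} {n : ℕ} (hn : 2 ≤ n) {N η : ℝ} (hN : 0 ≤ N) (hη : 0 < η) (hη1 : η ≤ 1)
    (hanti : ∀ s t, N ≤ s → s ≤ t → W t ≤ W s)
    (ha : ∀ s t, N ≤ s → s ≤ t → η * (W s - W t) ≤ W (n * s) - W (n * t))
    (hb : ∀ s t, N ≤ s → s ≤ t → η * (W s - W t) ≤ W (s + 1) - W (t + 1)) (k : ℕ) :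
    ∀ s h, N ≤ s → 0 ≤ h → (n:ℝ) ^ k * h ≤ n →
      (2 * η ^ 2) ^ k * (W s - W (s + h)) ≤ W (n ^ k * s) - W (n ^ k * s + n ^ (k + 1)) := by
  have hn' : (2:ℝ) ≤ n := by exact_mod_cast hn
  induction k with
  | zero =>
    intro s h hs hh hk
    simp at hk ⊢
    have := hanti (s + h) (s + n) (by linarith) (by linarith)
    linarith
  | succ k ih =>
    intro s h hs hh hk
    have hpow : 0 < (n:ℝ)^k := by positivity
    have hns : s ≤ n * s := by nlinarith
    have hk' : (n:ℝ)^k * (n * h) ≤ n := by rw [pow_succ] at hk; linarith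
    have i1 := ih (n * s) (n * h) (by linarith) (by positivity) hk'
    have i2 := ih (n * (s + 1)) (n * h) (by nlinarith) (by positivity) hk'
    have b1 := ha s (s + h) hs (by linarith)
    have b2 := hb s (s + h) hs (by linarith)
    have b3 := ha (s + 1) (s + h + 1) (by linarith) (by linarith)
    have e1 : (n:ℝ) * (s + h) = n * s + n * h := by ring
    have e2 : (n:ℝ) * (s + h + 1) = n * (s + 1) + n * h := by ring
    rw [e1] at b1
    rw [e2] at b3
    have hD : 0 ≤ W s - W (s + h) := sub_nonneg.2 (hanti _ _ hs (by linarith))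
    have hθ : 0 < (2 * η ^ 2) ^ k := by positivity
    have key : 2 * η ^ 2 * (W s - W (s + h)) ≤ (W (n * s) - W (n * s + n * h)) +
        (W (n * (s + 1)) - W (n * (s + 1) + n * h)) := by
      have c1 := mul_le_mul_of_nonneg_left b2 hη.le
      have c2 := mul_nonneg (mul_nonneg hη.le (sub_nonneg.2 hη1)) hD
      nlinarith
    have key2 := mul_le_mul_of_nonneg_left key hθ.le
    have hP : (0:ℝ) ≤ n ^ (k + 1) := by positivity
    have hS : N ≤ (n:ℝ) ^ k * (n * s) := by
      have : (1:ℝ) ≤ n ^ k := one_le_pow₀ (by linarith)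
      nlinarith
    have j1 : W ((n:ℝ) ^ k * (n * (s + 1))) = W ((n:ℝ) ^ k * (n * s) + n ^ (k + 1)) := by
      congr 1; ring
    have j2 : W ((n:ℝ) ^ k * (n * s) + n ^ (k + 1 + 1)) ≤
        W ((n:ℝ) ^ k * (n * (s + 1)) + n ^ (k + 1)) := by
      apply hanti
      · nlinarith
      · have : (n:ℝ) ^ (k + 1 + 1) = n * n ^ (k + 1) := by ring
        have : (n:ℝ) ^ k * (n * (s + 1)) = n ^ k * (n * s) + n ^ (k + 1) := by ring
        nlinarith
    have j3 : (n:ℝ) ^ (k + 1) * s = n ^ k * (n * s) := by ring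
    rw [j3, pow_succ]
    nlinarith

/-- An increasing `C^{1+α}` diffeomorphism of the unit interval, in concrete terms. -/
structure GoodMap (α : ℝ) (g g' : ℝ → ℝ) : Prop where
  der : ∀ x ∈ Icc (0:ℝ) 1, HasDerivWithinAt g (g' x) (Icc 0 1) x
  cont : ContinuousOn g' (Icc 0 1)
  pos : ∀ x ∈ Icc (0:ℝ) 1, 0 < g' x
  hold : ∃ C : ℝ, 0 ≤ C ∧ ∀ x ∈ Icc (0:ℝ) 1, ∀ y ∈ Icc (0:ℝ) 1, |g' x - g' y| ≤ C * |x - y| ^ α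
  maps : MapsTo g (Ioo 0 1) (Ioo 0 1)
  zero : g 0 = 0
  one : g 1 = 1

lemma GoodMap.derAt {α : ℝ} {g g' : ℝ → ℝ} (h : GoodMap α g g') {x : ℝ} (hx : x ∈ Ioo (0:ℝ) 1) :
    HasDerivAt g (g' x) x :=
  (h.der x (Ioo_subset_Icc_self hx)).hasDerivAt (Icc_mem_nhds hx.1 hx.2)

lemma GoodMap.reflect {α : ℝ} {g g' : ℝ → ℝ} (h : GoodMap α g g') :
    GoodMap α (fun x => 1 - g (1 - x)) (fun x => g' (1 - x)) := by
  have hm : MapsTo (fun x : ℝ => 1 - x) (Icc 0 1) (Icc 0 1) := fun x hx =>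
    ⟨by linarith [hx.2], by linarith [hx.1]⟩
  refine ⟨?_, ?_, ?_, ?_, ?_, ?_, ?_⟩
  · intro x hx
    have h1 : HasDerivWithinAt (fun x : ℝ => 1 - x) (-1) (Icc 0 1) x :=
      ((hasDerivAt_id x).const_sub 1).hasDerivWithinAt
    have h2 := (h.der (1 - x) (hm hx)).comp x h1 hm
    have h3 := h2.const_sub 1
    have h4 : g' (1 - x) = -(g' (1 - x) * -1) := by ring
    show HasDerivWithinAt _ (g' (1 - x)) _ _
    rw [h4]
    exact h3
  · exact h.cont.comp (by fun_prop) hm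
  · intro x hx; exact h.pos _ (hm hx)
  · obtain ⟨C, hC, hh⟩ := h.hold
    refine ⟨C, hC, fun x hx y hy => ?_⟩
    have := hh _ (hm hx) _ (hm hy)
    have e : |1 - x - (1 - y)| = |x - y| := by rw [abs_sub_comm x y]; congr 1; linarith
    rwa [e] at this
  · intro x hx
    have := h.maps (show 1 - x ∈ Ioo (0:ℝ) 1 from ⟨by linarith [hx.2], by linarith [hx.1]⟩)
    exact ⟨by linarith [this.2], by linarith [this.1]⟩
  · simp [h.one]
  · simp [h.zero]

lemma GoodMap.endI {α : ℝ} {g g' : ℝ → ℝ} (h : GoodMap α g g') {η : ℝ} (hη : η < 1) :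
    ∃ δ > 0, δ < 1 ∧ ∀ x y, 0 < x → x ≤ y → y < δ →
      η * ((Real.log x)⁻¹ - (Real.log y)⁻¹) ≤ (Real.log (g x))⁻¹ - (Real.log (g y))⁻¹ := by
  have h0 : (0:ℝ) ∈ Icc (0:ℝ) 1 := ⟨le_rfl, zero_le_one⟩
  refine end_ineq (h.pos 0 h0) h.zero (h.der 0 h0) (fun x hx => h.derAt hx) ?_ h.maps hη
  refine (h.cont 0 h0).mono_left (nhdsWithin_le_of_mem ?_)
  filter_upwards [Ioo_mem_nhdsGT (one_pos : (0:ℝ) < 1)] with x hx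
  exact ⟨hx.1.le, hx.2.le⟩

lemma hyperbolic {α : ℝ} {n : ℕ} (hn : 2 ≤ n) {e : ℝ → ℝ} (hanti : StrictAnti e)
    (he : ∀ t, e t ∈ Ioo (0:ℝ) 1) (hcont : Continuous e) (hlim : Tendsto e atTop (𝓝 0))
    {A A' B B' p p' : ℝ → ℝ} (gA : GoodMap α A A') (gB : GoodMap α B B') (gp : GoodMap α p p')
    (hA : ∀ t, A (e t) = e (n * t)) (hB : ∀ t, B (e t) = e (t + 1))
    (hp : ∀ t, p (e t) = e (t / n))
    (hN : ∀ N : ℕ, ∃ G : ℝ → ℝ, ∃ v, HasDerivAt G v (e 0) ∧ v ≠ 0 ∧ ∀ t, G (e t) = e (t + N)) :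
    p' (e 0) < 1 := by
  by_contra hcon
  push Not at hcon
  have hn' : (2:ℝ) ≤ n := by exact_mod_cast hn
  have hn0 : (0:ℝ) < n := by linarith
  set η : ℝ := 9/10 with hη
  obtain ⟨δ₁, hδ₁, hδ₁1, h1⟩ := gA.endI (show η < 1 by norm_num [hη])
  obtain ⟨δ₂, hδ₂, hδ₂1, h2⟩ := gB.endI (show η < 1 by norm_num [hη])
  obtain ⟨T, hT⟩ := (hlim.eventually_lt_const (lt_min hδ₁ hδ₂)).exists_forall_of_atTop
  obtain ⟨N, hNT⟩ := exists_nat_ge T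
  have hsm : ∀ s : ℝ, (N:ℝ) ≤ s → e s < δ₁ ∧ e s < δ₂ := fun s hs =>
    lt_min_iff.1 (hT s (hNT.trans hs))
  set W : ℝ → ℝ := fun s => -(Real.log (e s))⁻¹ with hW
  have hWnn : ∀ s, 0 ≤ W s := fun s => by
    have := Real.log_neg (he s).1 (he s).2
    simp only [hW]
    have := inv_lt_zero.2 this
    linarith
  have hWanti : ∀ s t, s ≤ t → W t ≤ W s := by
    intro s t hst
    have h3 := Real.log_le_log (he t).1 (hanti.antitone hst)
    have h4 := Real.log_neg (he s).1 (he s).2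
    have h5 := Real.log_neg (he t).1 (he t).2
    simp only [hW]
    rw [neg_le_neg_iff]
    exact (inv_le_inv_of_neg h4 h5).2 h3
  have hcount := fun k => counting (W := W) hn (N := N) (η := η) (by positivity) (by norm_num [hη])
    (by norm_num [hη]) (fun s t _ hst => hWanti s t hst)
    (by
      intro s t hs hst
      have := h1 (e t) (e s) (he t).1 (hanti.antitone hst) (hsm s hs).1
      rw [hA, hA] at this
      simp only [hW]
      linarith)
    (by
      intro s t hs hst
      have := h2 (e t) (e s) (he t).1 (hanti.antitone hst) (hsm s hs).2
      rw [hB, hB] at this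
      simp only [hW]
      linarith) k N ((n:ℝ)⁻¹ ^ k) le_rfl (by positivity)
      (by rw [← mul_pow, mul_inv_cancel₀ hn0.ne', one_pow]; linarith)
  have hup : ∀ k : ℕ, (2 * η ^ 2) ^ k * (W N - W (N + (n:ℝ)⁻¹ ^ k)) ≤ W N := by
    intro k
    refine (hcount k).trans ?_
    have := hWnn ((n:ℝ) ^ k * N + n ^ (k + 1))
    have h3 : W ((n:ℝ) ^ k * N) ≤ W N := hWanti _ _ (by
      have : (1:ℝ) ≤ n ^ k := one_le_pow₀ (by linarith)
      nlinarith [(Nat.cast_nonneg N : (0:ℝ) ≤ N)])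
    linarith
  -- smooth change near `e 0`
  obtain ⟨G, v, hGd, hv, hGe⟩ := hN N
  have hGN : G (e 0) = e N := by rw [hGe, zero_add]
  have hΨ : HasDerivAt (fun y => (Real.log (G y))⁻¹) (-(v / G (e 0)) / (Real.log (G (e 0)))^2) (e 0) := by
    refine (hGd.log ?_).inv ?_
    · rw [hGN]; exact (he _).1.ne'
    · rw [hGN]; exact (Real.log_neg (he _).1 (he _).2).ne
  have hvne : (-(v / G (e 0)) / (Real.log (G (e 0)))^2) ≠ 0 := by
    rw [hGN]
    exact div_ne_zero (neg_ne_zero.2 (div_ne_zero hv (he _).1.ne'))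
      (pow_ne_zero _ (Real.log_neg (he _).1 (he _).2).ne)
  set w := (-(v / G (e 0)) / (Real.log (G (e 0)))^2)
  have hwpos : 0 < |w| := abs_pos.2 hvne
  have ev1 := deriv_lower hΨ (half_lt_self hwpos)
  have ev2 := deriv_lower (c := η) (gp.derAt (he 0)) (by
    rw [abs_of_pos (by linarith)]; norm_num [hη]; linarith)
  have htend : Tendsto (fun k : ℕ => e ((n:ℝ)⁻¹ ^ k)) atTop (𝓝 (e 0)) :=
    (hcont.tendsto 0).comp (tendsto_pow_atTop_nhds_zero_of_lt_one (by positivity)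
      (inv_lt_one_of_one_lt₀ (by linarith)))
  obtain ⟨K, hK⟩ := (htend.eventually (ev1.and ev2)).exists_forall_of_atTop
  have hp0 : p (e 0) = e 0 := by rw [hp, zero_div]
  have hdec : ∀ j : ℕ, η ^ j * |e ((n:ℝ)⁻¹ ^ K) - e 0| ≤ |e ((n:ℝ)⁻¹ ^ (K + j)) - e 0| := by
    intro j
    induction j with
    | zero => simp
    | succ j ih =>
      have h3 := (hK (K + j) (by omega)).2
      rw [hp, hp0] at h3
      have h4 : (n:ℝ)⁻¹ ^ (K + j) / n = (n:ℝ)⁻¹ ^ (K + (j + 1)) := by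
        rw [← add_assoc, pow_succ, div_eq_mul_inv]
      rw [h4] at h3
      refine le_trans ?_ h3
      rw [pow_succ]
      have : (0:ℝ) ≤ η := by norm_num [hη]
      nlinarith
  have hlow : ∀ j : ℕ, (|w| / 2) * (η ^ j * |e ((n:ℝ)⁻¹ ^ K) - e 0|) ≤ W N - W (N + (n:ℝ)⁻¹ ^ (K + j)) := by
    intro j
    have h3 := (hK (K + j) (by omega)).1
    rw [hGe, hGe] at h3
    simp only [zero_add] at h3
    have h4 := hWanti N (N + (n:ℝ)⁻¹ ^ (K + j)) (by simp)
    have h5 : (Real.log (e ((n:ℝ)⁻¹ ^ (K + j) + N)))⁻¹ - (Real.log (e N))⁻¹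
      = W N - W (N + (n:ℝ)⁻¹ ^ (K + j)) := by
      simp only [hW]; rw [add_comm]; ring
    rw [h5, abs_of_nonneg (sub_nonneg.2 h4)] at h3
    refine le_trans ?_ h3
    have := hdec j
    gcongr
  have hc0 : 0 < |e ((n:ℝ)⁻¹ ^ K) - e 0| := by
    refine abs_pos.2 (sub_ne_zero.2 fun h => ?_)
    have : (0:ℝ) < (n:ℝ)⁻¹ ^ K := by positivity
    exact this.ne' (hanti.injective h)
  set c := (2 * η ^ 2) ^ K * (|w| / 2) * |e ((n:ℝ)⁻¹ ^ K) - e 0| with hc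
  have hη0 : 0 < η := by norm_num [hη]
  have hcpos : 0 < c := by positivity
  have hfin : ∀ j : ℕ, c * (2 * η ^ 3) ^ j ≤ W N := by
    intro j
    refine le_trans ?_ (hup (K + j))
    have h3 := mul_le_mul_of_nonneg_left (hlow j) (show 0 ≤ (2 * η ^ 2) ^ (K + j) by positivity)
    refine le_trans (le_of_eq ?_) h3
    have h4 : (2 * η ^ 3) ^ j = (2 * η ^ 2) ^ j * η ^ j := by rw [← mul_pow]; congr 1; ring
    rw [hc, h4, pow_add]; ring
  have hinf : Tendsto (fun j : ℕ => c * (2 * η ^ 3) ^ j) atTop atTop :=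
    (tendsto_pow_atTop_atTop_of_one_lt (by norm_num [hη])).const_mul_atTop hcpos
  obtain ⟨j, hj⟩ := (hinf.eventually_gt_atTop (W N)).exists
  exact absurd (hfin j) (not_le.2 hj)

lemma log_sub_le {a b m : ℝ} (hm : 0 < m) (ha : m ≤ a) (hb : m ≤ b) :
    |Real.log a - Real.log b| ≤ |a - b| / m := by
  have key : ∀ a b : ℝ, m ≤ a → m ≤ b → Real.log a - Real.log b ≤ |a - b| / m := by
    intro a b ha hb
    have ha0 : 0 < a := hm.trans_le ha
    have hb0 : 0 < b := hm.trans_le hb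
    rw [← Real.log_div ha0.ne' hb0.ne']
    have h1 := Real.log_le_sub_one_of_pos (div_pos ha0 hb0)
    have h2 : a / b - 1 = (a - b) / b := by field_simp
    have h3 : (a - b) / b ≤ |a - b| / b := by gcongr; exact le_abs_self _
    have h4 : |a - b| / b ≤ |a - b| / m := by gcongr
    linarith
  rw [abs_le]
  have h1 := key a b ha hb
  have h2 := key b a hb ha
  rw [abs_sub_comm b a] at h2
  constructor <;> linarith

lemma exp_sub_le {x y M : ℝ} (hx : x ≤ M) (hy : y ≤ M) :
    |Real.exp x - Real.exp y| ≤ Real.exp M * |x - y| := by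
  have key : ∀ x y : ℝ, x ≤ M → Real.exp x - Real.exp y ≤ Real.exp M * |x - y| := by
    intro x y hx
    have h1 := Real.add_one_le_exp (y - x)
    have h2 : Real.exp y = Real.exp x * Real.exp (y - x) := by rw [← Real.exp_add]; congr 1; ring
    have h3 := Real.exp_pos x
    have h4 : Real.exp x ≤ Real.exp M := Real.exp_le_exp.2 hx
    have h5 := le_abs_self (x - y)
    have h6 := abs_nonneg (x - y)
    nlinarith
  rw [abs_le]
  have h1 := key x y hx
  have h2 := key y x hy
  rw [abs_sub_comm y x] at h2
  constructor <;> linarith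

lemma linearize {α : ℝ} (hα : 0 < α) {p p' : ℝ → ℝ} (gp : GoodMap α p p') {x0 : ℝ}
    (hx0 : x0 ∈ Ioo (0:ℝ) 1) (hfix : p x0 = x0) (hlt : p' x0 < 1) :
    ∃ δ > 0, ∃ h q : ℝ → ℝ, Metric.ball x0 δ ⊆ Ioo 0 1 ∧
      (∀ x ∈ Metric.ball x0 δ, HasDerivAt h (q x) x ∧ 0 < q x ∧ p x ∈ Metric.ball x0 δ ∧
        h (p x) = p' x0 * h x) ∧ h x0 = 0 ∧ StrictMonoOn h (Metric.ball x0 δ) ∧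
      ∃ C, 0 ≤ C ∧ ∀ x ∈ Metric.ball x0 δ, ∀ y ∈ Metric.ball x0 δ, |q x - q y| ≤ C * |x - y| ^ α := by
  set l := p' x0 with hl
  have hl0 : 0 < l := gp.pos x0 (Ioo_subset_Icc_self hx0)
  obtain ⟨κ, hκ1, hκ2⟩ := exists_between hlt
  have hκ0 : 0 < κ := hl0.trans hκ1
  have hcat : ContinuousAt p' x0 := gp.cont.continuousAt (Icc_mem_nhds hx0.1 hx0.2)
  have hev : ∀ᶠ x in 𝓝 x0, x ∈ Ioo (0:ℝ) 1 ∧ l / 2 < p' x ∧ p' x < κ :=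
    (show ∀ᶠ x in 𝓝 x0, x ∈ Ioo (0:ℝ) 1 from isOpen_Ioo.mem_nhds hx0).and
      ((hcat.eventually_const_lt (half_lt_self hl0)).and (hcat.eventually_lt_const hκ1))
  obtain ⟨δ, hδ, hball⟩ := Metric.eventually_nhds_iff_ball.1 hev
  obtain ⟨C0, hC0, hhold⟩ := gp.hold
  set U := Metric.ball x0 δ with hU
  have hUI : U ⊆ Ioo 0 1 := fun x hx => (hball x hx).1
  have hx0U : x0 ∈ U := Metric.mem_ball_self hδ
  have hcontr : ∀ x ∈ U, ∀ y ∈ U, |p x - p y| ≤ κ * |x - y| := by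
    intro x hx y hy
    have := (convex_ball x0 δ).norm_image_sub_le_of_norm_hasDerivWithin_le (f := p) (f' := p') (C := κ)
      (fun z hz => (gp.derAt (hUI hz)).hasDerivWithinAt)
      (fun z hz => by
        rw [Real.norm_eq_abs, abs_of_pos (gp.pos z (Ioo_subset_Icc_self (hUI hz)))]
        exact (hball z hz).2.2.le) hy hx
    simpa using this
  have hpU : MapsTo p U U := by
    intro x hx
    have h1 := hcontr x hx x0 hx0U
    rw [hfix] at h1
    have h2 : |x - x0| < δ := hx
    show |p x - x0| < δ
    have := abs_nonneg (x - x0)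
    nlinarith
  have hitU : ∀ i : ℕ, MapsTo (p^[i]) U U := fun i => hpU.iterate i
  have hit : ∀ (i : ℕ), ∀ x ∈ U, ∀ y ∈ U, |p^[i] x - p^[i] y| ≤ κ ^ i * |x - y| := by
    intro i
    induction i with
    | zero => intro x _ y _; simp
    | succ i ih =>
      intro x hx y hy
      rw [Function.iterate_succ_apply', Function.iterate_succ_apply']
      have h1 := hcontr _ (hitU i hx) _ (hitU i hy)
      have h2 := ih x hx y hy
      rw [pow_succ]
      nlinarith
  set L : ℝ → ℝ := fun x => Real.log (p' x) - Real.log l with hL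
  set C1 := C0 / (l / 2) with hC1
  have hC1' : 0 ≤ C1 := by positivity
  have hLh : ∀ x ∈ U, ∀ y ∈ U, |L x - L y| ≤ C1 * |x - y| ^ α := by
    intro x hx y hy
    have h1 := log_sub_le (half_pos hl0) (hball x hx).2.1.le (hball y hy).2.1.le
    have h2 := hhold x (Ioo_subset_Icc_self (hUI hx)) y (Ioo_subset_Icc_self (hUI hy))
    have h3 : L x - L y = Real.log (p' x) - Real.log (p' y) := by simp only [hL]; ring
    rw [h3]
    refine h1.trans ?_
    rw [hC1, div_mul_eq_mul_div]
    gcongr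
  set r := κ ^ α with hr
  have hr0 : 0 < r := Real.rpow_pos_of_pos hκ0 _
  have hr1 : r < 1 := Real.rpow_lt_one hκ0.le hκ2 hα
  have hLit : ∀ (i : ℕ), ∀ x ∈ U, ∀ y ∈ U, |L (p^[i] x) - L (p^[i] y)| ≤ C1 * |x - y| ^ α * r ^ i := by
    intro i x hx y hy
    refine (hLh _ (hitU i hx) _ (hitU i hy)).trans ?_
    have h1 : |p^[i] x - p^[i] y| ^ α ≤ (κ ^ i * |x - y|) ^ α :=
      Real.rpow_le_rpow (abs_nonneg _) (hit i x hx y hy) hα.le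
    rw [Real.mul_rpow (by positivity) (abs_nonneg _), ← Real.rpow_pow_comm hκ0.le] at h1
    calc C1 * |p^[i] x - p^[i] y| ^ α ≤ C1 * (r ^ i * |x - y| ^ α) := by gcongr
      _ = _ := by ring
  have hgeo : Summable (fun i : ℕ => r ^ i) := summable_geometric_of_lt_one hr0.le hr1
  have hitx0 : ∀ i : ℕ, p^[i] x0 = x0 := fun i => Function.iterate_fixed hfix i
  have hLx0 : L x0 = 0 := by simp [hL, hl]
  have hsum : ∀ x ∈ U, Summable (fun i : ℕ => L (p^[i] x)) := by
    intro x hx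
    refine Summable.of_norm_bounded (hgeo.mul_left (C1 * |x - x0| ^ α)) ?_
    intro i
    have := hLit i x hx x0 hx0U
    rw [hitx0, hLx0, sub_zero] at this
    exact this
  set ψ : ℝ → ℝ := fun x => ∑' i : ℕ, L (p^[i] x) with hψ
  set C2 := C1 * (1 - r)⁻¹ with hC2
  have hC2' : 0 ≤ C2 := mul_nonneg hC1' (inv_nonneg.2 (by linarith))
  have hψh : ∀ x ∈ U, ∀ y ∈ U, |ψ x - ψ y| ≤ C2 * |x - y| ^ α := by
    intro x hx y hy
    have h1 : ψ x - ψ y = ∑' i : ℕ, (L (p^[i] x) - L (p^[i] y)) :=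
      ((hsum x hx).tsum_sub (hsum y hy)).symm
    rw [h1]
    have h2 := tsum_of_norm_bounded (f := fun i : ℕ => (L (p^[i] x) - L (p^[i] y)))
      ((hasSum_geometric_of_lt_one hr0.le hr1).mul_left (C1 * |x - y| ^ α)) (fun i => hLit i x hx y hy)
    rw [Real.norm_eq_abs] at h2
    refine h2.trans (le_of_eq ?_)
    rw [hC2]; ring
  have hψx0 : ψ x0 = 0 := by simp [hψ, hitx0, hLx0]
  have hψrec : ∀ x ∈ U, ψ x = L x + ψ (p x) := by
    intro x hx
    have := (hsum x hx).tsum_eq_zero_add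
    simpa [hψ, Function.iterate_succ_apply] using this
  set M := C2 * δ ^ α with hM
  have hψM : ∀ x ∈ U, ψ x ≤ M := by
    intro x hx
    have h1 := hψh x hx x0 hx0U
    rw [hψx0, sub_zero] at h1
    refine (le_abs_self _).trans (h1.trans ?_)
    have : |x - x0| < δ := hx
    rw [hM]
    gcongr
  set q : ℝ → ℝ := fun x => Real.exp (ψ x) with hq
  set C := Real.exp M * C2 with hC
  have hqh : ∀ x ∈ U, ∀ y ∈ U, |q x - q y| ≤ C * |x - y| ^ α := by
    intro x hx y hy
    refine (exp_sub_le (hψM x hx) (hψM y hy)).trans ?_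
    rw [hC, mul_assoc]
    gcongr
    exact hψh x hx y hy
  have hqc : ContinuousOn q U := by
    intro x hx
    rw [ContinuousWithinAt, tendsto_iff_dist_tendsto_zero]
    have h1 : Tendsto (fun y => C * |y - x| ^ α) (𝓝[U] x) (𝓝 0) := by
      have h2 : ContinuousAt (fun y => C * |y - x| ^ α) x := by
        refine continuousAt_const.mul (ContinuousAt.rpow_const (by fun_prop) (Or.inr hα.le))
      have h3 := h2.tendsto.mono_left (nhdsWithin_le_nhds (s := U))
      simpa [Real.zero_rpow hα.ne'] using h3
    refine squeeze_zero' (Eventually.of_forall fun _ => dist_nonneg) ?_ h1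
    filter_upwards [self_mem_nhdsWithin] with y hy
    exact hqh y hy x hx
  set h : ℝ → ℝ := fun x => ∫ t in x0..x, q t with hh
  have hder : ∀ x ∈ U, HasDerivAt h (q x) x := by
    intro x hx
    refine intervalIntegral.integral_hasDerivAt_right ?_ ?_ ?_
    · refine (hqc.mono ?_).intervalIntegrable
      exact (convex_ball x0 δ).ordConnected.uIcc_subset hx0U hx
    · exact hqc.stronglyMeasurableAtFilter Metric.isOpen_ball x hx
    · exact hqc.continuousAt (Metric.isOpen_ball.mem_nhds hx)
  have hhx0 : h x0 = 0 := by simp [hh]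
  have hqpos : ∀ x, 0 < q x := fun x => Real.exp_pos _
  have hrel : ∀ x ∈ U, h (p x) = l * h x := by
    intro x hx
    have hd : ∀ y ∈ U, HasDerivAt (fun y => h (p y) - l * h y) 0 y := by
      intro y hy
      have h1 := ((hder _ (hpU hy)).comp y (gp.derAt (hUI hy))).sub ((hder y hy).const_mul l)
      have h2 : q (p y) * p' y - l * q y = 0 := by
        have h3 : 0 < p' y := gp.pos y (Ioo_subset_Icc_self (hUI hy))
        have h4 : q y = Real.exp (L y) * q (p y) := by
          simp only [hq]; rw [hψrec y hy, Real.exp_add]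
        have h5 : Real.exp (L y) = p' y / l := by
          simp only [hL]; rw [Real.exp_sub, Real.exp_log h3, Real.exp_log hl0]
        rw [h4, h5]; field_simp; ring
      rw [h2] at h1
      exact h1
    have := Metric.isOpen_ball.is_const_of_deriv_eq_zero (convex_ball x0 δ).isPreconnected
      (fun y hy => (hd y hy).differentiableAt.differentiableWithinAt)
      (fun y hy => (hd y hy).deriv) hx hx0U
    simp only [hfix, hhx0] at this
    linarith
  refine ⟨δ, hδ, h, q, hUI, fun x hx => ⟨hder x hx, hqpos x, hpU hx, hrel x hx⟩, hhx0, ?_, C, by positivity, hqh⟩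
  refine strictMonoOn_of_deriv_pos (convex_ball x0 δ)
    (fun x hx => (hder x hx).continuousAt.continuousWithinAt) ?_
  intro x hx
  rw [(hder x (interior_subset hx)).deriv]
  exact hqpos x

/-- Quasi-periodic functions on a half line are constant. -/
lemma quasi_const {E : ℝ → ℝ} {s0 a β κ : ℝ} (ha : 0 < a) (hβ : 0 < β) (hirr : Irrational (β / a))
    (hc : ContinuousOn E (Iio s0)) (h1 : ∀ s < s0, E (s - a) = E s)
    (h2 : ∀ s < s0, E (s - β) = E s + κ) : ∀ s < s0, ∀ s' < s0, E s = E s' := by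
  have h1n : ∀ k : ℕ, ∀ s < s0, E (s - k * a) = E s := by
    intro k
    induction k with
    | zero => intro s _; simp
    | succ k ih =>
      intro s hs
      have : (0:ℝ) ≤ k * a := by positivity
      rw [← ih s hs, ← h1 (s - k * a) (by linarith)]
      congr 1; push_cast; ring
  have h2n : ∀ k : ℕ, ∀ s < s0, E (s - k * β) = E s + k * κ := by
    intro k
    induction k with
    | zero => intro s _; simp
    | succ k ih =>
      intro s hs
      have : (0:ℝ) ≤ k * β := by positivity
      have h3 := h2 (s - k * β) (by linarith)
      rw [ih s hs] at h3
      push_cast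
      rw [show s - (k + 1) * β = s - k * β - β by ring, h3]; ring
  have hκ : κ = 0 := by
    set s1 := s0 - 1 with hs1
    have hs1' : s1 < s0 := by linarith
    obtain ⟨M, hM⟩ := (isCompact_Icc (a := s1 - a) (b := s1)).exists_bound_of_continuousOn
      (hc.mono (fun x hx => lt_of_le_of_lt hx.2 hs1'))
    have hbd : ∀ s ≤ s1, |E s| ≤ M := by
      intro s hs
      set k := ⌊(s1 - s) / a⌋₊ with hk
      have hk1 : (k:ℝ) ≤ (s1 - s) / a := Nat.floor_le (div_nonneg (by linarith) ha.le)
      have hk2 : (s1 - s) / a < k + 1 := Nat.lt_floor_add_one _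
      rw [le_div_iff₀ ha] at hk1
      rw [div_lt_iff₀ ha] at hk2
      have h3 := h1n k (s + k * a) (by linarith)
      rw [add_sub_cancel_right] at h3
      rw [h3]
      exact hM _ ⟨by linarith, by linarith⟩
    by_contra hne
    have hκ' : 0 < |κ| := abs_pos.2 hne
    obtain ⟨k, hk⟩ := exists_nat_gt (2 * M / |κ|)
    rw [div_lt_iff₀ hκ'] at hk
    have h3 := h2n k s1 hs1'
    have h4 := hbd s1 le_rfl
    have h5 := hbd (s1 - k * β) (by have : (0:ℝ) ≤ k * β := by positivity
                                    linarith)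
    have h6 : (k:ℝ) * κ = E (s1 - k * β) - E s1 := by linarith
    have h7 : (k:ℝ) * |κ| = |E (s1 - k * β) - E s1| := by
      rw [← h6, abs_mul, Nat.abs_cast]
    have h8 := abs_sub (E (s1 - k * β)) (E s1)
    linarith
  subst hκ
  simp only [mul_zero, add_zero] at h2n
  intro s hs s' hs'
  have hdense := dense_addSubgroupClosure_pair_iff.2 hirr
  have hsh : ∀ g ∈ AddSubgroup.closure ({β, a} : Set ℝ), s + g < s0 → E (s + g) = E s := by
    intro g hg hlt
    obtain ⟨i, j, rfl⟩ := AddSubgroup.mem_closure_pair.1 hg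
    simp only [zsmul_eq_mul] at hlt ⊢
    set N := i.natAbs + j.natAbs with hN
    obtain ⟨i', hi'⟩ := Int.eq_ofNat_of_zero_le (show 0 ≤ (N:ℤ) - i by omega)
    obtain ⟨j', hj'⟩ := Int.eq_ofNat_of_zero_le (show 0 ≤ (N:ℤ) - j by omega)
    have e1 : (N:ℝ) - i = i' := by exact_mod_cast hi'
    have e2 : (N:ℝ) - j = j' := by exact_mod_cast hj'
    have p1 : (0:ℝ) ≤ N * β := by positivity
    have p2 : (0:ℝ) ≤ i' * β := by positivity
    rw [← h2n N _ hlt, ← h1n N (s + (i * β + j * a) - N * β) (by linarith), ← h2n i' s hs,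
      ← h1n j' (s - i' * β) (by linarith)]
    congr 1
    rw [← e1, ← e2]; ring
  by_contra hne
  have hcs : ContinuousAt E s' := hc.continuousAt (Iio_mem_nhds hs')
  have hev : ∀ᶠ x in 𝓝 s', E x ≠ E s ∧ x < s0 :=
    (hcs.eventually_ne (Ne.symm hne)).and (Iio_mem_nhds hs')
  obtain ⟨ε, hε, hb⟩ := Metric.eventually_nhds_iff_ball.1 hev
  obtain ⟨g, hg, hd⟩ := hdense.exists_dist_lt (s' - s) hε
  have hmem : s + g ∈ Metric.ball s' ε := by
    rw [Metric.mem_ball, Real.dist_eq]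
    rw [Real.dist_eq, abs_sub_comm] at hd
    rwa [show s + g - s' = g - (s' - s) by ring]
  exact (hb _ hmem).1 (hsh g hg (hb _ hmem).2)

/-- Local Hölder continuity at a point. -/
def LH (α : ℝ) (F : ℝ → ℝ) (x : ℝ) : Prop :=
  ∃ ε > 0, ∃ C, 0 ≤ C ∧ ∀ y z, |y - x| < ε → |z - x| < ε → |F y - F z| ≤ C * |y - z| ^ α

/-- `f` is of class `C^{1+α}` with nonvanishing derivative near `x`. -/
def NiceAt (α : ℝ) (f : ℝ → ℝ) (x : ℝ) : Prop :=
  (∀ᶠ y in 𝓝 x, DifferentiableAt ℝ f y ∧ deriv f y ≠ 0) ∧ LH α (deriv f) x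

lemma LH.congr {α : ℝ} {F G : ℝ → ℝ} {x : ℝ} (h : LH α F x) (hFG : F =ᶠ[𝓝 x] G) : LH α G x := by
  obtain ⟨ε, hε, C, hC, hh⟩ := h
  obtain ⟨ε', hε', h'⟩ := Metric.eventually_nhds_iff_ball.1 hFG
  refine ⟨min ε ε', lt_min hε hε', C, hC, fun y z hy hz => ?_⟩
  rw [lt_min_iff] at hy hz
  rw [← h' y hy.2, ← h' z hz.2]
  exact hh y z hy.1 hz.1

lemma LH.mul {α : ℝ} (hα : 0 < α) {F G : ℝ → ℝ} {x : ℝ} (hF : LH α F x) (hG : LH α G x) :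
    LH α (fun y => F y * G y) x := by
  obtain ⟨ε₁, hε₁, C₁, hC₁, h₁⟩ := hF
  obtain ⟨ε₂, hε₂, C₂, hC₂, h₂⟩ := hG
  set M₁ := |F x| + C₁ * ε₁ ^ α
  set M₂ := |G x| + C₂ * ε₂ ^ α
  have b1 : ∀ y, |y - x| < ε₁ → |F y| ≤ M₁ := by
    intro y hy
    have h3 := h₁ y x hy (by simpa using hε₁)
    have h4 : C₁ * |y - x| ^ α ≤ C₁ * ε₁ ^ α := by gcongr
    have h5 := abs_sub_abs_le_abs_sub (F y) (F x)
    show |F y| ≤ |F x| + C₁ * ε₁ ^ α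
    linarith
  have b2 : ∀ y, |y - x| < ε₂ → |G y| ≤ M₂ := by
    intro y hy
    have h3 := h₂ y x hy (by simpa using hε₂)
    have h4 : C₂ * |y - x| ^ α ≤ C₂ * ε₂ ^ α := by gcongr
    have h5 := abs_sub_abs_le_abs_sub (G y) (G x)
    show |G y| ≤ |G x| + C₂ * ε₂ ^ α
    linarith
  have hM₁ : 0 ≤ M₁ := by positivity
  have hM₂ : 0 ≤ M₂ := by positivity
  refine ⟨min ε₁ ε₂, lt_min hε₁ hε₂, M₁ * C₂ + M₂ * C₁, by positivity, fun y z hy hz => ?_⟩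
  rw [lt_min_iff] at hy hz
  have e : F y * G y - F z * G z = F y * (G y - G z) + G z * (F y - F z) := by ring
  rw [e]
  calc |F y * (G y - G z) + G z * (F y - F z)| ≤ |F y| * |G y - G z| + |G z| * |F y - F z| := by
        rw [← abs_mul, ← abs_mul]; exact abs_add_le _ _
    _ ≤ M₁ * (C₂ * |y - z| ^ α) + M₂ * (C₁ * |y - z| ^ α) := by
        gcongr
        · exact b1 y hy.1
        · exact h₂ y z hy.2 hz.2
        · exact b2 z hz.2
        · exact h₁ y z hy.1 hz.1
    _ = _ := by ring

lemma LH.const {α : ℝ} (c x : ℝ) : LH α (fun _ => c) x :=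
  ⟨1, one_pos, 0, le_rfl, fun y z _ _ => by simp⟩

lemma locLip {F F' : ℝ → ℝ} {x : ℝ} (hd : ∀ᶠ y in 𝓝 x, HasDerivAt F (F' y) y)
    (hc : ContinuousAt F' x) :
    ∃ ε > 0, ∃ K, 0 ≤ K ∧ ∀ y z, |y - x| < ε → |z - x| < ε → |F y - F z| ≤ K * |y - z| := by
  have hb : ∀ᶠ y in 𝓝 x, |F' y| < |F' x| + 1 := hc.abs.eventually_lt_const (by linarith)
  obtain ⟨ε, hε, h⟩ := Metric.eventually_nhds_iff_ball.1 (hd.and hb)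
  refine ⟨ε, hε, |F' x| + 1, by positivity, fun y z hy hz => ?_⟩
  have := (convex_ball x ε).norm_image_sub_le_of_norm_hasDerivWithin_le (f := F) (f' := F')
    (C := |F' x| + 1) (fun w hw => (h w hw).1.hasDerivWithinAt)
    (fun w hw => (h w hw).2.le) (show z ∈ Metric.ball x ε from hz) (show y ∈ Metric.ball x ε from hy)
  simpa using this

lemma LH.of_deriv {α : ℝ} (hα : α ≤ 1) {F F' : ℝ → ℝ} {x : ℝ}
    (hd : ∀ᶠ y in 𝓝 x, HasDerivAt F (F' y) y) (hc : ContinuousAt F' x) : LH α F x := by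
  obtain ⟨ε, hε, K, hK, h⟩ := locLip hd hc
  refine ⟨min ε (1/2), lt_min hε (by norm_num), K, hK, fun y z hy hz => ?_⟩
  rw [lt_min_iff] at hy hz
  refine (h y z hy.1 hz.1).trans ?_
  have h1 : |y - z| ≤ 1 := by
    have := abs_sub_le y x z
    rw [abs_sub_comm x z] at this
    linarith
  gcongr
  rcases (abs_nonneg (y - z)).eq_or_lt with h0 | h0
  · rw [← h0]; exact Real.rpow_nonneg le_rfl _
  · conv_lhs => rw [← Real.rpow_one |y - z|]
    exact Real.rpow_le_rpow_of_exponent_ge h0 h1 hα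

lemma LH.comp {α : ℝ} (hα : 0 < α) {F g g' : ℝ → ℝ} {x : ℝ} (hF : LH α F (g x))
    (hd : ∀ᶠ y in 𝓝 x, HasDerivAt g (g' y) y) (hc : ContinuousAt g' x) :
    LH α (fun y => F (g y)) x := by
  obtain ⟨ε, hε, K, hK, h⟩ := locLip hd hc
  obtain ⟨ε₁, hε₁, C, hC, h₁⟩ := hF
  have hcont : ContinuousAt g x := (hd.self_of_nhds).continuousAt
  obtain ⟨ε₂, hε₂, h₂⟩ := Metric.continuousAt_iff.1 hcont ε₁ hε₁
  refine ⟨min ε ε₂, lt_min hε hε₂, C * K ^ α, by positivity, fun y z hy hz => ?_⟩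
  rw [lt_min_iff] at hy hz
  refine (h₁ _ _ (h₂ hy.2) (h₂ hz.2)).trans ?_
  rw [mul_assoc, ← Real.mul_rpow hK (abs_nonneg _)]
  gcongr
  exact h y z hy.1 hz.1

lemma LH.continuousAt {α : ℝ} (hα : 0 < α) {F : ℝ → ℝ} {x : ℝ} (hF : LH α F x) :
    ContinuousAt F x := by
  obtain ⟨ε, hε, C, hC, h⟩ := hF
  rw [ContinuousAt, tendsto_iff_dist_tendsto_zero]
  have h1 : Tendsto (fun y => C * |y - x| ^ α) (𝓝 x) (𝓝 0) := by
    have h2 : ContinuousAt (fun y => C * |y - x| ^ α) x :=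
      continuousAt_const.mul (ContinuousAt.rpow_const (by fun_prop) (Or.inr hα.le))
    simpa [ContinuousAt, Real.zero_rpow hα.ne'] using h2
  refine squeeze_zero' (Eventually.of_forall fun _ => dist_nonneg) ?_ h1
  filter_upwards [Metric.ball_mem_nhds x hε] with y hy
  exact h y x hy (by simpa using hε)

lemma GoodMap.lh {α : ℝ} {g g' : ℝ → ℝ} (h : GoodMap α g g') {x : ℝ} (hx : x ∈ Ioo (0:ℝ) 1) :
    LH α g' x := by
  obtain ⟨C, hC, hh⟩ := h.hold
  obtain ⟨ε, hε, hb⟩ := Metric.isOpen_iff.1 isOpen_Ioo x hx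
  exact ⟨ε, hε, C, hC, fun y z hy hz =>
    hh y (Ioo_subset_Icc_self (hb hy)) z (Ioo_subset_Icc_self (hb hz))⟩

lemma NiceAt.transport {α : ℝ} (hα : 0 < α) {f g g' : ℝ → ℝ} (gg : GoodMap α g g') {x r s : ℝ}
    (hx : x ∈ Ioo (0:ℝ) 1) (hr : r ≠ 0) (hfg : ∀ y ∈ Ioo (0:ℝ) 1, f (g y) = r * f y + s)
    (h : NiceAt α f (g x)) : NiceAt α f x := by
  have hI : ∀ᶠ y in 𝓝 x, y ∈ Ioo (0:ℝ) 1 := isOpen_Ioo.mem_nhds hx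
  have hgd : ∀ᶠ y in 𝓝 x, HasDerivAt g (g' y) y := hI.mono fun y hy => gg.derAt hy
  have hgc : ContinuousAt g' x := gg.cont.continuousAt (Icc_mem_nhds hx.1 hx.2)
  have hev := (gg.derAt hx).continuousAt.eventually h.1
  have hder : ∀ᶠ y in 𝓝 x, HasDerivAt f (r⁻¹ * (deriv f (g y) * g' y)) y := by
    filter_upwards [hev, hI] with y hy hyI
    have h1 := (((hy.1.hasDerivAt).comp y (gg.derAt hyI)).sub_const s).const_mul r⁻¹
    refine h1.congr_of_eventuallyEq ?_
    filter_upwards [isOpen_Ioo.mem_nhds hyI] with z hz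
    simp only [Function.comp]
    rw [hfg z hz]; field_simp; ring
  refine ⟨?_, ?_⟩
  · filter_upwards [hder, hev, hI] with y h1 h2 h3
    refine ⟨h1.differentiableAt, ?_⟩
    rw [h1.deriv]
    exact mul_ne_zero (inv_ne_zero hr) (mul_ne_zero h2.2 (gg.pos y (Ioo_subset_Icc_self h3)).ne')
  · have h1 : LH α (fun y => r⁻¹ * (deriv f (g y) * g' y)) x :=
      (LH.const r⁻¹ x).mul hα ((h.2.comp hα hgd hgc).mul hα (gg.lh hx))
    exact h1.congr (hder.mono fun y hy => hy.deriv.symm)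

lemma nice_start {α : ℝ} (hα : α ∈ Ioc (0:ℝ) 1) {n : ℕ} (hn : 2 ≤ n) {ρ : ℝ} (hρ0 : 0 < ρ)
    (hρ1 : ρ < 1) (hirr : Irrational (Real.log ρ / Real.log n))
    {f u p p' m m' : ℝ → ℝ} (gp : GoodMap α p p') (gm : GoodMap α m m')
    (hu : Continuous u) (huI : ∀ t, u t ∈ Ioo (0:ℝ) 1) (hfu : ∀ t, f (u t) = t)
    (huf : ∀ x ∈ Ioo (0:ℝ) 1, u (f x) = x) (hf : ContinuousOn f (Ioo 0 1))
    (hp : ∀ t, p (u t) = u (t / n)) (hm : ∀ t, m (u t) = u (ρ * t))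
    (hlt : p' (u 0) < 1) :
    ∃ t0 > 0, ∀ t, 0 < t → t < t0 → NiceAt α f (u t) := by
  have hn' : (2:ℝ) ≤ n := by exact_mod_cast hn
  have hn0 : (0:ℝ) < n := by linarith
  have hlogn : 0 < Real.log n := Real.log_pos (by linarith)
  obtain ⟨δ, hδ, h, q, hUI, hprop, hh0, hmono, C, hC, hqh⟩ :=
    linearize hα.1 gp (huI 0) (by rw [hp, zero_div]) hlt
  set l := p' (u 0) with hl
  have hl0 : 0 < l := gp.pos _ (Ioo_subset_Icc_self (huI 0))
  set U := Metric.ball (u 0) δ with hU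
  have h0U : u 0 ∈ U := Metric.mem_ball_self hδ
  have hnear : ∀ᶠ t in 𝓝 (0:ℝ), u t ∈ U := hu.continuousAt.eventually (Metric.ball_mem_nhds _ hδ)
  obtain ⟨t0, ht0, hb⟩ := Metric.eventually_nhds_iff_ball.1 hnear
  have hin : ∀ t, 0 < t → t < t0 → u t ∈ U := fun t h1 h2 => hb t (by
    rw [Metric.mem_ball, Real.dist_eq, sub_zero, abs_of_pos h1]; exact h2)
  have hinj : ∀ s t, u s = u t → s = t := fun s t h => by rw [← hfu s, h, hfu]
  have hne : ∀ t, 0 < t → t < t0 → h (u t) ≠ 0 := by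
    intro t h1 h2 h3
    rw [← hh0] at h3
    exact h1.ne' (hinj _ _ (hmono.injOn (hin t h1 h2) h0U h3))
  have hdivn : ∀ t, 0 < t → t < t0 → 0 < t / n ∧ t / n < t0 := by
    intro t h1 h2
    refine ⟨by positivity, lt_of_le_of_lt (div_le_self h1.le (by linarith)) h2⟩
  have hrec : ∀ t, 0 < t → t < t0 → h (u (t / n)) = l * h (u t) := by
    intro t h1 h2
    rw [← hp]
    exact (hprop _ (hin t h1 h2)).2.2.2
  have hreck : ∀ k : ℕ, ∀ t, 0 < t → t < t0 → (0 < t * (n:ℝ)⁻¹ ^ k ∧ t * (n:ℝ)⁻¹ ^ k < t0) ∧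
      h (u (t * (n:ℝ)⁻¹ ^ k)) = l ^ k * h (u t) := by
    intro k
    induction k with
    | zero => intro t h1 h2; simp [h1, h2]
    | succ k ih =>
      intro t h1 h2
      obtain ⟨⟨i1, i2⟩, i3⟩ := ih t h1 h2
      have e : t * (n:ℝ)⁻¹ ^ (k + 1) = t * (n:ℝ)⁻¹ ^ k / n := by
        rw [pow_succ, div_eq_mul_inv]; ring
      rw [e]
      refine ⟨hdivn _ i1 i2, ?_⟩
      rw [hrec _ i1 i2, i3]; ring
  have hm0 : m (u 0) = u 0 := by rw [hm, mul_zero]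
  set ν := m' (u 0) with hν
  have hρt : ∀ t, 0 < t → t < t0 → 0 < ρ * t ∧ ρ * t < t0 := fun t h1 h2 =>
    ⟨by positivity, by nlinarith⟩
  have hmrec : ∀ t, 0 < t → t < t0 → h (u (ρ * t)) = ν * h (u t) := by
    intro t h1 h2
    have hq0 : 0 < q (u 0) := (hprop _ h0U).2.1
    have d1 : HasDerivAt h (q (u 0)) (u 0) := (hprop _ h0U).1
    have d2 : HasDerivAt (fun y => h (m y)) (q (u 0) * ν) (u 0) := by
      have d3 : HasDerivAt h (q (u 0)) (m (u 0)) := by rw [hm0]; exact d1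
      exact d3.comp (u 0) (gm.derAt (huI 0))
    have hyk : Tendsto (fun k : ℕ => u (t * (n:ℝ)⁻¹ ^ k)) atTop (𝓝[≠] (u 0)) := by
      refine tendsto_nhdsWithin_iff.2 ⟨?_, Eventually.of_forall fun k hk => ?_⟩
      · refine (hu.tendsto 0).comp ?_
        have := (tendsto_pow_atTop_nhds_zero_of_lt_one (r := (n:ℝ)⁻¹) (by positivity)
          (inv_lt_one_of_one_lt₀ (by linarith))).const_mul t
        simpa using this
      · exact ((hreck k t h1 h2).1.1).ne' (hinj _ _ hk)
    have s1 := (hasDerivAt_iff_tendsto_slope.1 d1).comp hyk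
    have s2 := (hasDerivAt_iff_tendsto_slope.1 d2).comp hyk
    have s3 := s2.div s1 hq0.ne'
    have hconst : ∀ k : ℕ, h (u (ρ * t)) / h (u t) =
        (slope (fun y => h (m y)) (u 0) ∘ fun k : ℕ => u (t * (n:ℝ)⁻¹ ^ k)) k /
        (slope h (u 0) ∘ fun k : ℕ => u (t * (n:ℝ)⁻¹ ^ k)) k := by
      intro k
      have r1 := (hreck k t h1 h2)
      have r2 := (hreck k (ρ * t) (hρt t h1 h2).1 (hρt t h1 h2).2).2
      have hyne : u (t * (n:ℝ)⁻¹ ^ k) - u 0 ≠ 0 :=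
        sub_ne_zero.2 fun hk => (r1.1.1).ne' (hinj _ _ hk)
      simp only [Function.comp, slope_def_field, hm0, hh0, sub_zero]
      rw [hm, show ρ * (t * (n:ℝ)⁻¹ ^ k) = ρ * t * (n:ℝ)⁻¹ ^ k by ring, r2, r1.2]
      have := hne t h1 h2
      have : l ^ k ≠ 0 := pow_ne_zero _ hl0.ne'
      generalize u (t * (n:ℝ)⁻¹ ^ k) - u 0 = z at hyne ⊢
      field_simp
    have s4 : Tendsto (fun _ : ℕ => h (u (ρ * t)) / h (u t)) atTop (𝓝 (q (u 0) * ν / q (u 0))) :=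
      s3.congr fun k => (hconst k).symm
    have s5 := tendsto_nhds_unique s4 tendsto_const_nhds
    rw [mul_div_cancel_left₀ _ hq0.ne'] at s5
    rw [s5, div_mul_cancel₀ _ (hne t h1 h2)]
  have hν0 : ν ≠ 0 := (gm.pos _ (Ioo_subset_Icc_self (huI 0))).ne'
  set c := -Real.log l / Real.log n with hc
  have hc0 : 0 < c := div_pos (neg_pos.2 (Real.log_neg hl0 hlt)) hlogn
  have hcn : c * Real.log n = -Real.log l := div_mul_cancel₀ _ hlogn.ne'
  set E : ℝ → ℝ := fun s => Real.log (h (u (Real.exp s))) - c * s with hE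
  have hexp : ∀ s < Real.log t0, 0 < Real.exp s ∧ Real.exp s < t0 := fun s hs =>
    ⟨Real.exp_pos s, (Real.lt_log_iff_exp_lt ht0).1 hs⟩
  have hβ : 0 < -Real.log ρ := neg_pos.2 (Real.log_neg hρ0 hρ1)
  have hEc : ∀ s < Real.log t0, ∀ s' < Real.log t0, E s = E s' := by
    refine quasi_const (κ := Real.log ν + c * (-Real.log ρ)) hlogn hβ ?_ ?_ ?_ ?_
    · rw [neg_div]; exact hirr.neg
    · intro s hs
      obtain ⟨i1, i2⟩ := hexp s hs
      refine ContinuousAt.continuousWithinAt ?_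
      refine ContinuousAt.sub (ContinuousAt.log ?_ (hne _ i1 i2)) (by fun_prop)
      exact ContinuousAt.comp (f := fun s => u (Real.exp s)) (g := h)
        (hprop _ (hin _ i1 i2)).1.continuousAt (hu.comp Real.continuous_exp).continuousAt
    · intro s hs
      obtain ⟨i1, i2⟩ := hexp s hs
      simp only [hE]
      rw [Real.exp_sub, Real.exp_log hn0, hrec _ i1 i2, Real.log_mul hl0.ne' (hne _ i1 i2)]
      linarith
    · intro s hs
      obtain ⟨i1, i2⟩ := hexp s hs
      simp only [hE]
      rw [sub_neg_eq_add, add_comm s, Real.exp_add, Real.exp_log hρ0, hmrec _ i1 i2,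
        Real.log_mul hν0 (hne _ i1 i2)]
      ring
  set K := E (Real.log t0 - 1) with hK
  have hform : ∀ x ∈ Ioo (0:ℝ) 1, 0 < f x → f x < t0 →
      f x = Real.exp (c⁻¹ * (Real.log (h x) - K)) := by
    intro x hx h1 h2
    have h3 := hEc (Real.log (f x)) (Real.log_lt_log h1 h2) (Real.log t0 - 1) (by linarith)
    simp only [← hK] at h3
    simp only [hE] at h3
    rw [Real.exp_log h1, huf x hx] at h3
    have h4 : c⁻¹ * (Real.log (h x) - K) = Real.log (f x) := by
      rw [← h3]; field_simp; ring
    rw [h4, Real.exp_log h1]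
  refine ⟨t0, ht0, fun t ht1 ht2 => ?_⟩
  set x := u t with hx
  have hxI : x ∈ Ioo (0:ℝ) 1 := huI t
  have hfc : ContinuousAt f x := hf.continuousAt (isOpen_Ioo.mem_nhds hxI)
  have hfx : f x = t := hfu t
  have hev : ∀ᶠ y in 𝓝 x, y ∈ Ioo (0:ℝ) 1 ∧ 0 < f y ∧ f y < t0 :=
    (show ∀ᶠ y in 𝓝 x, y ∈ Ioo (0:ℝ) 1 from isOpen_Ioo.mem_nhds hxI).and
      ((hfc.eventually_const_lt (by rw [hfx]; exact ht1)).and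
        (hfc.eventually_lt_const (by rw [hfx]; exact ht2)))
  have hall : ∀ y, y ∈ Ioo (0:ℝ) 1 ∧ 0 < f y ∧ f y < t0 → y ∈ U ∧ h y ≠ 0 := by
    rintro y ⟨h1, h2, h3⟩
    have := hin (f y) h2 h3
    have h4 := hne (f y) h2 h3
    rw [huf y h1] at this h4
    exact ⟨this, h4⟩
  have hder : ∀ᶠ y in 𝓝 x, HasDerivAt f (f y * (c⁻¹ * (q y * (h y)⁻¹))) y := by
    filter_upwards [hev.eventually_nhds] with y hy
    have hy0 := hy.self_of_nhds
    obtain ⟨hyU, hy1⟩ := hall y hy0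
    have h1 := ((((hprop y hyU).1.log hy1).sub_const K).const_mul c⁻¹).exp
    rw [← hform y hy0.1 hy0.2.1 hy0.2.2, div_eq_mul_inv] at h1
    refine h1.congr_of_eventuallyEq ?_
    filter_upwards [hy] with z hz
    exact hform z hz.1 hz.2.1 hz.2.2
  have hxU := hall x hev.self_of_nhds
  have hUn : ∀ᶠ y in 𝓝 x, y ∈ U := Metric.isOpen_ball.mem_nhds hxU.1
  have hqL : LH α q x := by
    obtain ⟨ε, hε, hb⟩ := Metric.isOpen_iff.1 Metric.isOpen_ball x hxU.1
    exact ⟨ε, hε, C, hC, fun y z hy hz => hqh y (hb hy) z (hb hz)⟩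
  have hqc := hqL.continuousAt hα.1
  have hhc : ContinuousAt h x := (hprop x hxU.1).1.continuousAt
  have hhL : LH α (fun y => (h y)⁻¹) x := by
    refine LH.of_deriv hα.2 (F' := fun y => -q y / (h y)^2) ?_ ?_
    · filter_upwards [hev] with y hy
      exact (hprop y (hall y hy).1).1.inv (hall y hy).2
    · exact hqc.neg.div (hhc.pow 2) (pow_ne_zero _ hxU.2)
  have hfL : LH α f x := by
    refine LH.of_deriv hα.2 hder ?_
    exact hfc.mul (continuousAt_const.mul (hqc.mul (hhc.inv₀ hxU.2)))
  refine ⟨?_, ?_⟩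
  · filter_upwards [hder, hev] with y h1 h2
    refine ⟨h1.differentiableAt, ?_⟩
    rw [h1.deriv]
    have h3 := hall y h2
    exact mul_ne_zero h2.2.1.ne' (mul_ne_zero (inv_ne_zero hc0.ne')
      (mul_ne_zero (hprop y h3.1).2.1.ne' (inv_ne_zero h3.2)))
  · have h1 := hfL.mul hα.1 ((LH.const (α := α) c⁻¹ x).mul hα.1 (hqL.mul hα.1 hhL))
    exact h1.congr (hder.mono fun y hy => hy.deriv.symm)

lemma asMap_good {α : ℝ} {g : ↥unitI ≃ₜ ↥unitI} (h : IsOPC1HolderDiffeo α g) :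
    ∃ g', GoodMap α (asMap g) g' := by
  obtain ⟨hmono, g', hder, hcont, hne, hhold⟩ := h
  have hval : ∀ x (hx : x ∈ unitI), asMap g x = (g ⟨x, hx⟩ : ℝ) := fun x hx => by
    simp only [asMap, dif_pos hx]
  have hm : ∀ x ∈ unitI, asMap g x ∈ unitI := fun x hx => by
    rw [hval x hx]; exact (g ⟨x, hx⟩).2
  have h0 : (0:ℝ) ∈ unitI := ⟨le_rfl, zero_le_one⟩
  have h1 : (1:ℝ) ∈ unitI := ⟨zero_le_one, le_rfl⟩
  have hsurj : ∀ y ∈ unitI, ∃ x ∈ unitI, asMap g x = y := by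
    intro y hy
    refine ⟨g.symm ⟨y, hy⟩, (g.symm ⟨y, hy⟩).2, ?_⟩
    rw [hval _ (g.symm ⟨y, hy⟩).2]
    simp
  refine ⟨g', hder, hcont, ?_, hhold, ?_, ?_, ?_⟩
  · intro x hx
    refine lt_of_le_of_ne ?_ (hne x hx).symm
    have hu : UniqueDiffWithinAt ℝ unitI x := uniqueDiffOn_Icc one_pos x hx
    rw [← (hder x hx).derivWithin hu]
    exact hmono.monotoneOn.derivWithin_nonneg
  · intro x hx
    have hx' : x ∈ unitI := Ioo_subset_Icc_self hx
    exact ⟨lt_of_le_of_lt (hm 0 h0).1 (hmono h0 hx' hx.1), lt_of_lt_of_le (hmono hx' h1 hx.2) (hm 1 h1).2⟩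
  · obtain ⟨x, hx, hx0⟩ := hsurj 0 h0
    have := hmono.monotoneOn h0 hx hx.1
    exact le_antisymm (this.trans hx0.le) (hm 0 h0).1
  · obtain ⟨x, hx, hx1⟩ := hsurj 1 h1
    have := hmono.monotoneOn hx h1 hx.2
    exact le_antisymm (hm 1 h1).2 (hx1.symm.le.trans this)

/-- Regularity of conjugacies: a topological conjugacy between a `C^{1+α}` action of the
affine group `Γ_A` on `[0,1]` and the standard affine action on `ℝ` is itself of class
`C^{1+α}` on `(0,1)`. -/
theorem conjugacy_is_C1Holder
    (n : ℕ) (hn : 2 ≤ n) (α : ℝ) (hα : α ∈ Set.Ioc (0 : ℝ) 1)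
    (μ : ℝ) (hμ : 0 < μ) (hirr : Irrational (Real.log μ / Real.log n))
    (φ : ↥(GammaA n hn μ hμ.ne') →* (↥unitI ≃ₜ ↥unitI))
    (hφreg : ∀ γ : ↥(GammaA n hn μ hμ.ne'), IsOPC1HolderDiffeo α (φ γ))
    (f finv : ℝ → ℝ)
    (hfcont : ContinuousOn f (Set.Ioo 0 1))
    (hfbij : Set.BijOn f (Set.Ioo 0 1) Set.univ)
    (hfinvcont : Continuous finv)
    (hfinvmaps : Set.MapsTo finv Set.univ (Set.Ioo 0 1))
    (hfinv : Set.InvOn finv f (Set.Ioo 0 1) Set.univ)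
    (hconj : ∀ (γ : ℝ ≃ₜ ℝ) (hγ : γ ∈ GammaA n hn μ hμ.ne'),
      ∀ x ∈ Set.Ioo (0 : ℝ) 1, f (asMap (φ ⟨γ, hγ⟩) x) = γ (f x)) :
    ∃ f' : ℝ → ℝ,
      (∀ x ∈ Set.Ioo (0 : ℝ) 1, HasDerivWithinAt f (f' x) (Set.Ioo 0 1) x) ∧
      (∀ x ∈ Set.Ioo (0 : ℝ) 1, f' x ≠ 0) ∧
      ContinuousOn f' (Set.Ioo 0 1) ∧
      ∀ x ∈ Set.Ioo (0 : ℝ) 1, ∃ ε > (0 : ℝ), ∃ C : ℝ,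
        ∀ y ∈ Set.Ioo (0 : ℝ) 1, ∀ z ∈ Set.Ioo (0 : ℝ) 1,
          |y - x| < ε → |z - x| < ε → |f' y - f' z| ≤ C * |y - z| ^ α := by

  have hn' : (2:ℝ) ≤ n := by exact_mod_cast hn
  have hn0 : (0:ℝ) < n := by linarith
  have hfu : ∀ t, f (finv t) = t := fun t => hfinv.2 (mem_univ t)
  have huf : ∀ x ∈ Ioo (0:ℝ) 1, finv (f x) = x := fun x hx => hfinv.1 hx
  have huI : ∀ t, finv t ∈ Ioo (0:ℝ) 1 := fun t => hfinvmaps (mem_univ t)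
  have hinj : Function.Injective finv := fun s t h => by rw [← hfu s, h, hfu]
  -- the maps attached to group elements
  have data : ∀ γ : ℝ ≃ₜ ℝ, γ ∈ GammaA n hn μ hμ.ne' → ∃ g g' : ℝ → ℝ, GoodMap α g g' ∧
      (∀ x ∈ Ioo (0:ℝ) 1, f (g x) = γ (f x)) ∧ ∀ t, g (finv t) = finv (γ t) := by
    intro γ hγ
    obtain ⟨g', hg⟩ := asMap_good (hφreg ⟨γ, hγ⟩)
    refine ⟨_, g', hg, hconj γ hγ, fun t => ?_⟩
    have h1 := hconj γ hγ (finv t) (huI t)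
    rw [hfu] at h1
    rw [← h1, huf _ (hg.maps (huI t))]
  have ma : dilation n hn ∈ GammaA n hn μ hμ.ne' := Subgroup.subset_closure (by simp)
  have mb : translation 1 ∈ GammaA n hn μ hμ.ne' := Subgroup.subset_closure (by simp)
  have mm : homothety μ hμ.ne' ∈ GammaA n hn μ hμ.ne' := Subgroup.subset_closure (by simp)
  have va : ∀ t, dilation n hn t = n * t := fun t => rfl
  have vb : ∀ t, translation 1 t = t + 1 := fun t => rfl
  have vm : ∀ t, homothety μ hμ.ne' t = μ * t := fun t => rfl
  have vai : ∀ t, (dilation n hn)⁻¹ t = t / n := fun t => by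
    have : (dilation n hn) ((dilation n hn)⁻¹ t) = t := (dilation n hn).apply_symm_apply t
    rw [va] at this
    rw [eq_div_iff hn0.ne']; linarith
  have vmi : ∀ t, (homothety μ hμ.ne')⁻¹ t = μ⁻¹ * t := fun t => by
    have : (homothety μ hμ.ne') ((homothety μ hμ.ne')⁻¹ t) = t :=
      (homothety μ hμ.ne').apply_symm_apply t
    rw [vm] at this
    rw [eq_inv_mul_iff_mul_eq₀ hμ.ne']; exact this
  have vbN : ∀ (N : ℕ) t, ((translation 1) ^ N : ℝ ≃ₜ ℝ) t = t + N := by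
    intro N
    induction N with
    | zero => intro t; simp
    | succ N ih =>
      intro t
      rw [pow_succ']
      have : ((translation 1) * (translation 1) ^ N : ℝ ≃ₜ ℝ) t
        = translation 1 (((translation 1) ^ N : ℝ ≃ₜ ℝ) t) := rfl
      rw [this, vb, ih]; push_cast; ring
  obtain ⟨A, A', gA, hA1, hA2⟩ := data _ ma
  obtain ⟨B, B', gB, hB1, hB2⟩ := data _ mb
  obtain ⟨p, p', gp, hp1, hp2⟩ := data _ (inv_mem ma)
  simp only [va] at hA1 hA2
  simp only [vb] at hB1 hB2
  simp only [vai] at hp1 hp2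
  have hsurj : ∀ y ∈ Ioo (0:ℝ) 1, ∃ t, finv t = y := fun y hy => ⟨f y, huf y hy⟩
  have hlt : p' (finv 0) < 1 := by
    rcases hfinvcont.strictMono_of_inj hinj with hmono | hanti
    · have hanti : StrictAnti (fun t => 1 - finv t) := fun s t hst => by
        have := hmono hst
        simp only
        linarith
      have hlim : Tendsto (fun t => 1 - finv t) atTop (𝓝 0) := by
        rw [tendsto_order]
        refine ⟨fun a ha => Eventually.of_forall fun t => by linarith [(huI t).2], fun a ha => ?_⟩
        obtain ⟨T, hT⟩ := hsurj (1 - min a (1/2)) ⟨by linarith [min_le_right a (1/2)],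
          by linarith [lt_min ha (by norm_num : (0:ℝ) < 1/2)]⟩
        filter_upwards [eventually_gt_atTop T] with t ht
        have := hmono ht
        linarith [min_le_left a (1/2)]
      have := hyperbolic hn (e := fun t => 1 - finv t) hanti
        (fun t => ⟨by linarith [(huI t).2], by linarith [(huI t).1]⟩)
        (continuous_const.sub hfinvcont) hlim gA.reflect gB.reflect gp.reflect
        (fun t => by simp [hA2]) (fun t => by simp [hB2]) (fun t => by simp [hp2])
        (fun N => by
          obtain ⟨G, G', gG, _, hG2⟩ := data _ (pow_mem mb N)
          simp only [vbN] at hG2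
          refine ⟨_, _, gG.reflect.derAt ⟨by linarith [(huI 0).2], by linarith [(huI 0).1]⟩, ?_, ?_⟩
          · simp only [sub_sub_cancel]
            exact (gG.pos _ (Ioo_subset_Icc_self (huI 0))).ne'
          · intro t; simp [hG2])
      simpa using this
    · have hlim : Tendsto finv atTop (𝓝 0) := by
        rw [tendsto_order]
        refine ⟨fun a ha => Eventually.of_forall fun t => by linarith [(huI t).1], fun a ha => ?_⟩
        obtain ⟨T, hT⟩ := hsurj (min a (1/2)) ⟨lt_min ha (by norm_num : (0:ℝ) < 1/2),
          by linarith [min_le_right a (1/2)]⟩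
        filter_upwards [eventually_gt_atTop T] with t ht
        have := hanti ht
        linarith [min_le_left a (1/2)]
      refine hyperbolic hn hanti huI hfinvcont hlim gA gB gp hA2 hB2 hp2 (fun N => ?_)
      obtain ⟨G, G', gG, _, hG2⟩ := data _ (pow_mem mb N)
      simp only [vbN] at hG2
      exact ⟨G, _, gG.derAt (huI 0), (gG.pos _ (Ioo_subset_Icc_self (huI 0))).ne', hG2⟩
  have hstart : ∃ t0 > 0, ∀ t, 0 < t → t < t0 → NiceAt α f (finv t) := by
    have hμ1 : μ ≠ 1 := by
      rintro rfl
      simp at hirr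
    rcases lt_or_gt_of_ne hμ1 with h1 | h1
    · obtain ⟨m, m', gm, _, hm2⟩ := data _ mm
      simp only [vm] at hm2
      exact nice_start hα hn hμ h1 hirr gp gm hfinvcont huI hfu huf hfcont hp2 hm2 hlt
    · obtain ⟨m, m', gm, _, hm2⟩ := data _ (inv_mem mm)
      simp only [vmi] at hm2
      refine nice_start hα hn (inv_pos.2 hμ) (inv_lt_one_of_one_lt₀ h1) ?_ gp gm hfinvcont huI hfu huf
        hfcont hp2 hm2 hlt
      rw [Real.log_inv, neg_div]
      exact hirr.neg
  obtain ⟨t0, ht0, hnice⟩ := hstart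
  have hpos : ∀ k : ℕ, ∀ t, 0 < t → t < t0 * n ^ k → NiceAt α f (finv t) := by
    intro k
    induction k with
    | zero => intro t h1 h2; exact hnice t h1 (by simpa using h2)
    | succ k ih =>
      intro t h1 h2
      have h3 := ih (t / n) (by positivity) (by rw [div_lt_iff₀ hn0]; rw [pow_succ] at h2; linarith)
      rw [← hp2] at h3
      exact NiceAt.transport hα.1 gp (huI t) (inv_ne_zero hn0.ne') (s := 0)
        (fun y hy => by rw [hp1 y hy]; field_simp; ring) h3
  have hpos' : ∀ t, 0 < t → NiceAt α f (finv t) := by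
    intro t ht
    obtain ⟨k, hk⟩ := pow_unbounded_of_one_lt (t / t0) (show (1:ℝ) < n by linarith)
    rw [div_lt_iff₀ ht0] at hk
    exact hpos k t ht (by linarith)
  have hall : ∀ x ∈ Ioo (0:ℝ) 1, NiceAt α f x := by
    intro x hx
    obtain ⟨N, hN⟩ := exists_nat_gt (-f x)
    obtain ⟨G, G', gG, hG1, hG2⟩ := data _ (pow_mem mb N)
    simp only [vbN] at hG1 hG2
    have h3 := hpos' (f x + N) (by linarith)
    rw [← hG2, huf x hx] at h3
    exact NiceAt.transport hα.1 gG hx one_ne_zero (s := N)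
      (fun y hy => by rw [hG1 y hy, one_mul]) h3
  refine ⟨deriv f, fun x hx => ?_, fun x hx => ?_, fun x hx => ?_, fun x hx => ?_⟩
  · exact (hall x hx).1.self_of_nhds.1.hasDerivAt.hasDerivWithinAt
  · exact (hall x hx).1.self_of_nhds.2
  · exact ((hall x hx).2.continuousAt hα.1).continuousWithinAt
  · obtain ⟨ε, hε, C, _, h⟩ := (hall x hx).2
    exact ⟨ε, hε, C, fun y _ z _ h1 h2 => h y z h1 h2⟩
end
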